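/- arXiv:2211.05210 — 8 statements merged into one kernel-verified Lean document; each statement's English description precedes it below -/
import Mathlib

section
/- Let X be a log-concave real random variable with E X = 0. Then for all real numbers p, q with p ≥ q ≥ 1, one has ‖X‖_p ≤ (p/q)·‖X‖_q. -/
open MeasureTheory

/-- A real random variable (given by its distribution `μ`) is log-concave if it is
a.s. constant or has a density `f` w.r.t. Lebesgue measure satisfying
`f x ^ l * f y ^ (1 - l) ≤ f (l * x + (1 - l) * y)` for all `x y` and `l ∈ [0, 1]`. -/
def IsLogConcave (μ : Measure ℝ) : Prop :=
  IsProbabilityMeasure μ ∧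
  ((∃ c : ℝ, μ = Measure.dirac c) ∨
   ∃ f : ℝ → ℝ, (∀ x, 0 ≤ f x) ∧
     μ = volume.withDensity (fun x => ENNReal.ofReal (f x)) ∧
     ∀ x y l : ℝ, 0 ≤ l → l ≤ 1 → f x ^ l * f y ^ (1 - l) ≤ f (l * x + (1 - l) * y))

/-- The `s`-th moment norm `‖X‖ₛ = (E|X|^s)^(1/s)` of a random variable with
distribution `μ`. -/
noncomputable def momNorm (μ : Measure ℝ) (s : ℝ) : ℝ :=
  (∫ x, |x| ^ s ∂μ) ^ (1 / s)

section
open Real MeasureTheory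

lemma aux_conc1 : ConcaveOn ℝ (Set.Ioi (0:ℝ)) (fun t : ℝ => t * (log (t+1) - log t)) := by
  have h1 : ∀ t : ℝ, 0 < t → HasDerivAt (fun t : ℝ => log (t+1) - log t) (1/(t+1) - 1/t) t := by
    intro t ht
    have a := ((hasDerivAt_id t).add_const 1).log (by simp; positivity)
    have b := (hasDerivAt_id t).log (by simp; positivity)
    exact a.sub b
  have h2 : ∀ t : ℝ, 0 < t →
      HasDerivAt (fun t : ℝ => 1/(t+1) - 1/t) (-1/(t+1)^2 - (-1/t^2)) t := by
    intro t ht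
    have a := ((hasDerivAt_id t).add_const 1).inv (by simp; positivity)
    have b := (hasDerivAt_id t).inv (by simp; positivity)
    simp only [one_div]
    exact a.sub b
  apply concaveOn_of_hasDerivWithinAt2_nonpos
    (f' := fun t => 1 * (log (t+1) - log t) + t * (1/(t+1) - 1/t))
    (f'' := fun t => 1 * (1/(t+1) - 1/t) + (1 * (1/(t+1) - 1/t)
      + t * (-1/(t+1)^2 - (-1/t^2)))) (convex_Ioi 0)
  · intro t ht
    exact ((hasDerivAt_id t).mul (h1 t ht)).continuousAt.continuousWithinAt
  · intro t ht
    simp only [interior_Ioi] at ht ⊢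
    exact ((hasDerivAt_id t).mul (h1 t ht)).hasDerivWithinAt (s := Set.Ioi 0)
  · intro t ht
    simp only [interior_Ioi] at ht ⊢
    exact (((h1 t ht).const_mul 1).add
      ((hasDerivAt_id t).mul (h2 t ht))).hasDerivWithinAt (s := Set.Ioi 0)
  · intro t ht
    simp only [interior_Ioi] at ht ⊢
    have ht' : (0:ℝ) < t := ht
    have : 1 * (1/(t+1) - 1/t) + (1 * (1/(t+1) - 1/t) + t * (-1/(t+1)^2 - (-1/t^2)))
        = - (1 / (t*(t+1)^2)) := by
      field_simp; ring
    rw [this]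
    have : 0 < (1 / (t*(t+1)^2)) := by positivity
    linarith

lemma aux_conc_shift (n : ℕ) : ConcaveOn ℝ (Set.Ioi (0:ℝ)) (fun s : ℝ => (s+n) * (log (s+n+1) - log (s+n))) := by
  have h := aux_conc1
  refine ⟨convex_Ioi 0, ?_⟩
  intro x hx y hy a b ha hb hab
  have hx' : (0:ℝ) < x := hx
  have hy' : (0:ℝ) < y := hy
  have := h.2 (x := x + n) (y := y+n) (by simp; positivity) (by simp; positivity) ha hb hab
  simp only [smul_eq_mul] at this ⊢
  have e : a * (x+n) + b * (y+n) = a * x + b * y + n := by linear_combination (n:ℝ) * hab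
  rw [e] at this
  exact this

lemma aux_conc_sum (n : ℕ) : ConcaveOn ℝ (Set.Ioi (0:ℝ)) (fun s : ℝ =>
    - ∑ m ∈ Finset.range (n+1), log (s + m) + log s - s * log s + (s+n) * log (s+n)) := by
  induction n with
  | zero =>
    simp
    exact concaveOn_const 0 (convex_Ioi 0)
  | succ n ih =>
    refine (ih.add (aux_conc_shift n)).congr ?_
    intro s hs
    simp only [Pi.add_apply]
    rw [Finset.sum_range_succ _ (n+1)]
    push_cast
    rw [← add_assoc]
    ring

lemma aux_conc_neg (n : ℕ) : ConcaveOn ℝ (Set.Ioi (0:ℝ)) (fun s : ℝ => - ((s+n) * log (s+n))) := by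
  have h := Real.convexOn_mul_log
  refine ⟨convex_Ioi 0, ?_⟩
  intro x hx y hy a b ha hb hab
  have hx' : (0:ℝ) < x := hx
  have hy' : (0:ℝ) < y := hy
  have := h.2 (x := x + n) (y := y+n) (by simp; positivity) (by simp; positivity) ha hb hab
  simp only [smul_eq_mul] at this ⊢
  have e : a * (x+n) + b * (y+n) = a * x + b * y + n := by linear_combination (n:ℝ) * hab
  rw [e] at this
  linarith

lemma aux_conc_lin (c d : ℝ) : ConcaveOn ℝ (Set.Ioi (0:ℝ)) (fun s : ℝ => s * c + d) := by
  refine ⟨convex_Ioi 0, ?_⟩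
  intro x hx y hy a b ha hb hab
  simp only [smul_eq_mul]
  apply le_of_eq
  linear_combination d * hab

/-- `v s = log Γ(s+1) - s log s`. -/
noncomputable def gv (s : ℝ) : ℝ := log (Gamma (s+1)) - s * log s

lemma gv_concave : ConcaveOn ℝ (Set.Ioi (0:ℝ)) gv := by
  have key : ∀ n : ℕ, ConcaveOn ℝ (Set.Ioi (0:ℝ)) (fun s => Real.BohrMollerup.logGammaSeq s n + log s - s * log s) := by
    intro n
    refine (((aux_conc_sum n).add (aux_conc_neg n)).add (aux_conc_lin (log n) (log (n.factorial)))).congr ?_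
    intro s hs
    simp only [Pi.add_apply, Real.BohrMollerup.logGammaSeq]
    ring
  have lim : ∀ s : ℝ, 0 < s → Filter.Tendsto (fun n => Real.BohrMollerup.logGammaSeq s n + log s - s * log s) Filter.atTop (nhds (gv s)) := by
    intro s hs
    have := ((Real.BohrMollerup.tendsto_log_gamma hs).add_const (log s)).sub_const (s * log s)
    convert this using 2
    unfold gv
    rw [Real.Gamma_add_one hs.ne', Real.log_mul hs.ne' (Gamma_pos_of_pos hs).ne']
    ring
  refine ⟨convex_Ioi 0, ?_⟩
  intro x hx y hy a b ha hb hab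
  have hx' : (0:ℝ) < x := hx
  have hy' : (0:ℝ) < y := hy
  have hz := (convex_Ioi (0:ℝ)) hx hy ha hb hab
  simp only [smul_eq_mul] at hz ⊢
  refine le_of_tendsto_of_tendsto' (((lim x hx).const_mul a).add ((lim y hy).const_mul b)) (lim _ hz) ?_
  intro n
  exact (key n).2 hx hy ha hb hab

lemma gv_step (k q' q0 q : ℝ) (h1 : 0 < q') (h2 : q' < q0) (h3 : q0 < q)
    (h : (gv q0 + k)/q0 ≤ (gv q' + k)/q') : (gv q + k)/q ≤ (gv q0 + k)/q0 := by
  have hd : 0 < q - q' := by linarith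
  have hc := gv_concave.2 (show q' ∈ Set.Ioi (0:ℝ) from h1)
    (show q ∈ Set.Ioi (0:ℝ) by simp; linarith)
    (show 0 ≤ (q - q0)/(q-q') by apply div_nonneg <;> linarith)
    (show 0 ≤ (q0 - q')/(q-q') by apply div_nonneg <;> linarith) (by field_simp; ring)
  simp only [smul_eq_mul] at hc
  have e : (q - q0)/(q-q') * q' + (q0 - q')/(q-q') * q = q0 := by field_simp; ring
  rw [e] at hc
  have hc2 : (q-q0) * gv q' + (q0 - q') * gv q ≤ (q - q') * gv q0 := by
    have := mul_le_mul_of_nonneg_left hc hd.le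
    have e2 : (q - q') * ((q - q0) / (q - q') * gv q' + (q0 - q') / (q - q') * gv q) = (q-q0) * gv q' + (q0 - q') * gv q := by field_simp
    linarith
  rw [div_le_div_iff₀ (by linarith) (by linarith)] at h ⊢
  have hq0 : 0 < q0 := by linarith
  have hmul := mul_le_mul_of_nonneg_left h (by linarith : 0 ≤ q - q0)
  have : (q0-q') * q0 * (gv q + k) ≤ (q0-q') * (gv q0 + k) * q := by nlinarith
  have h5 : 0 < q0 - q' := by linarith
  have h6 : (q0-q') * ((gv q + k) * q0) ≤ (q0-q') * ((gv q0 + k) * q) := by nlinarith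
  exact le_of_mul_le_mul_left h6 h5

lemma gv_mono (k q' q0 q p : ℝ) (h1 : 0 < q') (h2 : q' < q0) (h3 : q0 ≤ q) (h4 : q ≤ p)
    (h : (gv q0 + k)/q0 ≤ (gv q' + k)/q') : (gv p + k)/p ≤ (gv q + k)/q := by
  rcases h4.eq_or_lt with rfl | h4
  · exact le_rfl
  rcases h3.eq_or_lt with rfl | h3
  · exact gv_step k q' q0 p h1 h2 h4 h
  · exact gv_step k q0 q p (by linarith) h3 h4 (gv_step k q' q0 q h1 h2 h3 h)

lemma gv_nat (n : ℕ) : gv n = log (n.factorial) - n * log n := by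
  unfold gv
  rw [Real.Gamma_nat_eq_factorial]

lemma gv_half : gv (1/2) = 1/2 * log (π/2) := by
  unfold gv
  rw [Real.Gamma_add_one (by norm_num), Real.Gamma_one_half_eq, Real.log_mul (by norm_num) (by positivity),
    Real.log_sqrt (by positivity), Real.log_div (by positivity) (by norm_num), Real.log_div (by positivity) (by norm_num), Real.log_one]
  ring

lemma gv_three_half : gv (3/2) = log (3/4) + 1/2 * log π - 3/2 * log (3/2) := by
  unfold gv
  have : Gamma (3/2 + 1) = 3/4 * √π := by
    rw [Real.Gamma_add_one (by norm_num), show (3/2:ℝ) = 1/2 + 1 by norm_num, Real.Gamma_add_one (by norm_num), Real.Gamma_one_half_eq]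
    ring
  rw [this, Real.log_mul (by norm_num) (by positivity),
    Real.log_sqrt (by positivity)]
  ring

lemma gv_five_half : gv (5/2) = log (15/8) + 1/2 * log π - 5/2 * log (5/2) := by
  unfold gv
  have : Gamma (5/2 + 1) = 15/8 * √π := by
    rw [Real.Gamma_add_one (by norm_num), show (5/2:ℝ) = 1/2 + 1 + 1 by norm_num, Real.Gamma_add_one (by norm_num), Real.Gamma_add_one (by norm_num), Real.Gamma_one_half_eq]
    ring
  rw [this, Real.log_mul (by norm_num) (by positivity),
    Real.log_sqrt (by positivity)]
  ring

lemma gv_cond1 : (gv 1 + (-log (π/2)))/1 ≤ (gv (1/2) + (-log (π/2)))/(1/2) := by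
  have h1 := gv_nat 1
  simp at h1
  rw [h1, gv_half]
  apply le_of_eq; ring

lemma gv_cond2 : (gv 2 + (3 * gv 2 - 4 * gv (3/2)))/2 ≤ (gv (3/2) + (3 * gv 2 - 4 * gv (3/2)))/(3/2) := by
  apply le_of_eq; ring

lemma gv_cond3 : (gv 3 + (5 * gv 3 - 6 * gv (5/2)))/3 ≤ (gv (5/2) + (5 * gv 3 - 6 * gv (5/2)))/(5/2) := by
  apply le_of_eq; ring

lemma gv_cond4 : (gv 4 + (-1))/4 ≤ (gv 3 + (-1))/3 := by
  have h3 := gv_nat 3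
  have h4 := gv_nat 4
  simp [Nat.factorial] at h3 h4
  rw [h3, h4]
  have l6 : log 6 = log 2 + log 3 := by rw [← Real.log_mul (by norm_num) (by norm_num)]; norm_num
  have l24 : log 24 = 3 * log 2 + log 3 := by
    rw [show (24:ℝ) = 2^3*3 by norm_num, Real.log_mul (by norm_num) (by norm_num), Real.log_pow]; norm_num
  have l4 : log 4 = 2 * log 2 := by rw [show (4:ℝ) = 2^2 by norm_num, Real.log_pow]; norm_num
  have key : (1:ℝ) ≤ log (2^19/3^11) := by
    rw [Real.le_log_iff_exp_le (by norm_num)]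
    have := Real.exp_one_lt_d9
    refine this.le.trans ?_
    norm_num
  rw [Real.log_div (by norm_num) (by norm_num), Real.log_pow, Real.log_pow] at key
  push_cast at key
  rw [l6, l24, l4]
  linarith

/-- the KL bound -/
noncomputable def KLb (W : ℝ) : ℝ := W + (1-W) * (- log (1 - exp (-1))) - binEntropy W

lemma exp_facts : exp (-1) < 0.3678795 ∧ 0.36787943 < exp (-1) := by
  have h1 := Real.exp_one_lt_d9
  have h2 := Real.exp_one_gt_d9
  have h3 : exp (-1) = (exp 1)⁻¹ := by rw [Real.exp_neg]
  rw [h3]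
  constructor
  · rw [inv_lt_comm₀ (by positivity) (by norm_num)]
    refine lt_trans ?_ h2; norm_num
  · rw [lt_inv_comm₀ (by norm_num) (by positivity)]
    refine lt_trans h1 ?_; norm_num

lemma KL_bound (a w W : ℝ) (ha : exp (-1) ≤ a) (ha' : exp (-1) ≤ 1 - a) (hW : W < 1)
    (hw : 1 - W ≤ w) (hw' : w ≤ W) :
    w * log (w/a) + (1-w) * log ((1-w)/(1-a)) ≤ KLb W := by
  obtain ⟨he1, he2⟩ := exp_facts
  have hβ : -log (1 - exp (-1)) ≤ 1 := by
    have : log (exp (-1)) ≤ log (1 - exp (-1)) := Real.log_le_log (exp_pos _) (by linarith)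
    rw [Real.log_exp] at this
    linarith
  set β := -log (1 - exp (-1)) with hβd
  have hβ0 : 0 ≤ 1 - β := by linarith
  have hwpos : 0 < w := by linarith
  have hwpos' : 0 < 1 - w := by linarith
  have hapos : 0 < a := lt_of_lt_of_le (exp_pos _) ha
  have hapos' : 0 < 1-a := lt_of_lt_of_le (exp_pos _) ha'
  -- step 1
  have conv1 : ConvexOn ℝ (Set.Ioo 0 1) (fun a : ℝ => w * (- log a) + (1-w) * (- log (1-a))) := by
    refine ⟨convex_Ioo 0 1, ?_⟩
    intro x hx y hy s t hs ht hst
    have c := strictConcaveOn_log_Ioi.concaveOn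
    have e1 := c.2 (show x ∈ Set.Ioi (0:ℝ) from hx.1) (show y ∈ Set.Ioi (0:ℝ) from hy.1) hs ht hst
    have e2 := c.2 (show 1-x ∈ Set.Ioi (0:ℝ) by simp; exact hx.2) (show 1-y ∈ Set.Ioi (0:ℝ) by simp; exact hy.2) hs ht hst
    simp only [smul_eq_mul] at e1 e2 ⊢
    have : s * (1-x) + t*(1-y) = 1 - (s*x+t*y) := by linear_combination hst
    rw [this] at e2
    nlinarith
  have s1 := conv1.le_max_of_mem_Icc (x := exp (-1)) (y := 1 - exp (-1)) (z := a)
    ⟨exp_pos _, by linarith⟩ ⟨by linarith, by linarith [exp_pos (-1)]⟩ ⟨ha, by linarith⟩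
  simp only [Real.log_exp, sub_sub_cancel, neg_neg, ← hβd] at s1
  have hbin : binEntropy w = - (w * log w) - (1-w) * log (1-w) := by
    simp [binEntropy]; ring
  have lhs : w * log (w/a) + (1-w) * log ((1-w)/(1-a)) = w * (- log a) + (1-w) * (- log (1-a)) - binEntropy w := by
    rw [Real.log_div hwpos.ne' hapos.ne', Real.log_div hwpos'.ne' hapos'.ne', hbin]; ring
  rw [lhs]
  -- step 2
  have main : ∀ u : ℝ, 1/2 ≤ u → u ≤ W → u + (1-u) * β - binEntropy u ≤ KLb W := by
    intro u hu hu'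
    have conv2 : ConvexOn ℝ (Set.Icc 0 1) (fun u : ℝ => u + (1-u) * β - binEntropy u) := by
      refine ⟨convex_Icc 0 1, ?_⟩
      intro x hx y hy s t hs ht hst
      have e1 := Real.strictConcave_binEntropy.concaveOn.2 hx hy hs ht hst
      simp only [smul_eq_mul] at e1 ⊢
      nlinarith
    have s2 := conv2.le_max_of_mem_Icc (x := 1/2) (y := W) (z := u)
      ⟨by norm_num, by norm_num⟩ ⟨by linarith, by linarith⟩ ⟨hu, hu'⟩
    refine s2.trans (max_le ?_ le_rfl)
    unfold KLb
    rw [← hβd]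
    have hb1 : binEntropy (1/2) = log 2 := by rw [one_div]; exact Real.binEntropy_two_inv
    have hb2 : binEntropy W ≤ log 2 := Real.binEntropy_le_log_two
    nlinarith
  rcases le_total w (1/2) with h | h
  · have := main (1-w) (by linarith) (by linarith)
    rw [Real.binEntropy_one_sub] at this
    have : max (w * 1 + (1 - w) * β) (w * β + (1 - w) * 1) ≤ (1-w) + (1-(1-w)) * β := by
      apply max_le <;> nlinarith
    linarith
  · have := main w h hw'
    have : max (w * 1 + (1 - w) * β) (w * β + (1 - w) * 1) ≤ w + (1-w) * β := by
      apply max_le <;> nlinarith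
    linarith

lemma KLb_eq (n : ℝ) (hn : 0 < n) : (n+1) * KLb (n/(n+1))
    = n - log (1 - exp (-1)) + n * log n - (n+1) * log (n+1) := by
  have h1 : 1 - n/(n+1) = 1/(n+1) := by field_simp; ring
  unfold KLb
  rw [binEntropy, h1, Real.log_inv, Real.log_inv, Real.log_div (by positivity) (by positivity),
    Real.log_div (by positivity) (by positivity), Real.log_one]
  field_simp
  ring

lemma KL_num (n : ℕ) (hn : 0 < n) (c E : ℝ) (hE : 0 < E) (hc : log E ≤ c)
    (h : (2.7182818286:ℝ)^n * n^n ≤ ((n:ℝ)+1)^(n+1) * 0.632 * E^(n+1)) :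
    KLb ((n:ℝ)/(n+1)) ≤ c := by
  have hn' : (0:ℝ) < n := by exact_mod_cast hn
  have h1 := KLb_eq n hn'
  obtain ⟨he1, he2⟩ := exp_facts
  have hl : log (0.632) ≤ log (1 - exp (-1)) := Real.log_le_log (by norm_num) (by linarith)
  have h2 : log ((exp 1)^n * n^n) ≤ log (((n:ℝ)+1)^(n+1) * 0.632 * E^(n+1)) := by
    apply Real.log_le_log (by positivity)
    refine le_trans ?_ h
    gcongr
    exact Real.exp_one_lt_d9.le
  rw [Real.log_mul (by positivity) (by positivity), Real.log_mul (by positivity) (by positivity),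
    Real.log_mul (by positivity) (by positivity), Real.log_pow, Real.log_pow, Real.log_pow,
    Real.log_pow, Real.log_exp] at h2
  push_cast at h2
  have h3 : ((n:ℝ)+1) * KLb ((n:ℝ)/(n+1)) ≤ ((n:ℝ)+1) * c := by
    rw [h1]
    have : ((n:ℝ)+1) * log E ≤ ((n:ℝ)+1) * c := by gcongr
    linarith
  exact le_of_mul_le_mul_left h3 (by positivity)

lemma KL_num1 : KLb (4/5) ≤ -(-log (π/2)) := by
  have := KL_num 4 (by norm_num) (log (π/2)) (3.1415/2) (by norm_num)
    (Real.log_le_log (by norm_num) (by linarith [Real.pi_gt_d4])) (by norm_num)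
  norm_num at this ⊢
  exact this

lemma KL_num2 : KLb (18/19) ≤ -(3 * gv 2 - 4 * gv (3/2)) := by
  have h2 := gv_nat 2
  simp [Nat.factorial] at h2
  have hc : log (3.1415^2*2/9) ≤ -(3 * gv 2 - 4 * gv (3/2)) := by
    rw [h2, gv_three_half]
    have hp : log 3.1415 ≤ log π := Real.log_le_log (by norm_num) (by linarith [Real.pi_gt_d4])
    rw [show (3/4:ℝ) = 3/2^2 by norm_num]
    rw [show (9:ℝ) = 3^2 by norm_num]
    rw [Real.log_div (by norm_num) (by norm_num), Real.log_div (by norm_num) (by norm_num),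
      Real.log_div (by norm_num) (by norm_num), Real.log_mul (by norm_num) (by norm_num),
      Real.log_pow, Real.log_pow, Real.log_pow]
    push_cast
    linarith
  have := KL_num 18 (by norm_num) _ (3.1415^2*2/9) (by norm_num) hc (by norm_num)
  norm_num at this ⊢
  exact this

lemma KL_num3 : KLb (124/125) ≤ -(5 * gv 3 - 6 * gv (5/2)) := by
  have h2 := gv_nat 3
  simp [Nat.factorial] at h2
  have hc : log (3.1415^3*((27/6)^5*(15/8)^6/(5/2)^15)) ≤ -(5 * gv 3 - 6 * gv (5/2)) := by
    rw [h2, gv_five_half]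
    have hp : log 3.1415 ≤ log π := Real.log_le_log (by norm_num) (by linarith [Real.pi_gt_d4])
    have h27 : log 27 = 3 * log 3 := by rw [show (27:ℝ) = 3^3 by norm_num, Real.log_pow]; norm_num
    rw [Real.log_mul (by norm_num) (by norm_num), Real.log_div (by norm_num) (by norm_num),
      Real.log_mul (by norm_num) (by norm_num), Real.log_pow, Real.log_pow, Real.log_pow, Real.log_pow,
      Real.log_div (x := 27) (by norm_num) (by norm_num), h27]
    push_cast
    linarith
  have := KL_num 124 (by norm_num) _ (3.1415^3*((27/6)^5*(15/8)^6/(5/2)^15)) (by norm_num) hc (by norm_num)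
  norm_num at this ⊢
  exact this

lemma KL_le_one (a w : ℝ) (ha : exp (-1) ≤ a) (ha' : exp (-1) ≤ 1 - a) (h0 : 0 < w) (h1 : w < 1) :
    w * log (w/a) + (1-w) * log ((1-w)/(1-a)) ≤ 1 := by
  have hW : max w (1-w) < 1 := max_lt h1 (by linarith)
  have hW0 : 0 < max w (1-w) := lt_max_of_lt_left h0
  refine (KL_bound a w (max w (1-w)) ha ha' hW (by linarith [le_max_right w (1-w)])
    (le_max_left _ _)).trans ?_
  obtain ⟨he1, he2⟩ := exp_facts
  have hβ : -log (1 - exp (-1)) ≤ 1 := by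
    have : log (exp (-1)) ≤ log (1 - exp (-1)) := Real.log_le_log (exp_pos _) (by linarith)
    rw [Real.log_exp] at this
    linarith
  unfold KLb
  have := Real.binEntropy_nonneg hW0.le hW.le
  nlinarith

lemma core_mix (a b x y t k : ℝ) (ha : 0 < a) (hb : 0 < b) (hx : 0 < x) (hy : 0 < y)
    (ht : 0 ≤ t)
    (hk : (x/(x+y)) * log ((x/(x+y))/a) + (1-x/(x+y)) * log ((1-x/(x+y))/b) ≤ -k) :
    exp (t*k) * (x+y)^(1-t) ≤ a^t * x^(1-t) + b^t * y^(1-t) := by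
  set w := x/(x+y) with hw
  have hs : 0 < x + y := by positivity
  have hw0 : 0 < w := by positivity
  have hw1' : 1 - w = y/(x+y) := by rw [hw]; field_simp; ring
  have hw1 : 0 < 1 - w := by rw [hw1']; positivity
  have hxw : x = w * (x+y) := by rw [hw]; field_simp
  have hyw : y = (1-w) * (x+y) := by rw [hw1']; field_simp
  have e1 : ∀ c v : ℝ, 0 < c → 0 < v → c^t * (v*(x+y))^(1-t) = (v * (c/v)^t) * (x+y)^(1-t) := by
    intro c v hc hv
    rw [Real.mul_rpow hv.le hs.le, Real.rpow_sub hv, Real.rpow_one, Real.div_rpow hc.le hv.le]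
    ring
  have e2 : a^t * x^(1-t) + b^t * y^(1-t) = (w * (a/w)^t + (1-w) * (b/(1-w))^t) * (x+y)^(1-t) := by
    have h1 := e1 a w ha hw0
    have h2 := e1 b (1-w) hb hw1
    rw [← hxw] at h1
    rw [← hyw] at h2
    rw [h1, h2]; ring
  rw [e2]
  gcongr
  have am := Real.geom_mean_le_arith_mean2_weighted hw0.le hw1.le
    (show 0 ≤ (a/w)^t by positivity) (show 0 ≤ (b/(1-w))^t by positivity) (by ring)
  refine le_trans ?_ am
  have hA : (a/w)^t = exp (t * log (a/w)) := by
    rw [Real.rpow_def_of_pos (by positivity)]; ring_nf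
  have hB : (b/(1-w))^t = exp (t * log (b/(1-w))) := by
    rw [Real.rpow_def_of_pos (by positivity)]; ring_nf
  rw [hA, hB, ← Real.exp_mul, ← Real.exp_mul, ← Real.exp_add]
  apply Real.exp_le_exp.2
  have l1 : log (a/w) = - log (w/a) := by rw [← Real.log_inv, inv_div]
  have l2 : log (b/(1-w)) = - log ((1-w)/b) := by rw [← Real.log_inv, inv_div]
  rw [l1, l2]
  nlinarith

lemma core_final (a b Ap Bp Aq Bq p q k : ℝ) (ha : 0 < a) (hb : 0 < b) (hx : 0 < Ap) (hy : 0 < Bp)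
    (hq : 0 < q) (hpq : q ≤ p)
    (hA : a^(1-q/p) * Ap^(q/p) ≤ Aq) (hB : b^(1-q/p) * Bp^(q/p) ≤ Bq)
    (hk : (Ap/(Ap+Bp)) * log ((Ap/(Ap+Bp))/a) + (1-Ap/(Ap+Bp)) * log ((1-Ap/(Ap+Bp))/b) ≤ -k)
    (hg : (gv p + k)/p ≤ (gv q + k)/q) :
    (Gamma (p+1) * (Ap+Bp))^(1/p) ≤ (p/q) * (Gamma (q+1) * (Aq+Bq))^(1/q) := by
  have hp : 0 < p := by linarith
  have hGp : 0 < Gamma (p+1) := Gamma_pos_of_pos (by linarith)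
  have hGq : 0 < Gamma (q+1) := Gamma_pos_of_pos (by linarith)
  have hθ : q/p ≤ 1 := by rw [div_le_one hp]; exact hpq
  have mix := core_mix a b Ap Bp (1-q/p) k ha hb hx hy (by linarith) hk
  rw [sub_sub_cancel] at mix
  have h1 : exp ((1-q/p)*k) * (Ap+Bp)^(q/p) ≤ Aq + Bq := by linarith
  have hS : 0 < Ap + Bp := by positivity
  have hQ : 0 < Aq + Bq := lt_of_lt_of_le (by positivity) h1
  have h2 := Real.log_le_log (by positivity) h1
  rw [Real.log_mul (by positivity) (by positivity), Real.log_exp, Real.log_rpow hS] at h2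
  rw [← Real.log_le_log_iff (by positivity) (by positivity), Real.log_mul (by positivity) (by positivity),
    Real.log_rpow (by positivity), Real.log_rpow (by positivity), Real.log_mul hGp.ne' hS.ne', Real.log_mul hGq.ne' hQ.ne',
    Real.log_div hp.ne' hq.ne']
  unfold gv at hg
  have h3 : (1/q) * ((1-q/p)*k + q/p * log (Ap+Bp)) ≤ (1/q) * log (Aq+Bq) := by gcongr
  have e3 : (1/q) * ((1-q/p)*k + q/p * log (Ap+Bp)) = k/q - k/p + 1/p * log (Ap+Bp) := by field_simp
  have e4 : (log (Gamma (p+1)) - p * log p + k)/p = 1/p * log (Gamma (p+1)) - log p + k/p := by field_simp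
  have e5 : (log (Gamma (q+1)) - q * log q + k)/q = 1/q * log (Gamma (q+1)) - log q + k/q := by field_simp
  rw [e4, e5] at hg
  rw [e3] at h3
  linarith

lemma core_ratio (a b m Ap Bp p : ℝ) (P n : ℕ) (ha : exp (-1) ≤ a) (hb : exp (-1) ≤ b) (hab : a + b = 1)
    (hm : 0 < m) (hx : 0 < Ap) (hp : 1 ≤ p) (hP : p ≤ P)
    (hA1 : a^(1-1/p) * Ap^(1/p) ≤ m) (hB1 : b * (m/b)^p ≤ Gamma (p+1) * Bp)
    (hn : (P.factorial : ℝ) * (1.71829)^(P-1) ≤ n) : Ap ≤ n * Bp := by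
  have hp0 : 0 < p := by linarith
  have ha0 : 0 < a := lt_of_lt_of_le (exp_pos _) ha
  have hb0 : 0 < b := lt_of_lt_of_le (exp_pos _) hb
  have hGp : 0 < Gamma (p+1) := Gamma_pos_of_pos (by linarith)
  have hBp : 0 < Bp := by
    have : 0 < Gamma (p+1) * Bp := lt_of_lt_of_le (by positivity) hB1
    exact (pos_iff_pos_of_mul_pos this).1 hGp
  have hba : b/a ≤ 1.71829 := by
    rw [div_le_iff₀ ha0]
    have h1 : 1 ≤ exp 1 * a := by
      have := mul_le_mul_of_nonneg_left ha (exp_pos 1).le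
      rwa [← Real.exp_add, add_neg_cancel, Real.exp_zero] at this
    have := Real.exp_one_lt_d9
    nlinarith
  have hG : Gamma (p+1) ≤ P.factorial := by
    rw [← Real.Gamma_nat_eq_factorial]
    exact Real.Gamma_strictMonoOn_Ici.monotoneOn (by simp; linarith) (by simp; linarith) (by linarith)
  have hP1 : 1 ≤ P := by
    have : (1:ℝ) ≤ P := by linarith
    exact_mod_cast this
  -- log forms
  have l1 := Real.log_le_log (by positivity) hA1
  have l2 := Real.log_le_log (by positivity) hB1
  rw [Real.log_mul (by positivity) (by positivity), Real.log_rpow ha0, Real.log_rpow hx] at l1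
  rw [Real.log_mul (by positivity) (by positivity), Real.log_rpow (by positivity), Real.log_div hm.ne' hb0.ne',
    Real.log_mul hGp.ne' hBp.ne'] at l2
  have l3 : p * ((1-1/p) * log a + 1/p * log Ap) ≤ p * log m := by gcongr
  have e3 : p * ((1-1/p) * log a + 1/p * log Ap) = (p-1) * log a + log Ap := by field_simp
  rw [e3] at l3
  have l4 : log (b/a) ≤ log 1.71829 := Real.log_le_log (by positivity) hba
  rw [Real.log_div hb0.ne' ha0.ne'] at l4
  have l5 : (p-1) * (log b - log a) ≤ ((P-1 : ℕ):ℝ) * log 1.71829 := by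
    push_cast [hP1]
    have : 0 ≤ log 1.71829 := Real.log_nonneg (by norm_num)
    nlinarith
  have l6 : log (Gamma (p+1)) ≤ log P.factorial := Real.log_le_log hGp hG
  have l7 := Real.log_le_log (by positivity) hn
  rw [Real.log_mul (by positivity) (by positivity), Real.log_pow] at l7
  have hn0 : (0:ℝ) < n := lt_of_lt_of_le (by positivity) hn
  rw [← Real.log_le_log_iff hx (by positivity), Real.log_mul hn0.ne' hBp.ne']
  nlinarith

lemma w_bounds (x y : ℝ) (n : ℕ) (hx : 0 < x) (hy : 0 < y) (h1 : x ≤ n * y) (h2 : y ≤ n * x) :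
    1 - (n:ℝ)/(n+1) ≤ x/(x+y) ∧ x/(x+y) ≤ (n:ℝ)/(n+1) := by
  have : 1 - (n:ℝ)/(n+1) = 1/(n+1) := by field_simp; ring
  rw [this]
  constructor
  · rw [div_le_div_iff₀ (by positivity) (by positivity)]; linarith
  · rw [div_le_div_iff₀ (by positivity) (by positivity)]; linarith

/-- Log-concavity of a (nonincreasing) tail function, in terms of exponential chords. -/
def LcTail (R : ℝ → ℝ) : Prop := ∀ ρ l a b c : ℝ, 0 < ρ → 0 < l → a < b → b < c →
  ρ * exp (-l * a) ≤ R a → ρ * exp (-l * c) ≤ R c → ρ * exp (-l * b) ≤ R b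

lemma strict_setIntegral (f g : ℝ → ℝ) (c : ℝ) (hf : IntegrableOn f (Set.Ioi c))
    (hg : IntegrableOn g (Set.Ioi c)) (h : ∀ x, c < x → f x < g x) :
    ∫ x in Set.Ioi c, f x < ∫ x in Set.Ioi c, g x := by
  have hpos : 0 < ∫ x in Set.Ioi c, (g x - f x) := by
    rw [setIntegral_pos_iff_support_of_nonneg_ae]
    · have : Function.support (fun x => g x - f x) ∩ Set.Ioi c = Set.Ioi c := by
        apply Set.inter_eq_right.2
        intro x hx
        have := h x hx
        simp only [Function.mem_support]
        linarith
      rw [this]; simp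
    · filter_upwards [ae_restrict_mem measurableSet_Ioi] with x hx
      have := h x hx
      simp only [Pi.zero_apply]
      linarith
    · exact hg.sub hf
  rw [integral_sub hg hf] at hpos
  linarith

lemma tail_split (f : ℝ → ℝ) (a b : ℝ) (hab : a ≤ b) (hf : IntegrableOn f (Set.Ioi a)) :
    ∫ x in Set.Ioi a, f x = (∫ x in Set.Ioc a b, f x) + ∫ x in Set.Ioi b, f x := by
  rw [← Set.Ioc_union_Ioi_eq_Ioi hab, setIntegral_union (Set.Ioc_disjoint_Ioi le_rfl) measurableSet_Ioi]
  · exact hf.mono_set Set.Ioc_subset_Ioi_self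
  · exact hf.mono_set (Set.Ioi_subset_Ioi hab)

lemma tail_lc (f : ℝ → ℝ) (hfi : Integrable f)
    (hlc : ∀ x y l : ℝ, 0 ≤ l → l ≤ 1 → f x ^ l * f y ^ (1 - l) ≤ f (l * x + (1 - l) * y)) :
    LcTail (fun x => ∫ t in Set.Ioi x, f t) := by
  intro ρ l a b c hρ hl hab hbc ha hc
  simp only at ha hc ⊢
  set g : ℝ → ℝ := fun t => ρ * l * exp (-l * t) with hg
  have gint : ∀ x, IntegrableOn g (Set.Ioi x) := by
    intro x
    exact (integrableOn_exp_mul_Ioi (by linarith) x).const_mul _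
  have gval : ∀ x, ∫ t in Set.Ioi x, g t = ρ * exp (-l * x) := by
    intro x
    rw [hg, integral_const_mul, integral_exp_mul_Ioi (by linarith)]
    field_simp
  have gpos : ∀ x, 0 < g x := fun x => by rw [hg]; positivity
  have fint : ∀ x, IntegrableOn f (Set.Ioi x) := fun x => hfi.integrableOn
  have conn : ∀ v u w, v < u → u < w → g v ≤ f v → g w ≤ f w → g u ≤ f u := by
    intro v u w hvu huw hv hw
    have hd : 0 < w - v := by linarith
    set s := (w - u)/(w-v) with hs
    have hs0 : 0 ≤ s := by apply div_nonneg <;> linarith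
    have hs1 : s ≤ 1 := by rw [hs, div_le_one hd]; linarith
    have e : s * v + (1-s) * w = u := by rw [hs]; field_simp; ring
    have h1 := hlc v w s hs0 hs1
    rw [e] at h1
    refine le_trans ?_ h1
    have h2 : g v ^ s * g w ^ (1-s) ≤ f v ^ s * f w ^ (1-s) := by
      have := (gpos v).le
      have := (gpos w).le
      have h5 : 0 ≤ 1 - s := by linarith
      exact mul_le_mul (Real.rpow_le_rpow (gpos v).le hv hs0) (Real.rpow_le_rpow (gpos w).le hw h5)
        (Real.rpow_nonneg (gpos w).le _) (Real.rpow_nonneg ((gpos v).le.trans hv) _)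
    refine le_trans (le_of_eq ?_) h2
    rw [hg]
    simp only
    rw [Real.mul_rpow (by positivity) (by positivity), Real.mul_rpow (x := ρ * l) (by positivity) (by positivity), ← Real.exp_mul, ← Real.exp_mul]
    have : (ρ*l)^s * (ρ*l)^(1-s) = ρ * l := by
      rw [← Real.rpow_add (by positivity)]; simp
    calc ρ * l * exp (-l*u) = ((ρ*l)^s * (ρ*l)^(1-s)) * (exp (-l*v*s) * exp (-l*w*(1-s))) := by
          rw [this, ← Real.exp_add, ← e]; ring_nf
      _ = _ := by ring
  by_contra hb
  push Not at hb
  rw [← gval] at ha hb hc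
  have ⟨v, hv, hv'⟩ : ∃ v ∈ Set.Ioc a b, g v ≤ f v := by
    by_contra hcon
    push Not at hcon
    have : ∫ x in Set.Ioc a b, f x ≤ ∫ x in Set.Ioc a b, g x :=
      setIntegral_mono_on hfi.integrableOn ((gint a).mono_set Set.Ioc_subset_Ioi_self) measurableSet_Ioc
        (fun x hx => (hcon x hx).le)
    rw [tail_split f a b hab.le (fint a), tail_split g a b hab.le (gint a)] at ha
    linarith
  have ⟨u, hu, hu'⟩ : ∃ u ∈ Set.Ioc b c, f u < g u := by
    by_contra hcon
    push Not at hcon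
    have : ∫ x in Set.Ioc b c, g x ≤ ∫ x in Set.Ioc b c, f x :=
      setIntegral_mono_on ((gint b).mono_set Set.Ioc_subset_Ioi_self) hfi.integrableOn measurableSet_Ioc
        (fun x hx => (hcon x hx))
    rw [tail_split f b c hbc.le (fint b), tail_split g b c hbc.le (gint b)] at hb
    linarith
  have := strict_setIntegral f g c (fint c) (gint c) (by
    intro w hw
    by_contra hcon
    push Not at hcon
    have := conn v u w (lt_of_le_of_lt hv.2 hu.1) (lt_of_le_of_lt hu.2 hw) hv' hcon
    linarith)
  linarith

lemma expG_int (p l ρ : ℝ) (hp : 0 < p) (hl : 0 < l) :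
    IntegrableOn (fun t : ℝ => t^(p-1) * (ρ * exp (-l * t))) (Set.Ioi 0) := by
  have := (integrableOn_rpow_mul_exp_neg_mul_rpow (p := 1) (s := p-1) (b := l) (by linarith) one_pos hl).const_mul ρ
  refine Integrable.congr this (Filter.Eventually.of_forall ?_)
  intro t
  simp only [Real.rpow_one]
  ring

lemma expG_val (p l ρ : ℝ) (hp : 0 < p) (hl : 0 < l) :
    ∫ t in Set.Ioi (0:ℝ), t^(p-1) * (ρ * exp (-l * t)) = ρ * ((1/l)^p * Gamma p) := by
  rw [← Real.integral_rpow_mul_exp_neg_mul_Ioi hp hl, ← integral_const_mul]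
  congr 1
  ext t
  rw [neg_mul]; ring

lemma moment_lc (R : ℝ → ℝ) (hR : LcTail R) (hρ : 0 < R 0) (p q : ℝ) (hq : 0 < q) (hpq : q ≤ p)
    (ip : IntegrableOn (fun t : ℝ => t^(p-1) * R t) (Set.Ioi 0))
    (iq : IntegrableOn (fun t : ℝ => t^(q-1) * R t) (Set.Ioi 0))
    (hpos : 0 < ∫ t in Set.Ioi (0:ℝ), t^(p-1) * R t) :
    (R 0)^(1-q/p) * ((∫ t in Set.Ioi (0:ℝ), t^(p-1) * R t) / Gamma p)^(q/p)
      ≤ (∫ t in Set.Ioi (0:ℝ), t^(q-1) * R t) / Gamma q := by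
  have hp : 0 < p := by linarith
  rcases hpq.eq_or_lt with rfl | hlt
  · rw [div_self hq.ne']; simp
  set I := ∫ t in Set.Ioi (0:ℝ), t^(p-1) * R t with hI
  set ρ := R 0 with hρd
  have hGp := Gamma_pos_of_pos hp
  have hGq := Gamma_pos_of_pos hq
  set l := (ρ * Gamma p / I)^(1/p) with hl
  have hl0 : 0 < l := by positivity
  have hlp : (1/l)^p = I / (ρ * Gamma p) := by
    rw [one_div, Real.inv_rpow hl0.le, hl, ← Real.rpow_mul (by positivity), one_div_mul_cancel hp.ne', Real.rpow_one, inv_div]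
  have hlq : (1/l)^q = (I / (ρ * Gamma p))^(q/p) := by
    rw [← hlp, ← Real.rpow_mul (by positivity), mul_div_cancel₀ _ hp.ne']
  have gip := expG_int p l ρ hp hl0
  have giq := expG_int q l ρ hq hl0
  have gvp := expG_val p l ρ hp hl0
  have gvq := expG_val q l ρ hq hl0
  have hIeq : I = ∫ t in Set.Ioi (0:ℝ), t^(p-1) * (ρ * exp (-l * t)) := by
    rw [gvp, hlp]; field_simp
  have main : ∫ t in Set.Ioi (0:ℝ), t^(q-1) * (ρ * exp (-l * t)) ≤ ∫ t in Set.Ioi (0:ℝ), t^(q-1) * R t := by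
    set S : Set ℝ := {t | 0 < t ∧ ρ * exp (-l * t) ≤ R t} with hS
    have down : ∀ s t, 0 < s → s < t → t ∈ S → s ∈ S := by
      intro s t hs hst ht
      exact ⟨hs, hR ρ l 0 s t hρ hl0 hs hst (by simp [hρd]) ht.2⟩
    have hne : S.Nonempty := by
      by_contra hcon
      rw [Set.not_nonempty_iff_eq_empty] at hcon
      have := strict_setIntegral _ _ 0 ip gip (by
        intro x hx
        have hx' : x ∉ S := by rw [hcon]; simp
        have : R x < ρ * exp (-l * x) := by
          by_contra h; push Not at h; exact hx' ⟨hx, h⟩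
        gcongr)
      rw [← hIeq] at this
      exact lt_irrefl _ this
    by_cases hbd : BddAbove S
    · set x := sSup S with hx
      obtain ⟨s0, hs0⟩ := hne
      have hx0 : 0 < x := lt_of_lt_of_le hs0.1 (le_csSup hbd hs0)
      have pt : ∀ t ∈ Set.Ioi (0:ℝ), x^(q-p) * (t^(p-1) * R t - t^(p-1) * (ρ * exp (-l * t)))
          ≤ t^(q-1) * R t - t^(q-1) * (ρ * exp (-l * t)) := by
        intro t ht
        have ht : 0 < t := ht
        have e : t^(q-1) = t^(q-p) * t^(p-1) := by rw [← Real.rpow_add ht]; ring_nf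
        rw [e]
        have hpw : 0 < t^(p-1) := by positivity
        have : t^(q-p) * t^(p-1) * R t - t^(q-p) * t^(p-1) * (ρ * exp (-l * t)) - x^(q-p) * (t^(p-1) * R t - t^(p-1) * (ρ * exp (-l * t)))
          = t^(p-1) * ((t^(q-p) - x^(q-p)) * (R t - ρ * exp (-l * t))) := by ring
        have nn : 0 ≤ (t^(q-p) - x^(q-p)) * (R t - ρ * exp (-l * t)) := by
          rcases lt_trichotomy t x with h | h | h
          · obtain ⟨s, hs, hts⟩ := exists_lt_of_lt_csSup ⟨s0, hs0⟩ h
            have h1 := (down t s ht hts hs).2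
            have h2 : x^(q-p) ≤ t^(q-p) := Real.rpow_le_rpow_of_nonpos ht h.le (by linarith)
            apply mul_nonneg <;> linarith
          · rw [h]; simp
          · have h1 : R t < ρ * exp (-l * t) := by
              by_contra hcon
              push Not at hcon
              have := le_csSup hbd (show t ∈ S from ⟨ht, hcon⟩)
              linarith
            have h2 : t^(q-p) ≤ x^(q-p) := Real.rpow_le_rpow_of_nonpos hx0 h.le (by linarith)
            apply mul_nonneg_of_nonpos_of_nonpos <;> linarith
        have := mul_nonneg hpw.le nn
        linarith
      have hfi := setIntegral_mono_on ((ip.sub gip).const_mul _) (iq.sub giq) measurableSet_Ioi pt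
      rw [integral_const_mul, integral_sub' ip gip, integral_sub' iq giq, ← hIeq] at hfi
      simp only [hI] at hfi
      rw [sub_self, mul_zero] at hfi
      linarith
    · apply setIntegral_mono_on giq iq measurableSet_Ioi
      intro t ht
      have ht : 0 < t := ht
      rw [not_bddAbove_iff] at hbd
      obtain ⟨s, hs, hts⟩ := hbd t
      have := (down t s ht hts hs).2
      gcongr
  rw [gvq, hlq] at main
  rw [le_div_iff₀ hGq]
  refine le_trans (le_of_eq ?_) main
  have : I / (ρ * Gamma p) = (I/Gamma p) / ρ := by field_simp
  rw [this, Real.div_rpow (by positivity) hρ.le, Real.rpow_sub hρ, Real.rpow_one]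
  ring

lemma grunbaum (R R' : ℝ → ℝ) (hR : LcTail R) (hρ : 0 < R 0) (hρ1 : R 0 ≤ 1)
    (iR : IntegrableOn R (Set.Ioi 0)) (iR' : IntegrableOn R' (Set.Ioi 0))
    (hpos : 0 < ∫ t in Set.Ioi (0:ℝ), R t)
    (heq : ∫ t in Set.Ioi (0:ℝ), R t = ∫ t in Set.Ioi (0:ℝ), R' t)
    (hR'0 : ∀ t, 0 < t → 0 ≤ R' t) (hRR' : ∀ t, 0 < t → R' t = 1 - R (-t)) :
    exp (-1) ≤ R 0 := by
  set ρ := R 0 with hρd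
  set m := ∫ t in Set.Ioi (0:ℝ), R t with hm
  set l := ρ / m with hl
  have hl0 : 0 < l := by positivity
  have gint : IntegrableOn (fun t => ρ * exp (-l * t)) (Set.Ioi 0) :=
    (integrableOn_exp_mul_Ioi (by linarith) 0).const_mul _
  have gval : ∫ t in Set.Ioi 0, ρ * exp (-l * t) = m := by
    rw [integral_const_mul, integral_exp_mul_Ioi (by linarith), hl]
    simp; field_simp
  obtain ⟨x, hx0, hx⟩ : ∃ x, 0 < x ∧ ρ * exp (-l * x) ≤ R x := by
    by_contra hcon
    push Not at hcon
    have := strict_setIntegral R _ 0 iR gint hcon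
    rw [gval] at this
    exact lt_irrefl _ this
  have bd : ∀ t, 0 < t → R (-t) ≤ ρ * exp (l * t) := by
    intro t ht
    by_contra hcon
    push Not at hcon
    have hRt : 0 < R (-t) := lt_trans (by positivity) hcon
    set d := (log (R (-t)) - log ρ - l * t) / (x + t) with hd
    have hd0 : 0 < d := by
      have := Real.log_lt_log (by positivity) hcon
      rw [Real.log_mul hρ.ne' (exp_pos _).ne', Real.log_exp] at this
      apply div_pos <;> linarith
    have hdm : d * (x+t) = log (R (-t)) - log ρ - l * t := by rw [hd]; field_simp
    have h1 : ρ * exp (d * x) * exp (-(l+d) * (-t)) ≤ R (-t) := by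
      rw [mul_assoc, ← Real.exp_add]
      have : d * x + -(l+d) * (-t) = log (R (-t)) - log ρ := by linarith
      rw [this, Real.exp_sub, Real.exp_log hRt, Real.exp_log hρ]
      apply le_of_eq; field_simp
    have h2 : ρ * exp (d * x) * exp (-(l+d) * x) ≤ R x := by
      rw [mul_assoc, ← Real.exp_add]
      have : d * x + -(l+d) * x = -l * x := by ring
      rw [this]; exact hx
    have h3 := hR (ρ * exp (d*x)) (l+d) (-t) 0 x (by positivity) (by positivity) (by linarith) hx0 h1 h2
    rw [mul_zero, Real.exp_zero, mul_one, ← hρd] at h3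
    have : 1 < exp (d*x) := by rw [Real.one_lt_exp_iff]; positivity
    nlinarith
  set T := - log ρ / l with hT
  have hT0 : 0 ≤ T := div_nonneg (by have := Real.log_nonpos hρ.le hρ1; linarith) hl0.le
  have hlT : l * T = - log ρ := by rw [hT]; field_simp
  have hcont : Continuous (fun t : ℝ => 1 - ρ * exp (l * t)) := by fun_prop
  have lower : ∫ t in (0:ℝ)..T, (1 - ρ * exp (l * t)) ≤ m := by
    rw [intervalIntegral.integral_of_le hT0, heq]
    calc ∫ t in Set.Ioc 0 T, (1 - ρ * exp (l * t)) ≤ ∫ t in Set.Ioc 0 T, R' t := by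
          apply setIntegral_mono_on
          · exact hcont.integrableOn_Ioc
          · exact iR'.mono_set Set.Ioc_subset_Ioi_self
          · exact measurableSet_Ioc
          · intro t ht
            rw [hRR' t ht.1]
            have := bd t ht.1
            linarith
      _ ≤ _ := by
          apply setIntegral_mono_set iR'
          · filter_upwards [ae_restrict_mem measurableSet_Ioi] with t ht
            exact hR'0 t ht
          · exact Filter.Eventually.of_forall (fun t ht => Set.Ioc_subset_Ioi_self ht)
  have comp : ∫ t in (0:ℝ)..T, (1 - ρ * exp (l * t)) = (T - ρ * (exp (l * T)) / l) - (0 - ρ / l) := by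
    have := intervalIntegral.integral_eq_sub_of_hasDerivAt (a := 0) (b := T) (f := fun t => t - ρ * exp (l * t) / l) (f' := fun t => 1 - ρ * exp (l * t)) (by
      intro t _
      have h1 : HasDerivAt (fun t : ℝ => exp (l * t)) (exp (l*t) * (l * 1)) t := ((hasDerivAt_id t).const_mul l).exp
      have h2 := (hasDerivAt_id t).sub ((h1.const_mul ρ).div_const l)
      refine h2.congr_deriv ?_
      field_simp) (hcont.intervalIntegrable _ _)
    rw [this]
    simp
  rw [comp, hlT, Real.exp_neg, Real.exp_log hρ, mul_inv_cancel₀ hρ.ne'] at lower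
  have hm' : m = ρ / l := by rw [hl]; field_simp
  have h5 : T ≤ 1 / l := by linarith
  have h6 : l * T ≤ 1 := by
    have := mul_le_mul_of_nonneg_left h5 hl0.le
    rwa [mul_one_div_cancel hl0.ne'] at this
  rw [← Real.le_log_iff_exp_le hρ]
  linarith

/-- `μ` has the log-concave density `f`. -/
def DensLC (μ : Measure ℝ) (f : ℝ → ℝ) : Prop :=
  (∀ x, 0 ≤ f x) ∧ μ = volume.withDensity (fun x => ENNReal.ofReal (f x)) ∧
     ∀ x y l : ℝ, 0 ≤ l → l ≤ 1 → f x ^ l * f y ^ (1 - l) ≤ f (l * x + (1 - l) * y)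

lemma DensLC.measurable {μ : Measure ℝ} {f : ℝ → ℝ} (h : DensLC μ f) : Measurable f := by
  apply measurable_of_Ici
  intro c
  rcases le_or_gt c 0 with hc | hc
  · have : f ⁻¹' Set.Ici c = Set.univ := by
      ext x; simp; exact hc.trans (h.1 x)
    rw [this]; exact MeasurableSet.univ
  · have : Convex ℝ (f ⁻¹' Set.Ici c) := by
      intro x hx y hy s t hs ht hst
      have hx : c ≤ f x := hx
      have hy : c ≤ f y := hy
      have h1 := h.2.2 x y s hs (by linarith)
      have e : 1 - s = t := by linarith
      rw [e] at h1
      show c ≤ f (s • x + t • y)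
      simp only [smul_eq_mul]
      refine le_trans ?_ h1
      calc c = c^s * c^t := by rw [← Real.rpow_add hc, hst, Real.rpow_one]
        _ ≤ f x ^ s * f y ^ t :=
          mul_le_mul (Real.rpow_le_rpow hc.le hx hs) (Real.rpow_le_rpow hc.le hy ht)
            (Real.rpow_nonneg hc.le _) (Real.rpow_nonneg (h.1 x) _)
    exact this.ordConnected.measurableSet

lemma DensLC.integrable {μ : Measure ℝ} [IsProbabilityMeasure μ] {f : ℝ → ℝ} (h : DensLC μ f) :
    Integrable f := by
  rw [← lintegral_ofReal_ne_top_iff_integrable h.measurable.aestronglyMeasurable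
    (Filter.Eventually.of_forall h.1)]
  have h1 : μ Set.univ = ∫⁻ x, ENNReal.ofReal (f x) := by
    conv_lhs => rw [h.2.1]
    rw [withDensity_apply _ MeasurableSet.univ, Measure.restrict_univ]
  rw [← h1]
  simp

lemma DensLC.tail {μ : Measure ℝ} [IsProbabilityMeasure μ] {f : ℝ → ℝ} (h : DensLC μ f) (x : ℝ) :
    μ.real (Set.Ioi x) = ∫ t in Set.Ioi x, f t := by
  have h1 : μ (Set.Ioi x) = ∫⁻ t in Set.Ioi x, ENNReal.ofReal (f t) := by
    conv_lhs => rw [h.2.1]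
    rw [withDensity_apply _ measurableSet_Ioi]
  rw [measureReal_def, h1, integral_eq_lintegral_of_nonneg_ae (Filter.Eventually.of_forall h.1)
    h.measurable.aestronglyMeasurable]

lemma DensLC.lcTail {μ : Measure ℝ} [IsProbabilityMeasure μ] {f : ℝ → ℝ} (h : DensLC μ f) :
    LcTail (fun x => μ.real (Set.Ioi x)) := by
  have := tail_lc f h.integrable h.2.2
  simpa only [← h.tail] using this

lemma DensLC.noAtoms {μ : Measure ℝ} {f : ℝ → ℝ} (h : DensLC μ f) : NullSingletonClass μ := by
  rw [h.2.1]; infer_instance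

lemma DensLC.neg {μ : Measure ℝ} {f : ℝ → ℝ} (h : DensLC μ f) :
    DensLC (μ.map (fun x => -x)) (fun x => f (-x)) := by
  refine ⟨fun x => h.1 _, ?_, ?_⟩
  · ext s hs
    rw [Measure.map_apply measurable_neg hs, withDensity_apply _ hs]
    conv_lhs => rw [h.2.1]
    rw [withDensity_apply _ (measurable_neg hs)]
    have := (Measure.measurePreserving_neg (volume : Measure ℝ)).setLIntegral_comp_preimage hs
      (f := fun x => ENNReal.ofReal (f (-x))) ((h.measurable.comp measurable_neg).ennreal_ofReal)
    simp only [neg_neg] at this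
    exact this
  · intro x y l h0 h1
    have := h.2.2 (-x) (-y) l h0 h1
    convert this using 2
    ring

lemma layer (μ : Measure ℝ) [IsProbabilityMeasure μ] (s : ℝ) (hs : 0 < s)
    (hi : Integrable (fun x : ℝ => (max x 0)^s) μ) :
    IntegrableOn (fun t : ℝ => t^(s-1) * μ.real (Set.Ioi t)) (Set.Ioi 0) ∧
    ∫ x, (max x 0)^s ∂μ = s * ∫ t in Set.Ioi (0:ℝ), t^(s-1) * μ.real (Set.Ioi t) := by
  have nn : ∀ x : ℝ, 0 ≤ (max x 0)^s := fun x => Real.rpow_nonneg (le_max_right _ _) _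
  have h1 := lintegral_rpow_eq_lintegral_meas_lt_mul μ (f := fun x : ℝ => max x 0)
    (Filter.Eventually.of_forall (fun x => le_max_right _ _)) (by fun_prop) hs
  rw [← ofReal_integral_eq_lintegral_ofReal hi (Filter.Eventually.of_forall nn)] at h1
  have h2 : ∫⁻ t in Set.Ioi (0:ℝ), μ {a : ℝ | t < max a 0} * ENNReal.ofReal (t^(s-1))
      = ∫⁻ t in Set.Ioi (0:ℝ), ENNReal.ofReal (t^(s-1) * μ.real (Set.Ioi t)) := by
    apply setLIntegral_congr_fun measurableSet_Ioi
    intro t ht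
    have ht : 0 < t := ht
    have e : {a : ℝ | t < max a 0} = Set.Ioi t := by
      ext a; simp [ht.le]
    simp only [e]
    rw [ENNReal.ofReal_mul (by positivity), mul_comm, ofReal_measureReal]
  rw [h2] at h1
  have meas : Measurable (fun t : ℝ => t^(s-1) * μ.real (Set.Ioi t)) := by
    have : Antitone (fun t : ℝ => μ.real (Set.Ioi t)) := fun a b hab =>
      measureReal_mono (Set.Ioi_subset_Ioi hab)
    have := this.measurable
    fun_prop
  have nn2 : 0 ≤ᵐ[volume.restrict (Set.Ioi (0:ℝ))] (fun t : ℝ => t^(s-1) * μ.real (Set.Ioi t)) := by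
    filter_upwards [ae_restrict_mem measurableSet_Ioi] with t ht
    have ht : 0 < t := ht
    simp only [Pi.zero_apply]
    positivity
  have hI : IntegrableOn (fun t : ℝ => t^(s-1) * μ.real (Set.Ioi t)) (Set.Ioi 0) := by
    rw [IntegrableOn, ← lintegral_ofReal_ne_top_iff_integrable meas.aestronglyMeasurable nn2]
    intro htop
    rw [htop, ENNReal.mul_top (by simpa using hs)] at h1
    exact ENNReal.ofReal_ne_top h1
  refine ⟨hI, ?_⟩
  rw [← ofReal_integral_eq_lintegral_ofReal hI nn2, ← ENNReal.ofReal_mul hs.le] at h1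
  rwa [ENNReal.ofReal_eq_ofReal_iff (integral_nonneg nn)] at h1
  exact mul_nonneg hs.le (integral_nonneg_of_ae nn2)

lemma int_le (μ : Measure ℝ) [IsProbabilityMeasure μ] (p s : ℝ) (hs : 0 < s) (hsp : s ≤ p)
    (hi : Integrable (fun x : ℝ => |x|^p) μ) : Integrable (fun x : ℝ => |x|^s) μ := by
  refine Integrable.mono' ((integrable_const (1:ℝ)).add hi) ?_ ?_
  · exact (by fun_prop : Measurable (fun x : ℝ => |x|^s)).aestronglyMeasurable
  · filter_upwards with x
    rw [Real.norm_of_nonneg (by positivity)]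
    simp only [Pi.add_apply]
    have : 0 ≤ |x|^p := by positivity
    rcases le_total |x| 1 with h | h
    · have := Real.rpow_le_one (abs_nonneg x) h hs.le
      linarith
    · have := Real.rpow_le_rpow_of_exponent_le h hsp
      linarith

lemma int_max (μ : Measure ℝ) (s : ℝ) (hs : 0 < s)
    (hi : Integrable (fun x : ℝ => |x|^s) μ) : Integrable (fun x : ℝ => (max x 0)^s) μ := by
  refine Integrable.mono' hi ?_ ?_
  · exact (by fun_prop : Measurable (fun x : ℝ => (max x 0)^s)).aestronglyMeasurable
  · filter_upwards with x
    rw [Real.norm_of_nonneg (Real.rpow_nonneg (le_max_right _ _) _)]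
    exact Real.rpow_le_rpow (le_max_right _ _) (max_le (le_abs_self x) (abs_nonneg x)) hs.le

lemma jensen_half (μ : Measure ℝ) [IsProbabilityMeasure μ] (p : ℝ) (hp : 1 ≤ p)
    (hi : Integrable (fun x : ℝ => |x|^p) μ) (hρ : 0 < μ.real (Set.Ioi 0))
    (hm : 0 < ∫ x, max x 0 ∂μ) :
    μ.real (Set.Ioi 0) * ((∫ x, max x 0 ∂μ)/μ.real (Set.Ioi 0))^p ≤ ∫ x, (max x 0)^p ∂μ := by
  set m := ∫ x, max x 0 ∂μ with hmd
  set ρ := μ.real (Set.Ioi 0) with hρd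
  set c := m/ρ with hc
  have hc0 : 0 < c := by positivity
  have i1 : Integrable (fun x : ℝ => max x 0) μ := by
    have := int_max μ 1 one_pos (int_le μ p 1 one_pos hp hi)
    simpa using this
  have ip := int_max μ p (by linarith) hi
  have i2 : Integrable ((Set.Ioi (0:ℝ)).indicator (fun _ => c^p * (1-p))) μ :=
    (integrable_const _).indicator measurableSet_Ioi
  have i3 : Integrable (fun x : ℝ => c^p * p / c * max x 0) μ := i1.const_mul _
  have key : ∫ x, ((Set.Ioi (0:ℝ)).indicator (fun _ => c^p * (1-p)) x + c^p * p / c * max x 0) ∂μ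
      ≤ ∫ x, (max x 0)^p ∂μ := by
    apply integral_mono (i2.add i3) ip
    intro x
    simp only [Pi.add_apply]
    rcases le_or_gt x 0 with hx | hx
    · rw [Set.indicator_of_notMem (by simpa using hx), max_eq_right hx, Real.zero_rpow (by linarith)]
      simp
    · rw [Set.indicator_of_mem (by simpa using hx), max_eq_left hx.le]
      have b := one_add_mul_self_le_rpow_one_add (s := x/c - 1) (by have : 0 < x/c := by positivity
                                                                    linarith) hp
      rw [add_sub_cancel, Real.div_rpow hx.le hc0.le, le_div_iff₀ (by positivity)] at b
      refine le_trans (le_of_eq ?_) b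
      field_simp
      ring
  rw [integral_add i2 i3, integral_indicator_const _ measurableSet_Ioi, integral_const_mul, ← hmd, ← hρd] at key
  refine le_trans (le_of_eq ?_) key
  have : m = c * ρ := by rw [hc]; field_simp
  rw [this, smul_eq_mul]
  field_simp
  ring

/-- normalized half moments -/
noncomputable def hA (μ : Measure ℝ) (s : ℝ) : ℝ :=
  (∫ t in Set.Ioi (0:ℝ), t^(s-1) * μ.real (Set.Ioi t)) / Gamma s

lemma hA_eq (μ : Measure ℝ) [IsProbabilityMeasure μ] (s : ℝ) (hs : 0 < s)
    (hi : Integrable (fun x : ℝ => |x|^s) μ) : ∫ x, (max x 0)^s ∂μ = Gamma (s+1) * hA μ s := by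
  rw [(layer μ s hs (int_max μ s hs hi)).2, hA, Real.Gamma_add_one hs.ne']
  have := (Gamma_pos_of_pos hs).ne'
  field_simp

lemma half (μ : Measure ℝ) [IsProbabilityMeasure μ] (f : ℝ → ℝ) (h : DensLC μ f) (p : ℝ) (hp : 1 ≤ p)
    (hi : Integrable (fun x : ℝ => |x|^p) μ) (hm : 0 < ∫ x, max x 0 ∂μ) :
    0 < μ.real (Set.Ioi 0) ∧ 0 < hA μ p ∧ hA μ 1 = ∫ x, max x 0 ∂μ ∧
    (∀ q, 0 < q → q ≤ p → (μ.real (Set.Ioi 0))^(1-q/p) * (hA μ p)^(q/p) ≤ hA μ q) ∧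
    μ.real (Set.Ioi 0) * ((∫ x, max x 0 ∂μ)/μ.real (Set.Ioi 0))^p ≤ Gamma (p+1) * hA μ p := by
  have hp0 : 0 < p := by linarith
  have hρ : 0 < μ.real (Set.Ioi 0) := by
    by_contra hcon
    have h0 : μ.real (Set.Ioi 0) = 0 := le_antisymm (not_lt.1 hcon) measureReal_nonneg
    rw [measureReal_eq_zero_iff] at h0
    have : ∫ x, max x 0 ∂μ = 0 := by
      apply integral_eq_zero_of_ae
      have : ∀ᵐ x ∂μ, x ∉ Set.Ioi (0:ℝ) := measure_eq_zero_iff_ae_notMem.1 h0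
      filter_upwards [this] with x hx
      simpa using hx
    linarith
  have J := jensen_half μ p hp hi hρ hm
  rw [hA_eq μ p hp0 hi] at J
  have hGp : 0 < Gamma (p+1) := Gamma_pos_of_pos (by linarith)
  have hAp : 0 < hA μ p := by
    have : 0 < Gamma (p+1) * hA μ p := lt_of_lt_of_le (by positivity) J
    exact (pos_iff_pos_of_mul_pos this).1 hGp
  refine ⟨hρ, hAp, ?_, ?_, J⟩
  · have := hA_eq μ 1 one_pos (int_le μ p 1 one_pos hp hi)
    rw [show (1:ℝ)+1 = 2 by norm_num, Real.Gamma_two] at this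
    simpa using this.symm
  · intro q hq hqp
    refine moment_lc (fun x => μ.real (Set.Ioi x)) h.lcTail hρ p q hq hqp
      (layer μ p hp0 (int_max μ p hp0 hi)).1
      (layer μ q hq (int_max μ q hq (int_le μ p q hq hqp hi))).1 ?_
    have := hAp
    unfold hA at this
    exact (div_pos_iff_of_pos_right (Gamma_pos_of_pos hp0)).1 this

lemma neg_tail (μ : Measure ℝ) [IsProbabilityMeasure μ] [NullSingletonClass μ] (t : ℝ) :
    (μ.map (fun x => -x)).real (Set.Ioi t) = 1 - μ.real (Set.Ioi (-t)) := by
  rw [map_measureReal_apply measurable_neg measurableSet_Ioi]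
  have e : (fun x : ℝ => -x) ⁻¹' Set.Ioi t = Set.Iio (-t) := by
    ext x; simp [lt_neg]
  rw [e, measureReal_congr (Iio_ae_eq_Iic (μ := μ) (a := -t)), ← Set.compl_Ioi,
    probReal_compl_eq_one_sub measurableSet_Ioi]

lemma neg_mean (μ : Measure ℝ) (g : ℝ → ℝ) (hg : Measurable g) :
    ∫ x, g x ∂(μ.map (fun x => -x)) = ∫ x, g (-x) ∂μ :=
  integral_map measurable_neg.aemeasurable hg.aestronglyMeasurable

lemma half_split (μ : Measure ℝ) (s : ℝ) (hs : 0 < s)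
    (hi : Integrable (fun x : ℝ => |x|^s) μ) :
    ∫ x, |x|^s ∂μ = ∫ x, (max x 0)^s ∂μ + ∫ x, (max x 0)^s ∂(μ.map (fun x => -x)) := by
  have hi' : Integrable (fun x : ℝ => (max (-x) 0)^s) μ := by
    refine Integrable.mono' hi ?_ ?_
    · exact (by fun_prop : Measurable (fun x : ℝ => (max (-x) 0)^s)).aestronglyMeasurable
    · filter_upwards with x
      rw [Real.norm_of_nonneg (Real.rpow_nonneg (le_max_right _ _) _)]
      exact Real.rpow_le_rpow (le_max_right _ _) (max_le (neg_le_abs x) (abs_nonneg x)) hs.le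
  rw [neg_mean μ (fun x => (max x 0)^s) (by fun_prop), ← integral_add (int_max μ s hs hi) hi']
  congr 1
  ext x
  rcases le_total 0 x with h | h
  · rw [abs_of_nonneg h, max_eq_left h, max_eq_right (by linarith), Real.zero_rpow hs.ne', add_zero]
  · rw [abs_of_nonpos h, max_eq_right h, max_eq_left (by linarith), Real.zero_rpow hs.ne', zero_add]

lemma half_grunbaum (μ ν : Measure ℝ) [IsProbabilityMeasure μ] [IsProbabilityMeasure ν]
    (f : ℝ → ℝ) (h : DensLC μ f)
    (i1 : Integrable (fun x : ℝ => |x|^(1:ℝ)) μ) (i2 : Integrable (fun x : ℝ => |x|^(1:ℝ)) ν)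
    (hm : 0 < ∫ x, max x 0 ∂μ) (he : ∫ x, max x 0 ∂μ = ∫ x, max x 0 ∂ν)
    (ht : ∀ t, ν.real (Set.Ioi t) = 1 - μ.real (Set.Ioi (-t))) :
    exp (-1) ≤ μ.real (Set.Ioi 0) := by
  have l1 := layer μ 1 one_pos (int_max μ 1 one_pos i1)
  have l2 := layer ν 1 one_pos (int_max ν 1 one_pos i2)
  simp only [sub_self, Real.rpow_zero, Real.rpow_one, one_mul] at l1 l2
  refine grunbaum (fun x => μ.real (Set.Ioi x)) (fun x => ν.real (Set.Ioi x)) h.lcTail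
    (half μ f h 1 le_rfl i1 hm).1 measureReal_le_one l1.1 l2.1 ?_ ?_
    (fun t _ => measureReal_nonneg) (fun t _ => ht t)
  · rw [← l1.2]; exact hm
  · rw [← l1.2, ← l2.2]; exact he

lemma interval_step (μ : Measure ℝ) [IsProbabilityMeasure μ] (f : ℝ → ℝ) (h : DensLC μ f)
    (hmean : ∫ x, x ∂μ = 0) (p q k : ℝ) (hq : 1 ≤ q) (hpq : q ≤ p)
    (hi : Integrable (fun x : ℝ => |x|^p) μ)
    (hg : (gv p + k)/p ≤ (gv q + k)/q)
    (hk : (∀ a w : ℝ, exp (-1) ≤ a → exp (-1) ≤ 1 - a → 0 < w → w < 1 →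
        w*log (w/a) + (1-w)*log ((1-w)/(1-a)) ≤ -k) ∨
      ∃ P n : ℕ, p ≤ P ∧ (P.factorial : ℝ) * (1.71829)^(P-1) ≤ n ∧ KLb ((n:ℝ)/(n+1)) ≤ -k) :
    (∫ x, |x|^p ∂μ)^(1/p) ≤ (p/q) * (∫ x, |x|^q ∂μ)^(1/q) := by
  have hp : 1 ≤ p := hq.trans hpq
  have hp0 : 0 < p := by linarith
  have hq0 : 0 < q := by linarith
  set ν := μ.map (fun x => -x) with hν
  have : IsProbabilityMeasure ν := Measure.isProbabilityMeasure_map measurable_neg.aemeasurable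
  have h' : DensLC ν (fun x => f (-x)) := h.neg
  have := h.noAtoms
  have trans : ∀ s : ℝ, Integrable (fun x : ℝ => |x|^s) μ → Integrable (fun x : ℝ => |x|^s) ν := by
    intro s hs
    rw [hν, integrable_map_measure
      (by fun_prop : Measurable (fun x : ℝ => |x|^s)).aestronglyMeasurable measurable_neg.aemeasurable]
    refine hs.congr (Filter.Eventually.of_forall fun x => ?_)
    simp
  have i1 := int_le μ p 1 one_pos hp hi
  have iq := int_le μ p q hq0 hpq hi
  have j1 : Integrable (fun x : ℝ => max x 0) μ := by
    simpa using int_max μ 1 one_pos i1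
  have j0 : Integrable (fun x : ℝ => x) μ := by
    have : Integrable (fun x : ℝ => |x|) μ := by simpa using i1
    exact (integrable_norm_iff (by fun_prop)).1 (by simpa using this)
  have he : ∫ x, max x 0 ∂μ = ∫ x, max x 0 ∂ν := by
    rw [hν, neg_mean μ (fun x => max x 0) (by fun_prop)]
    have : ∀ x : ℝ, max (-x) 0 = max x 0 - x := by
      intro x
      rcases le_total 0 x with h | h
      · rw [max_eq_left h, max_eq_right (by linarith)]; ring
      · rw [max_eq_right h, max_eq_left (by linarith)]; ring
    simp only [this]
    rw [integral_sub j1 j0, hmean, sub_zero]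
  have hm : 0 < ∫ x, max x 0 ∂μ := by
    refine lt_of_le_of_ne (integral_nonneg fun x => le_max_right _ _) fun h0 => ?_
    have hs := half_split μ 1 one_pos i1
    simp only [Real.rpow_one] at hs i1
    rw [← he, ← h0, add_zero] at hs
    rw [integral_eq_zero_iff_of_nonneg (fun x => abs_nonneg x) i1] at hs
    have hz : ∀ᵐ x ∂μ, x ∈ ({0} : Set ℝ) := by
      filter_upwards [hs] with x hx
      simpa using hx
    have h2 := (mem_ae_iff_prob_eq_one (measurableSet_singleton (0:ℝ))).1 hz
    rw [measure_singleton] at h2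
    exact zero_ne_one h2
  have hm' : 0 < ∫ x, max x 0 ∂ν := he ▸ hm
  have t1 : ∀ t, ν.real (Set.Ioi t) = 1 - μ.real (Set.Ioi (-t)) := neg_tail μ
  have t2 : ∀ t, μ.real (Set.Ioi t) = 1 - ν.real (Set.Ioi (-t)) := by
    intro t; rw [t1, neg_neg]; ring
  have g1 := half_grunbaum μ ν f h i1 (trans 1 i1) hm he t1
  have g2 := half_grunbaum ν μ _ h' (trans 1 i1) i1 hm' he.symm t2
  obtain ⟨a0, Ap0, A1, Alc, AJ⟩ := half μ f h p hp hi hm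
  obtain ⟨b0, Bp0, B1, Blc, BJ⟩ := half ν _ h' p hp (trans p hi) hm'
  have ab : ν.real (Set.Ioi 0) = 1 - μ.real (Set.Ioi 0) := by simpa using t1 0
  rw [half_split μ p hp0 hi, half_split μ q hq0 iq, ← hν, hA_eq μ p hp0 hi, hA_eq ν p hp0 (trans p hi),
    hA_eq μ q hq0 iq, hA_eq ν q hq0 (trans q iq), ← mul_add, ← mul_add]
  refine core_final _ _ _ _ _ _ p q k a0 b0 Ap0 Bp0 hq0 hpq (Alc q hq0 hpq) (Blc q hq0 hpq) ?_ hg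
  rw [ab]
  rcases hk with hk | ⟨P, n, hP, hn, hk⟩
  · refine hk _ _ g1 (ab ▸ g2) (by positivity) ?_
    rw [div_lt_one (by positivity)]; linarith
  · have A1' := Alc 1 one_pos hp
    have B1' := Blc 1 one_pos hp
    rw [A1] at A1'
    rw [B1, ← he] at B1'
    rw [← he] at BJ
    have r1 := core_ratio _ _ _ _ _ p P n g1 g2 (by rw [ab]; ring) hm Ap0 hp hP A1' BJ hn
    have r2 := core_ratio _ _ _ _ _ p P n g2 g1 (by rw [ab]; ring) hm Bp0 hp hP B1' AJ hn
    obtain ⟨w1, w2⟩ := w_bounds _ _ n Ap0 Bp0 r1 r2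
    refine le_trans (KL_bound _ _ ((n:ℝ)/(n+1)) g1 (ab ▸ g2) ?_ w1 w2) hk
    rw [div_lt_one (by positivity)]; linarith

lemma dens_case (μ : Measure ℝ) [IsProbabilityMeasure μ] (f : ℝ → ℝ) (h : DensLC μ f)
    (hmean : ∫ x, x ∂μ = 0) (p q : ℝ) (hq : 1 ≤ q) (hpq : q ≤ p)
    (hi : Integrable (fun x : ℝ => |x|^p) μ) :
    (∫ x, |x|^p ∂μ)^(1/p) ≤ (p/q) * (∫ x, |x|^q ∂μ)^(1/q) := by
  have s1 : ∀ p q : ℝ, 1 ≤ q → q ≤ p → p ≤ 2 → Integrable (fun x : ℝ => |x|^p) μ →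
      (∫ x, |x|^p ∂μ)^(1/p) ≤ (p/q) * (∫ x, |x|^q ∂μ)^(1/q) := by
    intro p q hq hpq hp hi
    refine interval_step μ f h hmean p q _ hq hpq hi
      (gv_mono _ (1/2) 1 q p (by norm_num) (by norm_num) hq hpq gv_cond1)
      (Or.inr ⟨2, 4, by exact_mod_cast hp, by norm_num [Nat.factorial], ?_⟩)
    convert KL_num1 using 2; norm_num
  have s2 : ∀ p q : ℝ, 2 ≤ q → q ≤ p → p ≤ 3 → Integrable (fun x : ℝ => |x|^p) μ →
      (∫ x, |x|^p ∂μ)^(1/p) ≤ (p/q) * (∫ x, |x|^q ∂μ)^(1/q) := by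
    intro p q hq hpq hp hi
    refine interval_step μ f h hmean p q _ (by linarith) hpq hi
      (gv_mono _ (3/2) 2 q p (by norm_num) (by norm_num) hq hpq gv_cond2)
      (Or.inr ⟨3, 18, by exact_mod_cast hp, by norm_num [Nat.factorial], ?_⟩)
    convert KL_num2 using 2; norm_num
  have s3 : ∀ p q : ℝ, 3 ≤ q → q ≤ p → p ≤ 4 → Integrable (fun x : ℝ => |x|^p) μ →
      (∫ x, |x|^p ∂μ)^(1/p) ≤ (p/q) * (∫ x, |x|^q ∂μ)^(1/q) := by
    intro p q hq hpq hp hi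
    refine interval_step μ f h hmean p q _ (by linarith) hpq hi
      (gv_mono _ (5/2) 3 q p (by norm_num) (by norm_num) hq hpq gv_cond3)
      (Or.inr ⟨4, 124, by exact_mod_cast hp, by norm_num [Nat.factorial], ?_⟩)
    convert KL_num3 using 2; norm_num
  have s4 : ∀ p q : ℝ, 4 ≤ q → q ≤ p → Integrable (fun x : ℝ => |x|^p) μ →
      (∫ x, |x|^p ∂μ)^(1/p) ≤ (p/q) * (∫ x, |x|^q ∂μ)^(1/q) := by
    intro p q hq hpq hi
    refine interval_step μ f h hmean p q (-1) (by linarith) hpq hi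
      (gv_mono _ 3 4 q p (by norm_num) (by norm_num) hq hpq gv_cond4)
      (Or.inl fun a w h1 h2 h3 h4 => ?_)
    rw [neg_neg]
    exact KL_le_one a w h1 h2 h3 h4
  have glue : ∀ p r q : ℝ, 0 < q → 0 < r → 0 < p →
      (∫ x, |x|^p ∂μ)^(1/p) ≤ (p/r) * (∫ x, |x|^r ∂μ)^(1/r) →
      (∫ x, |x|^r ∂μ)^(1/r) ≤ (r/q) * (∫ x, |x|^q ∂μ)^(1/q) →
      (∫ x, |x|^p ∂μ)^(1/p) ≤ (p/q) * (∫ x, |x|^q ∂μ)^(1/q) := by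
    intro p r q hq hr hp h1 h2
    calc (∫ x, |x|^p ∂μ)^(1/p) ≤ (p/r) * (∫ x, |x|^r ∂μ)^(1/r) := h1
      _ ≤ (p/r) * ((r/q) * (∫ x, |x|^q ∂μ)^(1/q)) := by gcongr
      _ = (p/q) * (∫ x, |x|^q ∂μ)^(1/q) := by field_simp
  have u3 : ∀ p q : ℝ, 3 ≤ q → q ≤ p → Integrable (fun x : ℝ => |x|^p) μ →
      (∫ x, |x|^p ∂μ)^(1/p) ≤ (p/q) * (∫ x, |x|^q ∂μ)^(1/q) := by
    intro p q hq hpq hi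
    rcases le_total 4 q with c | c
    · exact s4 p q c hpq hi
    rcases le_total p 4 with d | d
    · exact s3 p q hq hpq d hi
    exact glue p 4 q (by linarith) (by norm_num) (by linarith) (s4 p 4 le_rfl d hi)
      (s3 4 q hq c le_rfl (int_le μ p 4 (by norm_num) d hi))
  have u2 : ∀ p q : ℝ, 2 ≤ q → q ≤ p → Integrable (fun x : ℝ => |x|^p) μ →
      (∫ x, |x|^p ∂μ)^(1/p) ≤ (p/q) * (∫ x, |x|^q ∂μ)^(1/q) := by
    intro p q hq hpq hi
    rcases le_total 3 q with c | c
    · exact u3 p q c hpq hi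
    rcases le_total p 3 with d | d
    · exact s2 p q hq hpq d hi
    exact glue p 3 q (by linarith) (by norm_num) (by linarith) (u3 p 3 le_rfl d hi)
      (s2 3 q hq c le_rfl (int_le μ p 3 (by norm_num) d hi))
  rcases le_total 2 q with c | c
  · exact u2 p q c hpq hi
  rcases le_total p 2 with d | d
  · exact s1 p q hq hpq d hi
  exact glue p 2 q (by linarith) (by norm_num) (by linarith) (u2 p 2 le_rfl d hi)
    (s1 2 q hq c le_rfl (int_le μ p 2 (by norm_num) d hi))

end

/-- For a mean zero log-concave real random variable `X` and `p ≥ q ≥ 1` one has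
`‖X‖_p ≤ (p/q) ‖X‖_q`. -/
theorem momNorm_le_of_logConcave_meanZero
    (μ : Measure ℝ) (hμ : IsLogConcave μ) (hmean : ∫ x, x ∂μ = 0)
    (p q : ℝ) (hq : 1 ≤ q) (hpq : q ≤ p) :
    momNorm μ p ≤ (p / q) * momNorm μ q := by
  obtain ⟨hprob, hμ⟩ := hμ
  rcases hμ with ⟨c, rfl⟩ | ⟨f, hf⟩
  · rw [integral_dirac] at hmean
    subst hmean
    have hp : p ≠ 0 := by linarith
    have hq' : q ≠ 0 := by linarith
    simp [momNorm, integral_dirac, Real.zero_rpow, hp, hq']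
  · by_cases hi : Integrable (fun x : ℝ => |x| ^ p) μ
    · exact dens_case μ f hf hmean p q hq hpq hi
    · have hp : 1 / p ≠ 0 := by
        have : 0 < p := by linarith
        positivity
      unfold momNorm
      rw [integral_undef hi, Real.zero_rpow hp]
      have hp0 : 0 ≤ p := by linarith
      have hq0 : 0 ≤ q := by linarith
      exact mul_nonneg (div_nonneg hp0 hq0)
        (Real.rpow_nonneg (integral_nonneg fun x => Real.rpow_nonneg (abs_nonneg x) _) _)
end

section
/- Let X be any log-concave real random variable and let p, q be real numbers with p > q ≥ 2. Then ‖X‖_p ≤ C₀·(p/q)·‖X‖_q, where C₀ = e^{W(1/e)} and W(1/e) is the unique positive real number w satisfying w·e^w = 1/e (so C₀ = 1/(e·W(1/e)) ≈ 1.3211). -/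
open MeasureTheory

open Set

theorem hasDeriv_logGamma {x : ℝ} (hx : 0 < x) : DifferentiableAt ℝ (Real.log ∘ Real.Gamma) x := by
  refine DifferentiableAt.comp x (Real.differentiableAt_log (Real.Gamma_pos_of_pos hx).ne') ?_
  refine Real.differentiableAt_Gamma fun m => ?_
  have : (0 : ℝ) ≤ m := Nat.cast_nonneg m
  linarith

theorem logGamma_succ {x : ℝ} (hx : 0 < x) :
    Real.log (Real.Gamma (x + 1)) = Real.log x + Real.log (Real.Gamma x) := by
  rw [Real.Gamma_add_one hx.ne', Real.log_mul hx.ne' (Real.Gamma_pos_of_pos hx).ne']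

theorem deriv_logGamma_le {x : ℝ} (hx : 0 < x) :
    deriv (Real.log ∘ Real.Gamma) x ≤ Real.log x := by
  have h := Real.convexOn_log_Gamma.deriv_le_slope (x := x) (y := x + 1) hx
    (by simp only [mem_Ioi]; linarith) (by linarith) (hasDeriv_logGamma hx)
  rw [slope_def_field] at h
  simp only [Function.comp, logGamma_succ hx] at h
  simpa using h

theorem le_deriv_logGamma {x : ℝ} (hx : 0 < x) :
    Real.log x ≤ deriv (Real.log ∘ Real.Gamma) (x + 1) := by
  have h := Real.convexOn_log_Gamma.slope_le_deriv (x := x) (y := x + 1) hx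
    (by simp only [mem_Ioi]; linarith) (by linarith) (hasDeriv_logGamma (by linarith))
  rw [slope_def_field] at h
  simp only [Function.comp, logGamma_succ hx] at h
  simpa using h

theorem logGamma_upper {p q : ℝ} (hq : 0 < q) (hpq : q ≤ p) :
    Real.log (Real.Gamma p) - Real.log (Real.Gamma q) ≤
      (p * Real.log p - p) - (q * Real.log q - q) := by
  have key : AntitoneOn (fun x => (Real.log ∘ Real.Gamma) x - (x * Real.log x - x)) (Ioi 0) := by
    have hd : ∀ x ∈ Ioi (0:ℝ), HasDerivAt
        (fun x => (Real.log ∘ Real.Gamma) x - (x * Real.log x - x))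
        (deriv (Real.log ∘ Real.Gamma) x - Real.log x) x := by
      intro x hx
      have := ((hasDeriv_logGamma hx).hasDerivAt).sub
        ((Real.hasDerivAt_mul_log (ne_of_gt hx)).sub (hasDerivAt_id x))
      exact this.congr_deriv (by ring)
    refine antitoneOn_of_deriv_nonpos (convex_Ioi 0)
      (fun x hx => (hd x hx).continuousAt.continuousWithinAt) ?_ ?_
    · rw [interior_Ioi]; exact fun x hx => (hd x hx).differentiableAt.differentiableWithinAt
    · rw [interior_Ioi]; intro x hx
      rw [(hd x hx).deriv]; linarith [deriv_logGamma_le hx]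
  have := key (mem_Ioi.2 hq) (mem_Ioi.2 (hq.trans_le hpq)) hpq
  simp only [Function.comp] at this
  linarith

theorem logGamma_lower {q : ℝ} (hq : 2 ≤ q) :
    2 - Real.log 2 + q * Real.log q - q ≤ Real.log (Real.Gamma (q + 1)) := by
  have key : MonotoneOn (fun x => (Real.log ∘ Real.Gamma) (x + 1) - (x * Real.log x - x)) (Ioi 0) := by
    have hd : ∀ x ∈ Ioi (0:ℝ), HasDerivAt
        (fun x => (Real.log ∘ Real.Gamma) (x + 1) - (x * Real.log x - x))
        (deriv (Real.log ∘ Real.Gamma) (x + 1) - Real.log x) x := by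
      intro x hx
      have hx' : 0 < x + 1 := by have := mem_Ioi.1 hx; linarith
      have := ((hasDeriv_logGamma hx').hasDerivAt.comp_add_const x 1).sub
        ((Real.hasDerivAt_mul_log (ne_of_gt hx)).sub (hasDerivAt_id x))
      exact this.congr_deriv (by ring)
    refine monotoneOn_of_deriv_nonneg (convex_Ioi 0)
      (fun x hx => (hd x hx).continuousAt.continuousWithinAt) ?_ ?_
    · rw [interior_Ioi]; exact fun x hx => (hd x hx).differentiableAt.differentiableWithinAt
    · rw [interior_Ioi]; intro x hx
      rw [(hd x hx).deriv]; linarith [le_deriv_logGamma hx]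
  have := key (mem_Ioi.2 (by norm_num : (0:ℝ) < 2)) (mem_Ioi.2 (by linarith)) hq
  simp only [Function.comp] at this
  have h3 : Real.Gamma (2 + 1) = 2 := by
    rw [Real.Gamma_add_one (by norm_num), Real.Gamma_two]; norm_num
  rw [h3] at this
  linarith

/-- The constant `κ = w q e^{w/q}` satisfies `e^κ κ^q ≤ Γ(q+1)`. -/
theorem kappa_bound (w : ℝ) (hw : 0 < w) (hwe : w * Real.exp w = Real.exp (-1))
    (q : ℝ) (hq : 2 ≤ q) :
    Real.exp (w * q * Real.exp (w / q)) * (w * q * Real.exp (w / q)) ^ q ≤ Real.Gamma (q + 1) := by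
  have hq0 : 0 < q := by linarith
  have hlw : Real.log w = -1 - w := by
    have := congrArg Real.log hwe
    rw [Real.log_mul hw.ne' (Real.exp_pos _).ne', Real.log_exp, Real.log_exp] at this
    linarith
  have hw2 : w ≤ 1 / 2 := by
    have h1 : w ≤ w * Real.exp w := by nlinarith [Real.add_one_le_exp w]
    have h2 : Real.exp (-1) ≤ 1 / 2 := by
      rw [Real.exp_neg, inv_le_comm₀ (Real.exp_pos _) (by norm_num)]
      have := Real.add_one_le_exp 1
      norm_num at this ⊢; linarith
    linarith
  have hu : w / q ≤ 1 / 2 := by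
    rw [div_le_iff₀ hq0]; linarith
  have hu0 : 0 < w / q := by positivity
  have hexp : Real.exp (w / q) ≤ 1 + 2 * (w / q) := by
    have h := Real.add_one_le_exp (-(w / q))
    have h2 : Real.exp (w / q) * Real.exp (-(w / q)) = 1 := by rw [← Real.exp_add]; simp
    have := Real.exp_pos (w / q)
    nlinarith
  have hk : 0 < w * q * Real.exp (w / q) := by positivity
  have hkle : w * q * Real.exp (w / q) ≤ w * q + 2 * w ^ 2 := by
    have : w * q * Real.exp (w / q) ≤ w * q * (1 + 2 * (w / q)) := by gcongr
    refine this.trans (le_of_eq ?_)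
    field_simp
  rw [← Real.log_le_log_iff (by positivity) (Real.Gamma_pos_of_pos (by linarith)),
    Real.log_mul (Real.exp_pos _).ne' (by positivity), Real.log_exp, Real.log_rpow hk,
    Real.log_mul (by positivity) (Real.exp_pos _).ne', Real.log_exp, Real.log_mul hw.ne' hq0.ne', hlw]
  have h := logGamma_lower hq
  have h2 : Real.log 2 ≤ 1 := by
    have := Real.log_le_sub_one_of_pos (show (0:ℝ) < 2 by norm_num); linarith
  have h3 : q * (-1 - w + Real.log q + w / q) = -q - w * q + q * Real.log q + w := by
    field_simp
  rw [h3]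
  nlinarith

theorem final_numeric (w : ℝ) (hw : 0 < w) (hwe : w * Real.exp w = Real.exp (-1))
    (p q : ℝ) (hq : 2 ≤ q) (hpq : q < p) :
    Real.Gamma (p + 1) / Real.Gamma (q + 1) ≤
      (Real.exp w * (p / q)) ^ p * (w * q * Real.exp (w / q)) ^ (p - q) := by
  have hq0 : 0 < q := by linarith
  have hp0 : 0 < p := by linarith
  have hlw : Real.log w = -1 - w := by
    have := congrArg Real.log hwe
    rw [Real.log_mul hw.ne' (Real.exp_pos _).ne', Real.log_exp, Real.log_exp] at this
    linarith
  have G1 := Real.Gamma_pos_of_pos (show 0 < p + 1 by linarith)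
  have G2 := Real.Gamma_pos_of_pos (show 0 < q + 1 by linarith)
  rw [← Real.log_le_log_iff (by positivity) (by positivity),
    Real.log_div G1.ne' G2.ne', logGamma_succ hp0, logGamma_succ hq0,
    Real.log_mul (by positivity) (by positivity), Real.log_rpow (by positivity),
    Real.log_rpow (by positivity), Real.log_mul (by positivity) (by positivity),
    Real.log_mul (by positivity) (by positivity), Real.log_mul (by positivity) (by positivity),
    Real.log_exp, Real.log_exp, Real.log_div hp0.ne' hq0.ne', hlw]
  have h := logGamma_upper hq0 hpq.le
  have h1 := Real.log_le_sub_one_of_pos (show 0 < w * (p / q) by positivity)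
  rw [Real.log_mul (by positivity) (by positivity), Real.log_div hp0.ne' hq0.ne', hlw] at h1
  have h3 : (p - q) * (w / q) = w * (p / q) - w := by field_simp
  have h4 : (p - q) * (-1 - w + Real.log q + w / q) =
    (p - q) * (-1 - w + Real.log q) + (w * (p / q) - w) := by rw [← h3]; ring
  rw [h4]
  nlinarith

theorem ae_eq_of_sign {f g u : ℝ → ℝ}
    (hint : IntegrableOn (fun x => u x * (f x - g x)) (Ioi 0))
    (h0 : ∫ x in Ioi (0:ℝ), u x * (f x - g x) = 0)
    (m : ℝ) (hu : ∀ x, 0 < x → x ≠ m → u x ≠ 0)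
    (hs : ∀ x, 0 < x → x ≠ m → 0 ≤ u x * (f x - g x)) :
    f =ᵐ[volume.restrict (Ioi 0)] g := by
  have hm : ∀ᵐ x ∂(volume.restrict (Ioi (0:ℝ))), x ≠ m :=
    ae_restrict_of_ae (Measure.ae_ne volume m)
  have hpos : ∀ᵐ x ∂(volume.restrict (Ioi (0:ℝ))), 0 < x := ae_restrict_mem measurableSet_Ioi
  have hnn : 0 ≤ᵐ[volume.restrict (Ioi (0:ℝ))] fun x => u x * (f x - g x) := by
    filter_upwards [hm, hpos] with x h1 h2 using hs x h2 h1
  have hz := (integral_eq_zero_iff_of_nonneg_ae hnn hint).1 h0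
  filter_upwards [hm, hpos, hz] with x h1 h2 h3
  have := (mul_eq_zero.1 h3).resolve_left (hu x h2 h1)
  linarith

theorem cvx3 {r x y z : ℝ} (hr : 1 ≤ r) (hx : 0 ≤ x) (hxy : x < y) (hyz : y < z) :
    (z - x) * y ^ r ≤ (z - y) * x ^ r + (y - x) * z ^ r := by
  have h := (convexOn_rpow hr).slope_mono_adjacent (x := x) (y := y) (z := z) hx
    (show (0:ℝ) ≤ z by linarith) hxy hyz
  rw [div_le_div_iff₀ (by linarith) (by linarith)] at h
  nlinarith

theorem compare_aux {f g : ℝ → ℝ} {p q : ℝ} (hq : 0 < q) (hpq : q < p)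
    (hS : ∀ x y z, x ≤ z → z ≤ y → g x ≤ f x → g y ≤ f y → g z ≤ f z)
    (i0 : IntegrableOn (fun x => f x - g x) (Ioi 0))
    (iq : IntegrableOn (fun x => x ^ q * (f x - g x)) (Ioi 0))
    (ip : IntegrableOn (fun x => x ^ p * (f x - g x)) (Ioi 0))
    (e0 : ∫ x in Ioi (0:ℝ), (f x - g x) = 0)
    (eq : ∫ x in Ioi (0:ℝ), x ^ q * (f x - g x) = 0) :
    f =ᵐ[volume.restrict (Ioi 0)] g ∨
      (∫ x in Ioi (0:ℝ), x ^ p * (f x - g x) ≤ 0 ∧ ∀ x ≤ 0, f x < g x) := by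
  by_cases hae : f =ᵐ[volume.restrict (Ioi 0)] g
  · exact Or.inl hae
  right
  have T0 : ∀ m : ℝ, ¬ ∀ x, 0 < x → x ≠ m → f x < g x := by
    intro m hs
    apply hae
    refine ae_eq_of_sign (u := fun _ => -1) (i0.const_mul (-1)) ?_ m (by simp) ?_
    · rw [integral_const_mul, e0, mul_zero]
    · intro x h1 h2; have := hs x h1 h2; linarith
  have T1 : ∀ m ε : ℝ, 0 ≤ m → ε ≠ 0 →
      ¬ ∀ x, 0 < x → x ≠ m → 0 ≤ (ε * (x ^ q - m ^ q)) * (f x - g x) := by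
    intro m ε hm hε hs
    apply hae
    have hfun : (fun x => (ε * (x ^ q - m ^ q)) * (f x - g x)) =
      fun x => ε * (x ^ q * (f x - g x)) - (ε * m ^ q) * (f x - g x) := by
      funext x; ring
    refine ae_eq_of_sign (u := fun x => ε * (x ^ q - m ^ q)) ?_ ?_ m ?_ hs
    · rw [hfun]; exact (iq.const_mul ε).sub (i0.const_mul _)
    · rw [hfun, integral_sub (iq.const_mul ε) (i0.const_mul _), integral_const_mul,
        integral_const_mul, e0, eq]; ring
    · intro x h1 h2 h3
      have h4 := sub_eq_zero.1 ((mul_eq_zero.1 h3).resolve_left hε)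
      exact h2 ((Real.rpow_left_inj h1.le hm hq.ne').1 h4)
  set S : Set ℝ := {x | 0 < x ∧ g x ≤ f x} with hSdef
  have hne : S.Nonempty := by
    by_contra h
    apply T0 0
    intro x hx _
    by_contra h2
    exact h ⟨x, hx, not_lt.1 h2⟩
  have hbb : BddBelow S := ⟨0, fun x hx => hx.1.le⟩
  set α := sInf S with hα
  have hα0 : 0 ≤ α := le_csInf hne fun x hx => hx.1.le
  have hltα : ∀ x, 0 < x → x < α → f x < g x := by
    intro x hx hxa
    by_contra h
    exact absurd (csInf_le hbb (show x ∈ S from ⟨hx, not_lt.1 h⟩)) (not_le.2 hxa)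
  have hba : BddAbove S := by
    by_contra hb
    apply T1 α 1 hα0 one_ne_zero
    intro x hx hxa
    rcases lt_or_gt_of_ne hxa with h | h
    · have h1 := hltα x hx h
      have h2 := Real.rpow_lt_rpow hx.le h hq
      nlinarith
    · obtain ⟨s, hs, hsx⟩ := exists_lt_of_csInf_lt hne h
      obtain ⟨t, ht, hxt⟩ := not_bddAbove_iff.1 hb x
      have h1 := hS s t x hsx.le hxt.le hs.2 ht.2
      have h2 := Real.rpow_lt_rpow hα0 h hq
      nlinarith
  set β := sSup S with hβ
  have hgtβ : ∀ x, 0 < x → β < x → f x < g x := by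
    intro x hx hxa
    by_contra h
    exact absurd (le_csSup hba (show x ∈ S from ⟨hx, not_lt.1 h⟩)) (not_le.2 hxa)
  have hβ0 : 0 ≤ β := by
    obtain ⟨s, hs⟩ := hne
    exact hs.1.le.trans (le_csSup hba hs)
  have hαβ : α < β := by
    obtain ⟨s, hs⟩ := hne
    refine lt_of_le_of_ne ((csInf_le hbb hs).trans (le_csSup hba hs)) fun h => ?_
    apply T0 α
    intro x hx hxa
    rcases lt_or_gt_of_ne hxa with h1 | h1
    · exact hltα x hx h1
    · exact hgtβ x hx (h ▸ h1)
  constructor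
  · set r := p / q with hr
    have hr1 : 1 ≤ r := by rw [hr, le_div_iff₀ hq]; linarith
    have hxr : ∀ x : ℝ, 0 ≤ x → (x ^ q) ^ r = x ^ p := by
      intro x hx
      rw [← Real.rpow_mul hx, hr, mul_div_cancel₀ _ hq.ne']
    set s := α ^ q
    set t := β ^ q
    have hst : s < t := Real.rpow_lt_rpow hα0 hαβ hq
    have hs0 : 0 ≤ s := Real.rpow_nonneg hα0 q
    have hfun : (fun x => ((t - s) * x ^ p - ((t - x ^ q) * s ^ r + (x ^ q - s) * t ^ r)) * (f x - g x)) =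
      fun x => ((t - s) * (x ^ p * (f x - g x)) - (t ^ r - s ^ r) * (x ^ q * (f x - g x)))
        - (t * s ^ r - s * t ^ r) * (f x - g x) := by funext x; ring
    have hle : ∫ x in Ioi (0:ℝ),
        ((t - s) * x ^ p - ((t - x ^ q) * s ^ r + (x ^ q - s) * t ^ r)) * (f x - g x) ≤ 0 := by
      apply integral_nonpos_of_ae
      filter_upwards [ae_restrict_of_ae (Measure.ae_ne volume α),
        ae_restrict_of_ae (Measure.ae_ne volume β), ae_restrict_mem measurableSet_Ioi] with x ha hb hx
      have hx : 0 < x := hx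
      simp only [Pi.zero_apply]
      rw [← hxr x hx.le]
      have hx0 : 0 ≤ x ^ q := Real.rpow_nonneg hx.le q
      rcases lt_or_gt_of_ne ha with h1 | h1
      · have h2 := cvx3 hr1 hx0 (Real.rpow_lt_rpow hx.le h1 hq) hst
        have h3 := hltα x hx h1
        apply mul_nonpos_of_nonneg_of_nonpos <;> linarith
      · rcases lt_or_gt_of_ne hb with h4 | h4
        · have h2 := cvx3 hr1 hs0 (Real.rpow_lt_rpow hα0 h1 hq) (Real.rpow_lt_rpow hx.le h4 hq)
          obtain ⟨y, hy, hyx⟩ := exists_lt_of_csInf_lt hne h1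
          obtain ⟨z, hz, hxz⟩ := exists_lt_of_lt_csSup hne h4
          have h3 := hS y z x hyx.le hxz.le hy.2 hz.2
          apply mul_nonpos_of_nonpos_of_nonneg <;> linarith
        · have h2 := cvx3 hr1 hs0 hst (Real.rpow_lt_rpow hβ0 h4 hq)
          have h3 := hgtβ x hx h4
          apply mul_nonpos_of_nonneg_of_nonpos <;> linarith
    have ipq : IntegrableOn (fun x => (t - s) * (x ^ p * (f x - g x)) -
        (t ^ r - s ^ r) * (x ^ q * (f x - g x))) (Ioi 0) := (ip.const_mul _).sub (iq.const_mul _)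
    rw [hfun, integral_sub ipq (i0.const_mul _),
      integral_sub (ip.const_mul _) (iq.const_mul _), integral_const_mul, integral_const_mul,
      integral_const_mul, e0, eq] at hle
    have : 0 < t - s := by linarith
    by_contra hc
    have := mul_pos this (not_le.1 hc)
    linarith
  · intro x0 hx0
    by_contra hc
    apply T1 β (-1) hβ0 (by norm_num)
    intro x hx hxb
    rcases lt_or_gt_of_ne hxb with h | h
    · obtain ⟨z, hz, hxz⟩ := exists_lt_of_lt_csSup hne h
      have h1 := hS x0 z x (hx0.trans hx.le) hxz.le (not_lt.1 hc) hz.2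
      have h2 := Real.rpow_lt_rpow hx.le h hq
      nlinarith
    · have h1 := hgtβ x hx h
      have h2 := Real.rpow_lt_rpow hβ0 h hq
      nlinarith

theorem logConcave_measurable {f : ℝ → ℝ} (hf0 : ∀ x, 0 ≤ f x)
    (hf : ∀ x y l : ℝ, 0 ≤ l → l ≤ 1 → f x ^ l * f y ^ (1 - l) ≤ f (l * x + (1 - l) * y)) :
    Measurable f := by
  refine measurable_of_Ici fun c => ?_
  rcases le_or_gt c 0 with hc | hc
  · have : f ⁻¹' Ici c = univ := by
      ext x; simpa using hc.trans (hf0 x)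
    rw [this]; exact MeasurableSet.univ
  · refine OrdConnected.measurableSet (Convex.ordConnected ?_)
    intro x hx y hy a b ha hb hab
    have hb' : b = 1 - a := by linarith
    subst hb'
    simp only [mem_preimage, mem_Ici, smul_eq_mul] at *
    refine le_trans ?_ (hf x y a ha (by linarith))
    calc c = c ^ a * c ^ (1 - a) := by rw [← Real.rpow_add hc]; simp
      _ ≤ _ := by
        have := hf0 x
        gcongr

theorem gexp_affine {C b : ℝ} (hC : 0 < C) (x y l : ℝ) :
    (C * Real.exp (-(x / b))) ^ l * (C * Real.exp (-(y / b))) ^ (1 - l) =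
      C * Real.exp (-((l * x + (1 - l) * y) / b)) := by
  rw [Real.mul_rpow hC.le (Real.exp_pos _).le, Real.mul_rpow hC.le (Real.exp_pos _).le,
    ← Real.exp_mul, ← Real.exp_mul]
  have h1 : C ^ l * C ^ (1 - l) = C := by rw [← Real.rpow_add hC]; simp
  calc _ = (C ^ l * C ^ (1 - l)) * (Real.exp (-(x / b) * l) * Real.exp (-(y / b) * (1 - l))) := by ring
    _ = _ := by rw [h1, ← Real.exp_add]; congr 2; ring

theorem exists_comb {x y z : ℝ} (h1 : x ≤ z) (h2 : z ≤ y) (h3 : x < y) :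
    ∃ l : ℝ, 0 ≤ l ∧ l ≤ 1 ∧ z = l * x + (1 - l) * y ∧ (z < y → 0 < l) := by
  have hd : 0 < y - x := by linarith
  refine ⟨(y - z) / (y - x), by apply div_nonneg <;> linarith, ?_, ?_, fun h => div_pos (by linarith) hd⟩
  · rw [div_le_one hd]; linarith
  · field_simp; ring

theorem exp_compare {f : ℝ → ℝ} (hf0 : ∀ x, 0 ≤ f x)
    (hf : ∀ x y l : ℝ, 0 ≤ l → l ≤ 1 → f x ^ l * f y ^ (1 - l) ≤ f (l * x + (1 - l) * y))
    {p q θ b : ℝ} (hq : 0 < q) (hpq : q < p) (hθ : 0 < θ) (hb : 0 < b)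
    (i0 : IntegrableOn f (Ioi 0))
    (iq : IntegrableOn (fun x => x ^ q * f x) (Ioi 0))
    (ip : IntegrableOn (fun x => x ^ p * f x) (Ioi 0))
    (e0 : ∫ x in Ioi (0:ℝ), f x = θ)
    (eq : ∫ x in Ioi (0:ℝ), x ^ q * f x = θ * Real.Gamma (q + 1) * b ^ q) :
    ∫ x in Ioi (0:ℝ), x ^ p * f x ≤ θ * Real.Gamma (p + 1) * b ^ p ∧
      ∀ x ≤ 0, f x ≤ θ / b * Real.exp (-(x / b)) := by
  set g : ℝ → ℝ := fun x => θ / b * Real.exp (-(x / b)) with hg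
  have hC : 0 < θ / b := by positivity
  have hgpos : ∀ x, 0 < g x := fun x => by positivity
  have jg : ∀ s : ℝ, 0 ≤ s → IntegrableOn (fun x => x ^ s * g x) (Ioi 0) := by
    intro s hs
    have h := integrableOn_rpow_mul_exp_neg_mul_rpow (p := 1) (s := s) (b := 1 / b)
      (by linarith) one_pos (by positivity)
    refine (h.const_mul (θ / b)).congr (Filter.Eventually.of_forall fun x => ?_)
    simp only [Real.rpow_one, hg]
    rw [show -(1 / b) * x = -(x / b) by ring]; ring
  have eg : ∀ s : ℝ, 0 ≤ s → ∫ x in Ioi (0:ℝ), x ^ s * g x = θ * Real.Gamma (s + 1) * b ^ s := by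
    intro s hs
    have h := Real.integral_rpow_mul_exp_neg_mul_Ioi (a := s + 1) (r := 1 / b)
      (by linarith) (by positivity)
    have h2 : ∫ x in Ioi (0:ℝ), x ^ s * g x =
        θ / b * ∫ t in Ioi (0:ℝ), t ^ (s + 1 - 1) * Real.exp (-(1 / b * t)) := by
      rw [← integral_const_mul]
      congr 1; funext x
      simp only [hg, add_sub_cancel_right]
      rw [show (1 / b) * x = (x / b) by ring]; ring
    rw [h2, h, one_div_one_div, Real.rpow_add hb, Real.rpow_one]
    field_simp
  have jg0 : IntegrableOn g (Ioi 0) := by simpa using jg 0 le_rfl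
  have eg0 : ∫ x in Ioi (0:ℝ), g x = θ := by simpa using eg 0 le_rfl
  have hS : ∀ x y z, x ≤ z → z ≤ y → g x ≤ f x → g y ≤ f y → g z ≤ f z := by
    intro x y z h1 h2 hx hy
    rcases eq_or_lt_of_le (h1.trans h2) with h3 | h3
    · have : z = x := by linarith
      rw [this]; exact hx
    · obtain ⟨l, hl0, hl1, rfl, -⟩ := exists_comb h1 h2 h3
      refine le_trans ?_ (hf x y l hl0 hl1)
      have := (gexp_affine (b := b) hC x y l).symm
      calc g (l * x + (1 - l) * y) = g x ^ l * g y ^ (1 - l) := this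
        _ ≤ _ := by
          have := hgpos x
          have := hgpos y
          have := hf0 x
          have := hf0 y
          gcongr
  have hd : ∀ s : ℝ, (fun x : ℝ => x ^ s * (f x - g x)) = fun x => x ^ s * f x - x ^ s * g x := by
    intro s; funext x; ring
  have hp : 0 < p := by linarith
  have H := compare_aux (f := f) (g := g) hq hpq hS (i0.sub jg0)
    (by rw [hd]; exact iq.sub (jg q hq.le)) (by rw [hd]; exact ip.sub (jg p hp.le))
    (by rw [integral_sub i0 jg0, e0, eg0, sub_self])
    (by rw [hd, integral_sub iq (jg q hq.le), eq, eg q hq.le, sub_self])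
  rcases H with hae | ⟨h1, h2⟩
  · constructor
    · rw [← eg p hp.le]
      apply le_of_eq
      apply integral_congr_ae
      filter_upwards [hae] with x hx
      rw [hx]
    · intro x0 hx0
      by_contra hc
      have hc : g x0 < f x0 := not_le.1 hc
      have hex : ∀ a : ℝ, 0 ≤ a → ∃ y, a < y ∧ y < a + 1 ∧ f y = g y := by
        intro a ha
        have h1 : ∀ᵐ x ∂(volume.restrict (Ioo a (a + 1))), f x = g x :=
          ae_restrict_of_ae_restrict_of_subset (fun x hx => lt_of_le_of_lt ha hx.1) hae
        have h2 : ∀ᵐ x ∂(volume.restrict (Ioo a (a + 1))), x ∈ Ioo a (a + 1) :=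
          ae_restrict_mem measurableSet_Ioo
        have : (ae (volume.restrict (Ioo a (a + 1)))).NeBot := by
          rw [ae_restrict_neBot]; simp
        obtain ⟨y, hy1, hy2⟩ := (h1.and h2).exists
        exact ⟨y, hy2.1, hy2.2, hy1⟩
      obtain ⟨y, hy0, hy1, hy⟩ := hex 0 le_rfl
      obtain ⟨z, hz0, hz1, hz⟩ := hex 1 zero_le_one
      obtain ⟨l, hl0, hl1, hl, hl'⟩ := exists_comb (x := x0) (y := z) (z := y)
        (by linarith) (by linarith) (by linarith)
      have h3 := hf x0 z l hl0 hl1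
      rw [← hl, hy, hz] at h3
      have h4 : g y = g x0 ^ l * g z ^ (1 - l) := by
        rw [hl]; exact (gexp_affine (b := b) hC x0 z l).symm
      have h5 : g x0 ^ l * g z ^ (1 - l) < f x0 ^ l * g z ^ (1 - l) := by
        apply mul_lt_mul_of_pos_right _ (Real.rpow_pos_of_pos (hgpos z) _)
        exact Real.rpow_lt_rpow (hgpos x0).le hc (hl' (by linarith))
      linarith
  · refine ⟨?_, fun x hx => (h2 x hx).le⟩
    rw [hd, integral_sub ip (jg p hp.le), eg p hp.le] at h1
    linarith

theorem half_bound {f : ℝ → ℝ} (hf0 : ∀ x, 0 ≤ f x)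
    (hf : ∀ x y l : ℝ, 0 ≤ l → l ≤ 1 → f x ^ l * f y ^ (1 - l) ≤ f (l * x + (1 - l) * y))
    {p q κ N : ℝ} (hq : 0 < q) (hpq : q < p) (hκ : 0 < κ)
    (hκG : Real.exp κ * κ ^ q ≤ Real.Gamma (q + 1))
    (i0 : Integrable f) (e0 : ∫ x, f x = 1)
    (iq : Integrable (fun x => |x| ^ q * f x))
    (ip : Integrable (fun x => |x| ^ p * f x))
    (hN0 : 0 ≤ N) (hN : N ^ q = ∫ x, |x| ^ q * f x) :
    ∫ x in Ioi (0:ℝ), |x| ^ p * f x ≤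
      Real.Gamma (p + 1) / Real.Gamma (q + 1) * (N / κ) ^ (p - q) *
        ∫ x in Ioi (0:ℝ), |x| ^ q * f x := by
  have hΓ : 0 < Real.Gamma (q + 1) := Real.Gamma_pos_of_pos (by linarith)
  have hΓp : 0 < Real.Gamma (p + 1) := Real.Gamma_pos_of_pos (by linarith)
  set A := ∫ x in Ioi (0:ℝ), |x| ^ q * f x with hA
  set θ := ∫ x in Ioi (0:ℝ), f x with hθdef
  have nnq : ∀ x : ℝ, 0 ≤ |x| ^ q * f x := fun x => mul_nonneg (by positivity) (hf0 x)
  have hA0 : 0 ≤ A := integral_nonneg nnq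
  have hθ0 : 0 ≤ θ := integral_nonneg hf0
  have hpos : ∀ᵐ x ∂(volume.restrict (Ioi (0:ℝ))), 0 < x := ae_restrict_mem measurableSet_Ioi
  rcases eq_or_lt_of_le hA0 with hA1 | hA1
  · have h1 := (integral_eq_zero_iff_of_nonneg nnq iq.integrableOn).1 hA1.symm
    have h2 : ∫ x in Ioi (0:ℝ), |x| ^ p * f x = 0 := by
      apply integral_eq_zero_of_ae
      filter_upwards [h1, hpos] with x h3 h4
      have h5 : f x = 0 := by
        have := mul_eq_zero.1 h3
        exact this.resolve_left (by positivity)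
      simp [h5]
    rw [h2, ← hA1, mul_zero]
  · have hθ : 0 < θ := by
      rcases eq_or_lt_of_le hθ0 with h | h
      · exfalso
        have h1 := (integral_eq_zero_iff_of_nonneg hf0 i0.integrableOn).1 h.symm
        have h2 : A = 0 := by
          apply integral_eq_zero_of_ae
          filter_upwards [h1] with x h3
          rw [h3]; simp
        linarith
      · exact h
    set b := (A / (θ * Real.Gamma (q + 1))) ^ (1 / q) with hbdef
    have hb : 0 < b := by positivity
    have hbq : b ^ q = A / (θ * Real.Gamma (q + 1)) := by
      rw [hbdef, ← Real.rpow_mul (by positivity), one_div, inv_mul_cancel₀ hq.ne', Real.rpow_one]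
    have hAb : A = θ * Real.Gamma (q + 1) * b ^ q := by
      rw [hbq]; field_simp
    have habs : ∀ s : ℝ, ∀ᵐ x ∂(volume.restrict (Ioi (0:ℝ))), |x| ^ s * f x = x ^ s * f x := by
      intro s
      filter_upwards [hpos] with x hx
      rw [abs_of_pos hx]
    obtain ⟨H1, H2⟩ := exp_compare hf0 hf hq hpq hθ hb i0.integrableOn
      (iq.integrableOn.congr (habs q)) (ip.integrableOn.congr (habs p)) rfl
      (by rw [← hAb, hA]; exact (integral_congr_ae (habs q)).symm)
    rw [← integral_congr_ae (habs p)] at H1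
    have hc : 0 < b * κ := by positivity
    have hcN : b * κ ≤ N := by
      rw [← Real.rpow_le_rpow_iff hc.le hN0 hq, hN]
      have s1 := intervalIntegral.integral_Iic_add_Ioi (b := 0) iq.integrableOn iq.integrableOn
      have s2 := intervalIntegral.integral_Iic_add_Ioi (b := -(b * κ)) i0.integrableOn i0.integrableOn
      have s3 : ∫ x in Ioi (-(b * κ)), f x = (∫ x in Ioc (-(b * κ)) 0, f x) + θ := by
        rw [← Ioc_union_Ioi_eq_Ioi (show -(b * κ) ≤ 0 by linarith), setIntegral_union
          (Ioc_disjoint_Ioi le_rfl) measurableSet_Ioi i0.integrableOn i0.integrableOn]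
      have s4 : ∫ x in Ioc (-(b * κ)) 0, f x ≤ θ * (Real.exp κ - 1) := by
        have hcont : Continuous fun x : ℝ => θ / b * Real.exp (-(x / b)) := by fun_prop
        have t1 : ∫ x in Ioc (-(b * κ)) 0, f x ≤
            ∫ x in Ioc (-(b * κ)) 0, θ / b * Real.exp (-(x / b)) := by
          refine setIntegral_mono_on i0.integrableOn
            (hcont.integrableOn_Ioc) measurableSet_Ioc fun x hx => H2 x hx.2
        refine t1.trans (le_of_eq ?_)
        rw [← intervalIntegral.integral_of_le (by linarith)]
        rw [intervalIntegral.integral_eq_sub_of_hasDerivAt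
          (f := fun x => -θ * Real.exp (-(x / b))) _ (hcont.intervalIntegrable _ _)]
        · simp only [zero_div, neg_zero, Real.exp_zero, neg_div, neg_neg]
          rw [mul_div_cancel_left₀ _ hb.ne']; ring
        · intro x _
          have := ((((hasDerivAt_id x).div_const b).neg).exp).const_mul (-θ)
          refine this.congr_deriv ?_
          simp only [id, Pi.neg_apply]; ring
      have s5 : (b * κ) ^ q * ∫ x in Iic (-(b * κ)), f x ≤ ∫ x in Iic (0:ℝ), |x| ^ q * f x := by
        rw [← integral_const_mul]
        refine le_trans ?_ (setIntegral_mono_set iq.integrableOn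
          (Filter.Eventually.of_forall nnq)
          (Filter.Eventually.of_forall (Iic_subset_Iic.2 (show -(b * κ) ≤ 0 by linarith))))
        refine setIntegral_mono_on (i0.integrableOn.const_mul _) iq.integrableOn measurableSet_Iic ?_
        intro x hx
        have hx : x ≤ -(b * κ) := hx
        have h1 : b * κ ≤ |x| := by rw [abs_of_neg (by linarith)]; linarith
        exact mul_le_mul_of_nonneg_right (Real.rpow_le_rpow hc.le h1 hq.le) (hf0 x)
      have s6 : θ * Real.exp κ * (b * κ) ^ q ≤ A := by
        rw [hAb, Real.mul_rpow hb.le hκ.le]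
        have : 0 ≤ θ * b ^ q := by positivity
        nlinarith
      have hcq : 0 < (b * κ) ^ q := by positivity
      have s7 : 1 - θ * Real.exp κ ≤ ∫ x in Iic (-(b * κ)), f x := by
        rw [e0, s3] at s2; nlinarith
      have s8 := mul_le_mul_of_nonneg_left s7 hcq.le
      rw [← s1]
      nlinarith
    have hbN : b ≤ N / κ := by rwa [le_div_iff₀ hκ]
    have hb2 : b ^ (p - q) ≤ (N / κ) ^ (p - q) := Real.rpow_le_rpow hb.le hbN (by linarith)
    calc _ ≤ θ * Real.Gamma (p + 1) * b ^ p := H1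
      _ = Real.Gamma (p + 1) / Real.Gamma (q + 1) * b ^ (p - q) * A := by
        rw [hAb, show b ^ p = b ^ (p - q) * b ^ q by rw [← Real.rpow_add hb]; congr 1; ring]
        field_simp
      _ ≤ _ := by gcongr

/-- For any log-concave real random variable `X` and any `p > q ≥ 2` one has
`‖X‖_p ≤ C₀ (p/q) ‖X‖_q`, where `C₀ = e^{W(1/e)}` and `W(1/e)` is the unique
positive real `w` with `w e^w = 1/e`. -/
theorem momNorm_le_logConcave_bestConst
    (w : ℝ) (hw : 0 < w) (hwe : w * Real.exp w = Real.exp (-1))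
    (μ : Measure ℝ) (hμ : IsLogConcave μ)
    (p q : ℝ) (hq : 2 ≤ q) (hpq : q < p) :
    momNorm μ p ≤ Real.exp w * (p / q) * momNorm μ q := by
  obtain ⟨hprob, hμ⟩ := hμ
  have hq0 : 0 < q := by linarith
  have hp0 : 0 < p := by linarith
  have hew : 1 ≤ Real.exp w := Real.one_le_exp hw.le
  have hratio : 1 ≤ p / q := by rw [le_div_iff₀ hq0]; linarith
  have hnn : ∀ s, 0 ≤ momNorm μ s := fun s =>
    Real.rpow_nonneg (integral_nonneg fun x => by positivity) _
  have hRHS : 0 ≤ Real.exp w * (p / q) * momNorm μ q := mul_nonneg (by positivity) (hnn q)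
  rcases hμ with ⟨c, rfl⟩ | ⟨f, hf0, hμf, hf⟩
  · have h : ∀ s : ℝ, 0 < s → momNorm (Measure.dirac c) s = |c| := by
      intro s hs
      rw [momNorm, integral_dirac, ← Real.rpow_mul (abs_nonneg c), mul_one_div_cancel hs.ne',
        Real.rpow_one]
    rw [h p hp0, h q hq0]
    have h1 : 1 ≤ Real.exp w * (p / q) := one_le_mul_of_one_le_of_one_le hew hratio
    nlinarith [abs_nonneg c]
  by_cases hpi : Integrable (fun x => |x| ^ p) μ
  swap
  · rw [momNorm, integral_undef hpi, Real.zero_rpow (by positivity)]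
    exact hRHS
  have hqi : Integrable (fun x => |x| ^ q) μ := by
    refine Integrable.mono' (hpi.add (integrable_const 1))
      (measurable_id.abs.pow_const q).aestronglyMeasurable ?_
    refine Filter.Eventually.of_forall fun x => ?_
    rw [Real.norm_of_nonneg (by positivity)]
    simp only [Pi.add_apply]
    rcases le_total |x| 1 with h | h
    · have h1 := Real.rpow_le_one (abs_nonneg x) h hq0.le
      have h2 : 0 ≤ |x| ^ p := by positivity
      linarith
    · have := Real.rpow_le_rpow_of_exponent_le h hpq.le
      linarith
  have hm := logConcave_measurable hf0 hf
  have hmE : Measurable fun x => ENNReal.ofReal (f x) := hm.ennreal_ofReal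
  have hlt : ∀ᵐ x ∂(volume : Measure ℝ), ENNReal.ofReal (f x) < ⊤ :=
    Filter.Eventually.of_forall fun x => ENNReal.ofReal_lt_top
  have key : ∀ g : ℝ → ℝ, (Integrable g μ → Integrable (fun x => g x * f x)) ∧
      ∫ x, g x ∂μ = ∫ x, g x * f x := by
    intro g
    constructor
    · intro h
      rw [hμf, integrable_withDensity_iff hmE hlt] at h
      simpa only [ENNReal.toReal_ofReal (hf0 _)] using h
    · rw [hμf, integral_withDensity_eq_integral_toReal_smul hmE hlt]
      simp only [ENNReal.toReal_ofReal (hf0 _), smul_eq_mul, mul_comm]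
  have i0 : Integrable f := by simpa using (key fun _ => 1).1 (integrable_const 1)
  have e0 : ∫ x, f x = 1 := by
    have := (key fun _ => 1).2
    simpa using this.symm
  have iq := (key _).1 hqi
  have ip := (key _).1 hpi
  set N := momNorm μ q with hN
  set κ := w * q * Real.exp (w / q) with hκdef
  have hκ : 0 < κ := by positivity
  have hκG : Real.exp κ * κ ^ q ≤ Real.Gamma (q + 1) := kappa_bound w hw hwe q hq
  have hNq : N ^ q = ∫ x, |x| ^ q * f x := by
    rw [hN, momNorm, ← Real.rpow_mul (integral_nonneg fun x => by positivity),
      one_div_mul_cancel hq0.ne', Real.rpow_one, (key _).2]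
  have B1 := half_bound hf0 hf hq0 hpq hκ hκG i0 e0 iq ip (hnn q) hNq
  have negint : ∀ s : ℝ, ∫ x, |x| ^ s * f (-x) = ∫ x, |x| ^ s * f x := by
    intro s
    rw [← integral_neg_eq_self (fun x => |x| ^ s * f x)]
    simp only [abs_neg]
  have neghalf : ∀ s : ℝ, ∫ x in Ioi (0:ℝ), |x| ^ s * f (-x) = ∫ x in Iic (0:ℝ), |x| ^ s * f x := by
    intro s
    have := integral_comp_neg_Iic 0 (fun x => |x| ^ s * f (-x))
    simp only [abs_neg, neg_neg, neg_zero] at this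
    exact this.symm
  have B2 := half_bound (f := fun x => f (-x)) (N := N) (fun x => hf0 _)
    (fun x y l h1 h2 => by
      refine (hf (-x) (-y) l h1 h2).trans (le_of_eq ?_)
      congr 1; ring) hq0 hpq hκ hκG i0.comp_neg
    (by rw [integral_neg_eq_self (fun x => f x)]; exact e0)
    (by simpa only [abs_neg] using iq.comp_neg) (by simpa only [abs_neg] using ip.comp_neg)
    (hnn q) (by rw [negint]; exact hNq)
  rw [neghalf, neghalf] at B2
  have s1 := intervalIntegral.integral_Iic_add_Ioi (b := 0) iq.integrableOn iq.integrableOn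
  have s2 := intervalIntegral.integral_Iic_add_Ioi (b := 0) ip.integrableOn ip.integrableOn
  have B3 : ∫ x, |x| ^ p * f x ≤
      Real.Gamma (p + 1) / Real.Gamma (q + 1) * (N / κ) ^ (p - q) * N ^ q := by
    rw [← s2, hNq, ← s1, mul_add]
    exact add_le_add B2 B1
  have hN0 : 0 ≤ N := hnn q
  have B4 : (N / κ) ^ (p - q) * N ^ q = N ^ p / κ ^ (p - q) := by
    rw [Real.div_rpow hN0 hκ.le, div_mul_eq_mul_div, ← Real.rpow_add_of_nonneg hN0 (by linarith)
      hq0.le, sub_add_cancel]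
  have B5 : ∫ x, |x| ^ p ∂μ ≤ (Real.exp w * (p / q) * N) ^ p := by
    rw [(key _).2]
    refine B3.trans ?_
    have hF := final_numeric w hw hwe p q hq hpq
    rw [← hκdef] at hF
    have hκp : 0 < κ ^ (p - q) := by positivity
    rw [mul_assoc, B4, Real.mul_rpow (by positivity) hN0]
    calc _ ≤ (Real.exp w * (p / q)) ^ p * κ ^ (p - q) * (N ^ p / κ ^ (p - q)) := by gcongr
      _ = _ := by field_simp
  calc momNorm μ p ≤ ((Real.exp w * (p / q) * N) ^ p) ^ (1 / p) := by
        rw [momNorm]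
        exact Real.rpow_le_rpow (integral_nonneg fun x => by positivity) B5 (by positivity)
    _ = _ := by
      rw [← Real.rpow_mul hRHS, mul_one_div_cancel hp0.ne', Real.rpow_one]
end

section
/- The function f(p) = Γ(p+1)^{1/p}/p is decreasing on the interval [1, ∞): for all 1 ≤ q < p one has Γ(p+1)^{1/p}/p < Γ(q+1)^{1/q}/q (in particular Γ(p+1)^{1/p}/Γ(q+1)^{1/q} ≤ p/q). -/
open Filter Topology in
theorem aux_k_concave : ConcaveOn ℝ (Set.Ioi (0:ℝ))
    (fun x : ℝ => x * (Real.log (x + 1) - Real.log x)) := by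
  refine ⟨convex_Ioi 0, ?_⟩
  intro x hx y hy a b ha hb hab
  simp only [Set.mem_Ioi, smul_eq_mul] at *
  have hz : 0 < a * x + b * y := by
    have := (convex_Ioi (0:ℝ)) hx hy ha hb hab
    simpa using this
  set z := a * x + b * y with hzdef
  have hl := strictConcaveOn_log_Ioi.concaveOn.2 
    (show (x + 1) / x ∈ Set.Ioi (0:ℝ) from Set.mem_Ioi.2 (by positivity))
    (show (y + 1) / y ∈ Set.Ioi (0:ℝ) from Set.mem_Ioi.2 (by positivity))
    (show 0 ≤ a * x / z by positivity) (show 0 ≤ b * y / z by positivity)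
    (by rw [← add_div, ← hzdef]; exact div_self hz.ne')
  have e : a * x / z * ((x + 1) / x) + b * y / z * ((y + 1) / y) = (z + 1) / z := by
    field_simp
    rw [hzdef]
    linear_combination hab
  simp only [smul_eq_mul] at hl
  rw [e, Real.log_div (by positivity) (by positivity), Real.log_div (by positivity) (by positivity),
    Real.log_div (by positivity) (by positivity)] at hl
  have h2 := mul_le_mul_of_nonneg_left hl hz.le
  refine le_trans (le_of_eq ?_) h2
  field_simp

theorem aux_F_concave (n : ℕ) : ConcaveOn ℝ (Set.Ioi (0:ℝ))
    (fun x : ℝ => (x + n) * Real.log (x + n) - x * Real.log x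
      - ∑ m ∈ Finset.range n, Real.log (x + (m + 1))) := by
  induction n with
  | zero =>
    simpa using concaveOn_const (0:ℝ) (convex_Ioi (0:ℝ))
  | succ n ih =>
    have hk : ConcaveOn ℝ (Set.Ioi (0:ℝ))
        (fun x : ℝ => (x + n) * (Real.log (x + n + 1) - Real.log (x + n))) := by
      refine ⟨convex_Ioi 0, ?_⟩
      intro x hx y hy a b ha hb hab
      have hn : (0:ℝ) ≤ n := n.cast_nonneg
      simp only [Set.mem_Ioi] at hx hy
      have := aux_k_concave.2 (show x + n ∈ Set.Ioi (0:ℝ) from Set.mem_Ioi.2 (by positivity))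
        (show y + n ∈ Set.Ioi (0:ℝ) from Set.mem_Ioi.2 (by positivity)) ha hb hab
      simp only [smul_eq_mul] at this ⊢
      have e : a * (x + n) + b * (y + n) = a * x + b * y + n := by
        linear_combination (n:ℝ) * hab
      rwa [e] at this
    refine (ih.add hk).congr ?_
    intro x hx
    simp only [Pi.add_apply, Finset.sum_range_succ]
    push_cast
    rw [← add_assoc]
    ring

theorem aux_h_concave : ConcaveOn ℝ (Set.Ioi (0:ℝ))
    (fun x : ℝ => Real.log (Real.Gamma (x + 1)) - x * Real.log x) := by
  have hn : ∀ n : ℕ, ConcaveOn ℝ (Set.Ioi (0:ℝ))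
      (fun x : ℝ => Real.BohrMollerup.logGammaSeq x n + Real.log x - x * Real.log x) := by
    intro n
    have h1 : ConcaveOn ℝ (Set.Ioi (0:ℝ)) (fun x : ℝ => -((x + n) * Real.log (x + n))) := by
      refine ⟨convex_Ioi 0, ?_⟩
      intro x hx y hy a b ha hb hab
      have hn : (0:ℝ) ≤ n := n.cast_nonneg
      simp only [Set.mem_Ioi] at hx hy
      have := Real.convexOn_mul_log.2 (show x + n ∈ Set.Ici (0:ℝ) from Set.mem_Ici.2 (by positivity))
        (show y + n ∈ Set.Ici (0:ℝ) from Set.mem_Ici.2 (by positivity)) ha hb hab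
      simp only [smul_eq_mul] at this ⊢
      have e : a * (x + n) + b * (y + n) = a * x + b * y + n := by
        linear_combination (n:ℝ) * hab
      rw [e] at this
      linarith
    have h2 : ConcaveOn ℝ (Set.Ioi (0:ℝ))
        (fun x : ℝ => x * Real.log n + Real.log (n.factorial)) := by
      refine ⟨convex_Ioi 0, ?_⟩
      intro x hx y hy a b ha hb hab
      simp only [smul_eq_mul]
      apply le_of_eq
      linear_combination Real.log (n.factorial) * hab
    refine (((aux_F_concave n).add h1).add h2).congr ?_
    intro x hx
    simp only [Pi.add_apply, Real.BohrMollerup.logGammaSeq, Finset.sum_range_succ']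
    push_cast
    rw [add_zero]
    ring
  have hlim : ∀ x : ℝ, 0 < x → Filter.Tendsto
      (fun n : ℕ => Real.BohrMollerup.logGammaSeq x n + Real.log x - x * Real.log x) Filter.atTop
      (nhds (Real.log (Real.Gamma (x + 1)) - x * Real.log x)) := by
    intro x hx
    have e : Real.log (Real.Gamma (x + 1)) = Real.log (Real.Gamma x) + Real.log x := by
      rw [Real.Gamma_add_one hx.ne', Real.log_mul hx.ne' (Real.Gamma_pos_of_pos hx).ne', add_comm]
    rw [e]
    exact ((Real.BohrMollerup.tendsto_log_gamma hx).add_const _).sub_const _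
  refine ⟨convex_Ioi 0, ?_⟩
  intro x hx y hy a b ha hb hab
  have hz := (convex_Ioi (0:ℝ)) hx hy ha hb hab
  exact le_of_tendsto_of_tendsto' (((hlim x hx).const_smul a).add ((hlim y hy).const_smul b))
    (hlim _ hz) (fun n => (hn n).2 hx hy ha hb hab)

/-- The function `f(p) = Γ(p+1)^{1/p} / p` is (strictly) decreasing on `[1, ∞)`:
for `1 ≤ q < p` one has `Γ(p+1)^{1/p}/p < Γ(q+1)^{1/q}/q`. -/
theorem gamma_rpow_div_strictAnti (p q : ℝ) (hq : 1 ≤ q) (hpq : q < p) :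
    Real.Gamma (p + 1) ^ (1 / p) / p < Real.Gamma (q + 1) ^ (1 / q) / q := by
  have hq0 : 0 < q := by linarith
  have hp0 : 0 < p := by linarith
  have hs := aux_h_concave.slope_anti_adjacent (x := 1) (y := q + 1) (z := p + 1)
    (Set.mem_Ioi.2 one_pos) (Set.mem_Ioi.2 (by positivity)) (by linarith) (by linarith)
  have key : ∀ x : ℝ, 0 < x → Real.log (Real.Gamma (x + 1) ^ (1 / x) / x) =
      (Real.log (x + 1) - Real.log x) +
      (Real.log (Real.Gamma (x + 1 + 1)) - (x + 1) * Real.log (x + 1)) / x := by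
    intro x hx
    have hG := Real.Gamma_pos_of_pos (show 0 < x + 1 by positivity)
    rw [Real.log_div (by positivity) hx.ne', Real.log_rpow hG,
      Real.Gamma_add_one (s := x + 1) (by positivity), Real.log_mul (by positivity) hG.ne']
    field_simp
    ring
  have hGp := Real.Gamma_pos_of_pos (show 0 < p + 1 by positivity)
  have hGq := Real.Gamma_pos_of_pos (show 0 < q + 1 by positivity)
  rw [← Real.log_lt_log_iff (by positivity) (by positivity), key p hp0, key q hq0]
  have h1 : Real.log (p + 1) - Real.log p < Real.log (q + 1) - Real.log q := by
    rw [← Real.log_div (by positivity) (by positivity),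
      ← Real.log_div (by positivity) (by positivity)]
    apply Real.log_lt_log (by positivity)
    rw [div_lt_div_iff₀ hp0 hq0]
    linarith
  have e1 : Real.log (Real.Gamma (1 + 1)) - 1 * Real.log 1 = 0 := by
    norm_num [Real.Gamma_two]
  simp only [e1] at hs
  set A := Real.log (Real.Gamma (p + 1 + 1)) - (p + 1) * Real.log (p + 1)
  set B := Real.log (Real.Gamma (q + 1 + 1)) - (q + 1) * Real.log (q + 1)
  have h2 : A / p ≤ B / q := by
    rw [div_le_div_iff₀ (by linarith) (by linarith)] at hs
    rw [div_le_div_iff₀ hp0 hq0]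
    linarith
  linarith
end

section
/- Let X be a log-concave real random variable which is symmetric (X has the same distribution as −X) or nonnegative (X ≥ 0 almost surely). Then for all real numbers p > q ≥ 1 one has ‖X‖_p ≤ (p/q)·‖X‖_q. -/
open MeasureTheory

/-- gamma lemma, one step -/
lemma gam_step (c x : ℝ) (hc0 : 0 < c) (hc1 : c < 1) (hx : 0 < x) (U : ℝ → ℝ)
    (hU : U = fun s => c * ((s+x) * Real.log (s+x) - s * Real.log s)
      - ((s+c*x) * Real.log (s+c*x) - s * Real.log s)) (m : ℕ) :
    U ((m:ℝ)+1) - U m ≤ c * (Real.log ((m:ℝ)+1+x) - Real.log ((m:ℝ)+1))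
      - (Real.log ((m:ℝ)+1+c*x) - Real.log ((m:ℝ)+1)) := by
  have hcx : 0 < c * x := by positivity
  set t : ℝ → ℝ := fun s => c * (Real.log (s+x) - Real.log s)
      - (Real.log (s+c*x) - Real.log s) with ht
  have hcont : Continuous U := by
    rw [hU]
    have h := Real.continuous_mul_log
    have h1 : Continuous fun s : ℝ => (s+x) * Real.log (s+x) := h.comp (continuous_add_const x)
    have h2 : Continuous fun s : ℝ => (s+c*x) * Real.log (s+c*x) :=
      h.comp (continuous_add_const (c*x))
    fun_prop
  have hder : ∀ s : ℝ, 0 < s → HasDerivAt U (t s) s := by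
    intro s hs
    have h0 := Real.hasDerivAt_mul_log hs.ne'
    have h1 := (Real.hasDerivAt_mul_log (x := s + x) (by positivity)).comp_add_const s x
    have h2 := (Real.hasDerivAt_mul_log (x := s + c*x) (by positivity)).comp_add_const s (c*x)
    rw [hU]
    refine (((h1.sub h0).const_mul c).sub (h2.sub h0)).congr_deriv ?_
    simp only [ht]; ring
  have hder2 : ∀ s : ℝ, 0 < s → HasDerivAt t (c * ((s+x)⁻¹ - s⁻¹) - ((s+c*x)⁻¹ - s⁻¹)) s := by
    intro s hs
    have h0 := Real.hasDerivAt_log hs.ne'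
    have h1 := (Real.hasDerivAt_log (x := s + x) (by positivity)).comp_add_const s x
    have h2 := (Real.hasDerivAt_log (x := s + c*x) (by positivity)).comp_add_const s (c*x)
    exact ((h1.sub h0).const_mul c).sub (h2.sub h0)
  have hmono : MonotoneOn t (Set.Ioi 0) := by
    apply monotoneOn_of_deriv_nonneg (convex_Ioi 0)
    · intro s hs; exact (hder2 s hs).continuousAt.continuousWithinAt
    · intro s hs; rw [interior_Ioi] at hs
      exact (hder2 s hs).differentiableAt.differentiableWithinAt
    · intro s hs; rw [interior_Ioi] at hs
      have hs : 0 < s := hs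
      rw [(hder2 s hs).deriv]
      have : c * ((s+x)⁻¹ - s⁻¹) - ((s+c*x)⁻¹ - s⁻¹) = c*(1-c)*x^2/(s*(s+x)*(s+c*x)) := by
        field_simp
        ring
      rw [this]
      have : 0 < 1 - c := by linarith
      positivity
  have hm : (0:ℝ) ≤ m := Nat.cast_nonneg m
  obtain ⟨ξ, hξ, he⟩ := exists_hasDerivAt_eq_slope U t (a := (m:ℝ)) (b := (m:ℝ)+1) (by linarith)
    hcont.continuousOn (fun s hs => hder s (lt_of_le_of_lt hm hs.1))
  have : U ((m:ℝ)+1) - U m = t ξ := by rw [he]; simp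
  rw [this]
  exact hmono (lt_of_le_of_lt hm hξ.1) (show (0:ℝ) < m+1 by positivity) hξ.2.le

lemma gam_log (q p : ℝ) (hq : 0 < q) (hpq : q < p) :
    q * (Real.log (Real.Gamma (p+1)) - p * Real.log p) ≤
    p * (Real.log (Real.Gamma (q+1)) - q * Real.log q) := by
  have hp : 0 < p := hq.trans hpq
  set c := q / p with hc
  have hc0 : 0 < c := by positivity
  have hc1 : c < 1 := by rw [hc, div_lt_one hp]; exact hpq
  have hcp : c * p = q := by rw [hc]; field_simp
  -- limit
  have key : ∀ n : ℕ, 0 ≤ (Real.BohrMollerup.logGammaSeq q n + Real.log q - q * Real.log q)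
      - c * (Real.BohrMollerup.logGammaSeq p n + Real.log p - p * Real.log p) := by
    intro n
    set U : ℝ → ℝ := fun s => c * ((s+p) * Real.log (s+p) - s * Real.log s)
      - ((s+c*p) * Real.log (s+c*p) - s * Real.log s) with hU
    have hstep := gam_step c p hc0 hc1 hp U hU
    have hsum : U n - U 0 ≤ ∑ m ∈ Finset.range n, (c * (Real.log ((m:ℝ)+1+p) - Real.log ((m:ℝ)+1))
      - (Real.log ((m:ℝ)+1+c*p) - Real.log ((m:ℝ)+1))) := by
      have := Finset.sum_range_sub (fun m : ℕ => U m) n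
      simp only [Nat.cast_zero] at this
      rw [← this]
      apply Finset.sum_le_sum
      intro m _
      have := hstep m
      push_cast
      exact this
    have hUn : 0 ≤ U n := by
      have hn : (0:ℝ) ≤ n := Nat.cast_nonneg n
      have := Real.convexOn_mul_log.2 (show (n:ℝ)+p ∈ Set.Ici 0 from (by simp; positivity))
        (show (n:ℝ) ∈ Set.Ici 0 from hn) hc0.le (show 0 ≤ 1 - c by linarith) (by ring)
      simp only [smul_eq_mul] at this
      have e : c * ((n:ℝ)+p) + (1-c) * n = n + c*p := by ring
      rw [e] at this
      simp only [hU]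
      linarith
    have hU0 : U 0 = c * (p * Real.log p) - q * Real.log q := by
      simp only [hU, hcp]; simp
    have hf : Real.log (n.factorial) = ∑ m ∈ Finset.range n, Real.log ((m:ℝ)+1) := by
      rw [← Finset.prod_range_add_one_eq_factorial, Nat.cast_prod, Real.log_prod]
      · simp
      · intro i _; positivity
    simp only [Real.BohrMollerup.logGammaSeq, Finset.sum_range_succ', hf]
    simp only [Finset.sum_sub_distrib, ← Finset.mul_sum, hcp] at hsum
    have e1 : ∀ y : ℝ, ∑ m ∈ Finset.range n, Real.log (y + ((m+1:ℕ):ℝ))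
        = ∑ m ∈ Finset.range n, Real.log ((m:ℝ)+1+y) := by
      intro y; apply Finset.sum_congr rfl; intro m _; congr 1; push_cast; ring
    rw [e1, e1]
    rw [hU0] at hsum
    simp only [Nat.cast_zero, add_zero]
    have : c * (p * Real.log n) = q * Real.log n := by rw [← hcp]; ring
    linarith
  have lim := ((((Real.BohrMollerup.tendsto_log_gamma hq).add_const (Real.log q)).sub_const
    (q * Real.log q))).sub (((((Real.BohrMollerup.tendsto_log_gamma hp).add_const
      (Real.log p)).sub_const (p * Real.log p))).const_mul c)
  have h0 := ge_of_tendsto' lim key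
  rw [Real.Gamma_add_one hp.ne', Real.Gamma_add_one hq.ne',
    Real.log_mul hp.ne' (Real.Gamma_pos_of_pos hp).ne',
    Real.log_mul hq.ne' (Real.Gamma_pos_of_pos hq).ne']
  have := mul_nonneg hp.le h0
  have e : p * (c * (Real.log (Real.Gamma p) + Real.log p - p * Real.log p)) =
    q * (Real.log (Real.Gamma p) + Real.log p - p * Real.log p) := by rw [← hcp]; ring
  nlinarith

lemma gam_ineq (q p : ℝ) (hq : 0 < q) (hpq : q < p) :
    Real.Gamma (p+1) ^ (1/p) ≤ p / q * Real.Gamma (q+1) ^ (1/q) := by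
  have hp : 0 < p := hq.trans hpq
  have h := gam_log q p hq hpq
  have gp : 0 < Real.Gamma (p+1) := Real.Gamma_pos_of_pos (by linarith)
  have gq : 0 < Real.Gamma (q+1) := Real.Gamma_pos_of_pos (by linarith)
  rw [← Real.log_le_log_iff (by positivity) (by positivity),
    Real.log_mul (by positivity) (by positivity), Real.log_div hp.ne' hq.ne',
    Real.log_rpow gp, Real.log_rpow gq]
  have := div_le_div_of_nonneg_right h (show 0 ≤ p * q by positivity)
  have e1 : q * (Real.log (Real.Gamma (p+1)) - p * Real.log p) / (p*q) =
    1/p*Real.log (Real.Gamma (p+1)) - Real.log p := by field_simp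
  have e2 : p * (Real.log (Real.Gamma (q+1)) - q * Real.log q) / (p*q) =
    1/q*Real.log (Real.Gamma (q+1)) - Real.log q := by field_simp
  rw [e1, e2] at this
  linarith

lemma chord (k A B : ℝ) (hk : 1 ≤ k) (hA : 0 ≤ A) (hAB : A < B) :
    ∃ α β : ℝ, (A^k = α + β * A ∧ B^k = α + β * B) ∧
      (∀ t, A < t → t < B → t^k ≤ α + β * t) ∧
      (∀ t, 0 ≤ t → t < A → α + β * t ≤ t^k) ∧ (∀ t, B < t → α + β * t ≤ t^k) := by
  have hc := convexOn_rpow hk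
  have hBA : 0 < B - A := by linarith
  set β := (B^k - A^k)/(B-A) with hβ
  have hb : β * (B - A) = B^k - A^k := by rw [hβ]; field_simp
  refine ⟨A^k - β * A, β, ⟨by ring, by linarith⟩, ?_, ?_, ?_⟩
  · intro t h1 h2
    have := hc.secant_mono (a := A) (x := t) (y := B) hA (hA.trans h1.le) (hA.trans hAB.le)
      h1.ne' hAB.ne' h2.le
    rw [← hβ, div_le_iff₀ (by linarith)] at this
    linarith
  · intro t h0 h1
    have := hc.secant_mono (a := A) (x := t) (y := B) hA h0 (hA.trans hAB.le)
      h1.ne hAB.ne' (by linarith)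
    rw [← hβ, div_le_iff_of_neg (by linarith)] at this
    linarith
  · intro t h1
    have := hc.secant_mono (a := A) (x := B) (y := t) hA (hA.trans hAB.le) (show 0 ≤ t by linarith)
      hAB.ne' (by linarith) h1.le
    rw [← hβ, le_div_iff₀ (by linarith)] at this
    linarith

lemma sign_claim (F : ℝ → ℝ) (lam p q : ℝ) (hq : 0 < q) (hpq : q < p) (hlam : 0 < lam)
    (hF0 : ∀ x, 0 ≤ F x)
    (hF : ∀ x y l : ℝ, 0 ≤ l → l ≤ 1 → F x ^ l * F y ^ (1 - l) ≤ F (l * x + (1 - l) * y))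
    (D : ℝ → ℝ) (hD : D = fun x => F x - lam * Real.exp (-(lam * x)))
    (hDi : IntegrableOn D (Set.Ioi 0)) (hDq : IntegrableOn (fun x => x^q * D x) (Set.Ioi 0))
    (h0 : ∫ x in Set.Ioi 0, D x = 0) (h1 : ∫ x in Set.Ioi 0, x^q * D x = 0) :
    ∃ α β : ℝ, ∀ᵐ x ∂(volume.restrict (Set.Ioi (0:ℝ))), (x^p - α - β * x^q) * D x ≤ 0 := by
  have hp : 0 < p := hq.trans hpq
  set S : Set ℝ := {x | 0 < x ∧ 0 ≤ D x} with hS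
  have hconv : ∀ x ∈ S, ∀ y ∈ S, ∀ z, x < z → z < y → 0 ≤ D z := by
    intro x hx y hy z hxz hzy
    have hxy : 0 < y - x := by linarith
    set l := (y - z)/(y-x) with hl
    have hl0 : 0 ≤ l := div_nonneg (by linarith) hxy.le
    have hl1 : l ≤ 1 := by rw [hl, div_le_one hxy]; linarith
    have hz : l * x + (1-l) * y = z := by rw [hl]; field_simp; ring
    have h2 := hF x y l hl0 hl1
    rw [hz] at h2
    have hx2 := hx.2
    have hy2 := hy.2
    simp only [hD] at hx2 hy2 ⊢
    have hgx : (lam * Real.exp (-(lam * x)))^l ≤ F x ^ l :=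
      Real.rpow_le_rpow (by positivity) (by linarith) hl0
    have hgy : (lam * Real.exp (-(lam * y)))^(1-l) ≤ F y ^ (1-l) :=
      Real.rpow_le_rpow (by positivity) (by linarith) (by linarith)
    have h3 := mul_le_mul hgx hgy (by positivity) (by have := hF0 x; positivity)
    have h4 : (lam * Real.exp (-(lam * x)))^l * (lam * Real.exp (-(lam * y)))^(1-l)
        = lam * Real.exp (-(lam * z)) := by
      rw [Real.mul_rpow hlam.le (Real.exp_pos _).le, Real.mul_rpow hlam.le (Real.exp_pos _).le,
        ← Real.exp_mul, ← Real.exp_mul]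
      calc _ = (lam^l * lam^(1-l)) * (Real.exp (-(lam*x)*l) * Real.exp (-(lam*y)*(1-l))) := by ring
        _ = _ := by
          rw [← Real.rpow_add hlam, ← Real.exp_add, ← hz]
          simp only [add_sub_cancel, Real.rpow_one]
          congr 2; ring
    linarith
  have hneg : ∀ x, 0 < x → x ∉ S → D x < 0 := by
    intro x hx hxS
    by_contra h
    exact hxS ⟨hx, not_lt.mp h⟩
  have hne : ∀ a : ℝ, ∀ᵐ x ∂(volume.restrict (Set.Ioi (0:ℝ))), x ≠ a := by
    intro a
    exact ae_restrict_of_ae (Measure.ae_ne volume a)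
  have hmem : ∀ᵐ x ∂(volume.restrict (Set.Ioi (0:ℝ))), 0 < x :=
    ae_restrict_mem measurableSet_Ioi
  by_cases hsub : S.Subsingleton
  · refine ⟨0, 0, ?_⟩
    rcases hsub.eq_empty_or_singleton with h | ⟨a, h⟩
    · filter_upwards [hmem] with x hx
      have := hneg x hx (by rw [h]; simp)
      have := Real.rpow_pos_of_pos hx p
      nlinarith
    · filter_upwards [hmem, hne a] with x hx hxa
      have := hneg x hx (by rw [h]; simpa using hxa)
      have := Real.rpow_pos_of_pos hx p
      nlinarith
  obtain ⟨x₁, hx₁, y₁, hy₁, hxy₁⟩ : ∃ x ∈ S, ∃ y ∈ S, x < y := by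
    rw [Set.not_subsingleton_iff] at hsub
    obtain ⟨x, hx, y, hy, hxy⟩ := hsub
    rcases lt_or_gt_of_ne hxy with h | h
    · exact ⟨x, hx, y, hy, h⟩
    · exact ⟨y, hy, x, hx, h⟩
  have hbb : BddBelow S := ⟨0, fun x hx => hx.1.le⟩
  have hSne : S.Nonempty := ⟨x₁, hx₁⟩
  set a := sInf S with ha
  have ha0 : 0 ≤ a := le_csInf hSne (fun x hx => hx.1.le)
  have hlt : ∀ x, 0 < x → x < a → D x < 0 := fun x hx hxa =>
    hneg x hx (fun h => not_lt.mpr (csInf_le hbb h) hxa)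
  by_cases hba : BddAbove S
  · set b := sSup S with hb
    have hab : a < b := lt_of_le_of_lt (csInf_le hbb hx₁) (lt_of_lt_of_le hxy₁ (le_csSup hba hy₁))
    have hgt : ∀ x, 0 < x → b < x → D x < 0 := fun x hx hxa =>
      hneg x hx (fun h => not_lt.mpr (le_csSup hba h) hxa)
    have hmid : ∀ x, a < x → x < b → 0 ≤ D x := by
      intro x h2 h3
      obtain ⟨u, hu, hux⟩ := exists_lt_of_csInf_lt hSne h2
      obtain ⟨v, hv, hvx⟩ := exists_lt_of_lt_csSup hSne h3
      exact hconv u hu v hv x hux hvx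
    obtain ⟨α, β, -, hin, hl, hr⟩ := chord (p/q) (a^q) (b^q) (by rw [le_div_iff₀ hq]; linarith)
      (by positivity) (Real.rpow_lt_rpow ha0 hab hq)
    refine ⟨α, β, ?_⟩
    filter_upwards [hmem, hne a, hne b] with x hx hxa hxb
    have hpw : (x^q)^(p/q) = x^p := by rw [← Real.rpow_mul hx.le]; congr 1; field_simp
    rw [← hpw]
    rcases lt_or_gt_of_ne hxa with h | h
    · have := hl (x^q) (by positivity) (Real.rpow_lt_rpow hx.le h hq)
      exact mul_nonpos_of_nonneg_of_nonpos (by linarith) (hlt x hx h).le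
    · rcases lt_or_gt_of_ne hxb with h' | h'
      · have := hin (x^q) (Real.rpow_lt_rpow ha0 h hq) (Real.rpow_lt_rpow hx.le h' hq)
        exact mul_nonpos_of_nonpos_of_nonneg (by linarith) (hmid x h h')
      · have := hr (x^q) (Real.rpow_lt_rpow (ha0.trans hab.le) h' hq)
        exact mul_nonpos_of_nonneg_of_nonpos (by linarith) (hgt x hx h').le
  · have hmid : ∀ x, a < x → 0 ≤ D x := by
      intro x h2
      obtain ⟨u, hu, hux⟩ := exists_lt_of_csInf_lt hSne h2
      obtain ⟨v, hv, hvx⟩ := not_bddAbove_iff.mp hba x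
      exact hconv u hu v hv x hux hvx
    refine ⟨0, 0, ?_⟩
    have hint : ∫ x in Set.Ioi 0, (x^q * D x - a^q * D x) = 0 := by
      rw [integral_sub hDq (hDi.const_mul _), integral_const_mul, h0, h1]; simp
    have hnn : ∀ᵐ x ∂(volume.restrict (Set.Ioi (0:ℝ))), 0 ≤ x^q * D x - a^q * D x := by
      filter_upwards [hmem, hne a] with x hx hxa
      rw [← sub_mul]
      rcases lt_or_gt_of_ne hxa with h | h
      · have := Real.rpow_lt_rpow hx.le h hq
        exact mul_nonneg_of_nonpos_of_nonpos (by linarith) (hlt x hx h).le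
      · have := Real.rpow_lt_rpow ha0 h hq
        exact mul_nonneg (by linarith) (hmid x h)
    have hz := (integral_eq_zero_iff_of_nonneg_ae hnn (hDq.sub (hDi.const_mul _))).mp hint
    filter_upwards [hmem, hne a, hz] with x hx hxa hxz
    simp only [Pi.zero_apply] at hxz
    rw [← sub_mul] at hxz
    have hnz : x^q - a^q ≠ 0 := by
      rcases lt_or_gt_of_ne hxa with h | h
      · have := Real.rpow_lt_rpow hx.le h hq
        linarith
      · have := Real.rpow_lt_rpow ha0 h hq
        linarith
    rcases mul_eq_zero.mp hxz with h | h
    · exact absurd h hnz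
    · rw [h]; simp

lemma exp_mom (lam s : ℝ) (hlam : 0 < lam) (hs : 0 ≤ s) :
    IntegrableOn (fun x => x^s * (lam * Real.exp (-(lam * x)))) (Set.Ioi 0) ∧
    ∫ x in Set.Ioi 0, x^s * (lam * Real.exp (-(lam * x))) = (1/lam)^s * Real.Gamma (s+1) := by
  constructor
  · have := (integrableOn_rpow_mul_exp_neg_mul_rpow (p := 1) (s := s) (b := lam) (by linarith)
      one_pos hlam).const_mul lam
    refine this.congr (Filter.Eventually.of_forall fun x => ?_)
    simp only [Real.rpow_one]; ring_nf
  · have := Real.integral_rpow_mul_exp_neg_mul_Ioi (a := s+1) (r := lam) (by linarith) hlam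
    simp only [add_sub_cancel_right] at this
    have e : ∀ x : ℝ, x^s * (lam * Real.exp (-(lam * x))) = lam * (x^s * Real.exp (-(lam*x))) := by
      intro x; ring
    simp only [e]
    rw [integral_const_mul, this, Real.rpow_add (by positivity), Real.rpow_one]
    field_simp

lemma main_pos (F : ℝ → ℝ) (p q : ℝ) (hq : 0 < q) (hpq : q < p)
    (gam_ineq : Real.Gamma (p+1) ^ (1/p) ≤ p / q * Real.Gamma (q+1) ^ (1/q))
    (hF0 : ∀ x, 0 ≤ F x)
    (hF : ∀ x y l : ℝ, 0 ≤ l → l ≤ 1 → F x ^ l * F y ^ (1 - l) ≤ F (l * x + (1 - l) * y))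
    (hi0 : IntegrableOn F (Set.Ioi 0)) (h1 : ∫ x in Set.Ioi 0, F x = 1)
    (hiq : IntegrableOn (fun x => x^q * F x) (Set.Ioi 0))
    (hip : IntegrableOn (fun x => x^p * F x) (Set.Ioi 0)) :
    (∫ x in Set.Ioi 0, x^p * F x)^(1/p) ≤ p / q * (∫ x in Set.Ioi 0, x^q * F x)^(1/q) := by
  have hp : 0 < p := hq.trans hpq
  have hmem : ∀ᵐ x ∂(volume.restrict (Set.Ioi (0:ℝ))), 0 < x :=
    ae_restrict_mem measurableSet_Ioi
  set A := ∫ x in Set.Ioi 0, x^q * F x with hA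
  have hnn : ∀ᵐ x ∂(volume.restrict (Set.Ioi (0:ℝ))), 0 ≤ x^q * F x := by
    filter_upwards [hmem] with x hx
    have := hF0 x
    positivity
  have hApos : 0 < A := by
    refine lt_of_le_of_ne (integral_nonneg_of_ae hnn) (fun h => ?_)
    have hz := (integral_eq_zero_iff_of_nonneg_ae hnn hiq).mp h.symm
    have : ∫ x in Set.Ioi 0, F x = 0 := by
      apply integral_eq_zero_of_ae
      filter_upwards [hmem, hz] with x hx hxz
      rcases mul_eq_zero.mp hxz with h | h
      · exact absurd h (Real.rpow_pos_of_pos hx q).ne'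
      · exact h
    linarith
  have gp : 0 < Real.Gamma (p+1) := Real.Gamma_pos_of_pos (by linarith)
  have gq : 0 < Real.Gamma (q+1) := Real.Gamma_pos_of_pos (by linarith)
  set r := (A / Real.Gamma (q+1))^(1/q) with hr
  have hrpos : 0 < r := by positivity
  have hrq : r^q * Real.Gamma (q+1) = A := by
    rw [hr, ← Real.rpow_mul (by positivity)]
    rw [one_div_mul_cancel hq.ne', Real.rpow_one]
    field_simp
  set lam := 1/r with hlam
  have hlpos : 0 < lam := by positivity
  have hlr : 1/lam = r := by rw [hlam]; simp
  obtain ⟨g0i, g0⟩ := exp_mom lam 0 hlpos le_rfl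
  obtain ⟨gqi, gqv⟩ := exp_mom lam q hlpos hq.le
  obtain ⟨gpi, gpv⟩ := exp_mom lam p hlpos hp.le
  simp only [Real.rpow_zero, one_mul, zero_add, Real.Gamma_one] at g0i g0
  rw [hlr] at gqv gpv
  have hDi : IntegrableOn (fun x => F x - lam * Real.exp (-(lam * x))) (Set.Ioi 0) := hi0.sub g0i
  have hDq : IntegrableOn (fun x => x^q * (F x - lam * Real.exp (-(lam * x)))) (Set.Ioi 0) := by
    simp only [mul_sub]; exact hiq.sub gqi
  have hDp : IntegrableOn (fun x => x^p * (F x - lam * Real.exp (-(lam * x)))) (Set.Ioi 0) := by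
    simp only [mul_sub]; exact hip.sub gpi
  have hD0v : ∫ x in Set.Ioi 0, (F x - lam * Real.exp (-(lam * x))) = 0 := by
    rw [integral_sub hi0 g0i, h1, g0]; simp
  have hDqv : ∫ x in Set.Ioi 0, x^q * (F x - lam * Real.exp (-(lam * x))) = 0 := by
    simp only [mul_sub]
    rw [integral_sub hiq gqi, gqv, hrq]; simp [hA]
  obtain ⟨α, β, hab⟩ := sign_claim F lam p q hq hpq hlpos hF0 hF _ rfl hDi hDq hD0v hDqv
  have hle := integral_nonpos_of_ae (f := fun x => (x^p - α - β * x^q) * (F x - lam * Real.exp (-(lam * x)))) hab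
  have e : ∀ x : ℝ, (x^p - α - β * x^q) * (F x - lam * Real.exp (-(lam * x))) =
    x^p * (F x - lam * Real.exp (-(lam * x))) - α * (F x - lam * Real.exp (-(lam * x)))
      - β * (x^q * (F x - lam * Real.exp (-(lam * x)))) := by intro x; ring
  simp only [e] at hle
  have hDpa : IntegrableOn (fun x => x^p * (F x - lam * Real.exp (-(lam * x)))
      - α * (F x - lam * Real.exp (-(lam * x)))) (Set.Ioi 0) := hDp.sub (hDi.const_mul _)
  rw [integral_sub hDpa (hDq.const_mul _),
    integral_sub hDp (hDi.const_mul _), integral_const_mul, integral_const_mul, hD0v, hDqv] at hle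
  simp only [mul_sub] at hle
  rw [integral_sub hip gpi, gpv] at hle
  have hle' : ∫ x in Set.Ioi 0, x^p * F x ≤ r^p * Real.Gamma (p+1) := by linarith
  have hpn : 0 ≤ ∫ x in Set.Ioi 0, x^p * F x := by
    apply integral_nonneg_of_ae
    filter_upwards [hmem] with x hx
    have := hF0 x
    simp only [Pi.zero_apply]
    positivity
  calc (∫ x in Set.Ioi 0, x^p * F x)^(1/p) ≤ (r^p * Real.Gamma (p+1))^(1/p) :=
        Real.rpow_le_rpow hpn hle' (by positivity)
    _ = r * Real.Gamma (p+1)^(1/p) := by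
        rw [Real.mul_rpow (by positivity) gp.le, ← Real.rpow_mul hrpos.le]
        congr 1
        rw [mul_one_div_cancel hp.ne', Real.rpow_one]
    _ ≤ r * (p / q * Real.Gamma (q+1)^(1/q)) := by gcongr
    _ = p / q * A^(1/q) := by
        rw [hr, Real.div_rpow hApos.le gq.le]
        field_simp

lemma meas_of_lc (f : ℝ → ℝ) (hf0 : ∀ x, 0 ≤ f x)
    (hf : ∀ x y l : ℝ, 0 ≤ l → l ≤ 1 → f x ^ l * f y ^ (1 - l) ≤ f (l * x + (1 - l) * y)) :
    Measurable f := by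
  apply measurable_of_Ici
  intro t
  have : (f ⁻¹' Set.Ici t).OrdConnected := by
    constructor
    intro x hx y hy z hz
    simp only [Set.mem_preimage, Set.mem_Ici] at hx hy ⊢
    rcases le_or_gt t 0 with ht | ht
    · exact ht.trans (hf0 z)
    rcases eq_or_lt_of_le (hz.1.trans hz.2) with hxy | hxy
    · have : z = x := le_antisymm (by rw [hxy]; exact hz.2) hz.1
      rw [this]; exact hx
    have hyx : 0 < y - x := by linarith
    set l := (y - z)/(y-x) with hl
    have hl0 : 0 ≤ l := div_nonneg (by linarith [hz.2]) hyx.le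
    have hl1 : l ≤ 1 := by rw [hl, div_le_one hyx]; linarith [hz.1]
    have hzz : l * x + (1-l) * y = z := by rw [hl]; field_simp; ring
    have h2 := hf x y l hl0 hl1
    rw [hzz] at h2
    have h3 : t^l * t^(1-l) ≤ f x ^ l * f y ^ (1-l) :=
      mul_le_mul (Real.rpow_le_rpow ht.le hx hl0) (Real.rpow_le_rpow ht.le hy (by linarith))
        (by positivity) (Real.rpow_nonneg (hf0 x) _)
    rw [← Real.rpow_add ht] at h3
    simp only [add_sub_cancel, Real.rpow_one] at h3
    linarith
  exact this.measurableSet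

lemma half_line (μ : Measure ℝ) (hac : μ {0} = 0)
    (hsym : μ.map (fun x => -x) = μ ∨ μ {x : ℝ | x < 0} = 0) :
    ∃ C : ℝ, 0 < C ∧ ∀ s : ℝ, Integrable (fun x : ℝ => |x|^s) μ →
      ∫ x, |x|^s ∂μ = C * ∫ x in Set.Ioi 0, |x|^s ∂μ := by
  rcases hsym with h | h
  · refine ⟨2, by norm_num, fun s hs => ?_⟩
    have hsplit := integral_add_compl (measurableSet_Ioi (a := (0:ℝ))) hs
    rw [Set.compl_Ioi, ← setIntegral_congr_set (Iio_ae_eq_Iic' hac)] at hsplit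
    have h2 : ∫ x in Set.Iio 0, |x|^s ∂μ = ∫ x in Set.Ioi 0, |x|^s ∂μ := by
      conv_lhs => rw [← h]
      rw [setIntegral_map measurableSet_Iio (by rw [h]; exact hs.aestronglyMeasurable)
        measurable_neg.aemeasurable]
      simp
    rw [h2] at hsplit
    linarith
  · refine ⟨1, by norm_num, fun s hs => ?_⟩
    rw [one_mul]
    congr 1
    symm
    apply Measure.restrict_eq_self_of_ae_mem
    rw [ae_iff]
    have : {a : ℝ | a ∉ Set.Ioi 0} ⊆ {x | x < 0} ∪ {0} := by
      intro x hx
      simp only [Set.mem_ofPred_eq, Set.mem_Ioi, not_lt] at hx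
      rcases hx.lt_or_eq with h | h
      · left; exact h
      · right; exact h
    exact measure_mono_null this (measure_union_null h hac)

/-- If `X` is log-concave and symmetric (`X` has the same distribution as `-X`)
or nonnegative (`X ≥ 0` a.s.), then for `p > q ≥ 1` one has `‖X‖_p ≤ (p/q) ‖X‖_q`. -/
theorem momNorm_le_of_logConcave_symm_or_nonneg
    (μ : Measure ℝ) (hμ : IsLogConcave μ)
    (hsym : μ.map (fun x => -x) = μ ∨ μ {x : ℝ | x < 0} = 0)
    (p q : ℝ) (hq : 1 ≤ q) (hpq : q < p) :
    momNorm μ p ≤ (p / q) * momNorm μ q := by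
  obtain ⟨hprob, hcase⟩ := hμ
  have hq0 : 0 < q := by linarith
  have hp0 : 0 < p := by linarith
  have hrhs : 0 ≤ p / q * momNorm μ q := by
    unfold momNorm
    have : 0 ≤ ∫ x, |x|^q ∂μ := integral_nonneg fun x => by positivity
    positivity
  rcases hcase with ⟨c, rfl⟩ | ⟨f, hf0, hμf, hf⟩
  · unfold momNorm
    rw [integral_dirac, integral_dirac, ← Real.rpow_mul (abs_nonneg c),
      ← Real.rpow_mul (abs_nonneg c), mul_one_div_cancel hp0.ne', mul_one_div_cancel hq0.ne',
      Real.rpow_one]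
    have : 1 ≤ p / q := by rw [le_div_iff₀ hq0]; linarith
    nlinarith [abs_nonneg c]
  by_cases hip : Integrable (fun x : ℝ => |x|^p) μ
  swap
  · have : momNorm μ p = 0 := by
      unfold momNorm
      rw [integral_undef hip, Real.zero_rpow (by positivity)]
    rw [this]; exact hrhs
  have hiq : Integrable (fun x : ℝ => |x|^q) μ := by
    refine ((integrable_const (1:ℝ)).add hip).mono' ?_ ?_
    · exact (measurable_id.abs.pow_const q).aestronglyMeasurable
    · filter_upwards with x
      simp only [Pi.add_apply]
      rw [Real.norm_of_nonneg (by positivity)]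
      rcases le_total |x| 1 with h | h
      · have := Real.rpow_le_one (abs_nonneg x) h hq0.le
        have : 0 ≤ |x|^p := by positivity
        linarith
      · have := Real.rpow_le_rpow_of_exponent_le h hpq.le
        linarith
  have hi0 : Integrable (fun x : ℝ => |x|^(0:ℝ)) μ := by
    simp only [Real.rpow_zero]; exact integrable_const _
  have hfm := meas_of_lc f hf0 hf
  have hac : μ {0} = 0 := by
    rw [hμf]
    exact withDensity_absolutelyContinuous _ _ (by simp)
  obtain ⟨C, hC, hCs⟩ := half_line μ hac hsym
  have hconv : ∀ s : ℝ, Integrable (fun x : ℝ => |x|^s) μ →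
      IntegrableOn (fun x => x^s * (C * f x)) (Set.Ioi 0) ∧
      ∫ x, |x|^s ∂μ = ∫ x in Set.Ioi 0, x^s * (C * f x) := by
    intro s hs
    have e1 : (fun x => ENNReal.ofReal (f x)) = fun x => ((f x).toNNReal : ENNReal) := rfl
    have hr : μ.restrict (Set.Ioi 0) = (volume.restrict (Set.Ioi 0)).withDensity
        (fun x => ((f x).toNNReal : ENNReal)) := by
      rw [hμf, restrict_withDensity measurableSet_Ioi, e1]
    have e2 : ∀ x ∈ Set.Ioi (0:ℝ), C * ((f x).toNNReal • |x|^s) = x^s * (C * f x) := by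
      intro x hx
      rw [NNReal.smul_def, Real.coe_toNNReal _ (hf0 x), abs_of_pos hx, smul_eq_mul]
      ring
    constructor
    · have h1 : Integrable (fun x : ℝ => |x|^s) (μ.restrict (Set.Ioi 0)) := hs.restrict
      rw [hr, integrable_withDensity_iff_integrable_smul hfm.real_toNNReal] at h1
      exact IntegrableOn.congr_fun (h1.const_mul C) e2 measurableSet_Ioi
    · rw [hCs s hs, hr, integral_withDensity_eq_integral_smul hfm.real_toNNReal,
        ← integral_const_mul]
      exact setIntegral_congr_fun measurableSet_Ioi e2
  obtain ⟨a0, b0⟩ := hconv 0 hi0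
  obtain ⟨aq, bq⟩ := hconv q hiq
  obtain ⟨ap, bp⟩ := hconv p hip
  simp only [Real.rpow_zero, one_mul] at a0 b0
  unfold momNorm
  rw [bp, bq]
  refine main_pos (fun x => C * f x) p q hq0 hpq (gam_ineq q p hq0 hpq)
    (fun x => mul_nonneg hC.le (hf0 x)) ?_ a0 ?_ aq ap
  · intro x y l hl0 hl1
    rw [Real.mul_rpow hC.le (hf0 x), Real.mul_rpow hC.le (hf0 y)]
    calc C^l * f x^l * (C^(1-l) * f y^(1-l)) = (C^l * C^(1-l)) * (f x^l * f y^(1-l)) := by ring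
      _ = C * (f x^l * f y^(1-l)) := by rw [← Real.rpow_add hC]; simp
      _ ≤ _ := mul_le_mul_of_nonneg_left (hf x y l hl0 hl1) hC.le
  · rw [← b0]; simp
end

section
/- If X is a log-concave real random variable with a density and with E X = 0, then P(X < 0) ≥ 1/e. -/
open MeasureTheory

/-- Log-concavity as in the statement. -/
def LCfun (f : ℝ → ℝ) : Prop :=
  ∀ x y l : ℝ, 0 ≤ l → l ≤ 1 → f x ^ l * f y ^ (1 - l) ≤ f (l * x + (1 - l) * y)

lemma LCfun.between {f : ℝ → ℝ} (h : LCfun f) {x y z : ℝ} (hxz : x ≤ z) (hzy : z ≤ y)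
    (hxy : x < y) :
    ∃ l : ℝ, 0 ≤ l ∧ l ≤ 1 ∧ (z < y → 0 < l) ∧ (x < z → l < 1) ∧
      f x ^ l * f y ^ (1 - l) ≤ f z := by
  have hd : 0 < y - x := by linarith
  have h0 : 0 ≤ (y - z) / (y - x) := div_nonneg (by linarith) hd.le
  have h1 : (y - z) / (y - x) ≤ 1 := by rw [div_le_one hd]; linarith
  refine ⟨(y - z) / (y - x), h0, h1, ?_, ?_, ?_⟩
  · intro h; exact div_pos (by linarith) hd
  · intro h; rw [div_lt_one hd]; linarith
  · have := h x y _ h0 h1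
    convert this using 2
    field_simp
    ring

lemma LCfun.quasi {f : ℝ → ℝ} (h : LCfun f) {x y z m : ℝ} (hm : 0 < m)
    (hxz : x ≤ z) (hzy : z ≤ y) (hx : m ≤ f x) (hy : m ≤ f y) : m ≤ f z := by
  rcases eq_or_lt_of_le (hxz.trans hzy) with he | hlt
  · have : z = x := by linarith
    rwa [this]
  obtain ⟨l, h0, h1, -, -, hl⟩ := h.between hxz hzy hlt
  calc m = m ^ l * m ^ (1 - l) := by
        rw [← Real.rpow_add hm]; simp
    _ ≤ f x ^ l * f y ^ (1 - l) := by
        apply mul_le_mul (Real.rpow_le_rpow hm.le hx h0)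
          (Real.rpow_le_rpow hm.le hy (by linarith)) (by positivity)
        exact Real.rpow_nonneg (hm.le.trans hx) _
    _ ≤ f z := hl

lemma LCfun.le_one {f : ℝ → ℝ} (h : LCfun f) {x a y : ℝ} (hxa : x < a) (hay : a < y)
    (hx : 1 ≤ f x) (ha : f a = 1) : f y ≤ 1 := by
  by_contra hy
  push Not at hy
  obtain ⟨l, h0, h1, -, hl1, hl⟩ := h.between hxa.le hay.le (hxa.trans hay)
  have h2 : 1 ≤ f x ^ l := Real.one_le_rpow hx h0
  have h3 : 1 < f y ^ (1 - l) := Real.one_lt_rpow hy (by linarith [hl1 hxa])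
  nlinarith

lemma LCfun.measurable {f : ℝ → ℝ} (hf0 : ∀ x, 0 ≤ f x) (h : LCfun f) : Measurable f := by
  apply measurable_of_Ioi
  intro t
  apply Set.OrdConnected.measurableSet
  constructor
  intro x hx y hy z hz
  simp only [Set.mem_preimage, Set.mem_Ioi] at *
  rcases lt_or_ge t 0 with ht | ht
  · exact ht.trans_le (hf0 z)
  · have : min (f x) (f y) ≤ f z :=
      h.quasi (lt_min (ht.trans_lt hx) (ht.trans_lt hy)) hz.1 hz.2
        (min_le_left _ _) (min_le_right _ _)
    exact (lt_min hx hy).trans_le this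

lemma LCfun.tilt {f : ℝ → ℝ} (hf0 : ∀ x, 0 ≤ f x) (h : LCfun f) (c a A : ℝ) (hA : 0 < A) :
    LCfun (fun x => f x / (A * Real.exp (c * (x - a)))) := by
  intro x y l h0 h1
  have e1 : ∀ z, 0 < A * Real.exp (c * (z - a)) := fun z => by positivity
  simp only
  rw [Real.div_rpow (hf0 _) (e1 _).le, Real.div_rpow (hf0 _) (e1 _).le, div_mul_div_comm]
  have : (A * Real.exp (c * (x - a))) ^ l * (A * Real.exp (c * (y - a))) ^ (1 - l)
      = A * Real.exp (c * (l * x + (1 - l) * y - a)) := by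
    rw [Real.mul_rpow hA.le (Real.exp_pos _).le, Real.mul_rpow hA.le (Real.exp_pos _).le,
      ← Real.exp_mul, ← Real.exp_mul]
    calc _ = (A ^ l * A ^ (1 - l)) *
          (Real.exp (c * (x - a) * l) * Real.exp (c * (y - a) * (1 - l))) := by ring
      _ = _ := by
        rw [← Real.rpow_add hA, ← Real.exp_add]
        simp only [add_sub_cancel, Real.rpow_one]
        congr 2; ring
  rw [this]
  exact div_le_div_of_nonneg_right (h x y l h0 h1) (e1 _).le

lemma integral_g (A c a x : ℝ) (hc : 0 < c) :
    IntegrableOn (fun z => A * Real.exp (c * (z - a))) (Set.Iic x) ∧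
    ∫ z in Set.Iic x, A * Real.exp (c * (z - a)) = A / c * Real.exp (c * (x - a)) := by
  have he : (fun z => A * Real.exp (c * (z - a))) =
      fun z => (A * Real.exp (-(c * a))) * Real.exp (c * z) := by
    funext z
    rw [mul_assoc, ← Real.exp_add]; congr 2; ring
  constructor
  · rw [he]
    exact (integrableOn_exp_mul_Iic hc x).const_mul _
  · rw [he, integral_const_mul, integral_exp_mul_Iic hc]
    rw [show c * (x - a) = -(c * a) + c * x by ring, Real.exp_add]
    ring

/-- Tangent bound for the distribution function. -/
lemma tangent {f : ℝ → ℝ} (hf0 : ∀ x, 0 ≤ f x) (h : LCfun f) (hi : Integrable f)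
    (a : ℝ) (hfa : 0 < f a) (hFa : 0 < ∫ z in Set.Iic a, f z) (x : ℝ) :
    ∫ z in Set.Iic x, f z ≤ (∫ z in Set.Iic a, f z) *
      Real.exp (f a / (∫ z in Set.Iic a, f z) * (x - a)) := by
  set Fa := ∫ z in Set.Iic a, f z with hFadef
  set c := f a / Fa with hcdef
  have hc : 0 < c := div_pos hfa hFa
  have hAc : f a / c = Fa := by rw [hcdef]; field_simp
  set g : ℝ → ℝ := fun z => f a * Real.exp (c * (z - a)) with hg
  have hgpos : ∀ z, 0 < g z := fun z => by simp only [hg]; positivity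
  have hgi : ∀ x, IntegrableOn g (Set.Iic x) := fun x => (integral_g (f a) c a x hc).1
  have hgv : ∀ x, ∫ z in Set.Iic x, g z = Fa * Real.exp (c * (x - a)) := fun x => by
    rw [← hAc]; exact (integral_g (f a) c a x hc).2
  have hlc := h.tilt hf0 c a (f a) hfa
  have h1 : ∀ z, 1 ≤ f z / g z ↔ g z ≤ f z := fun z => one_le_div (hgpos z)
  have h2 : ∀ z, f z / g z ≤ 1 ↔ f z ≤ g z := fun z => div_le_one (hgpos z)
  have hga : g a = f a := by simp [hg]
  have hgFa : ∫ z in Set.Iic a, g z = Fa := by rw [hgv]; simp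
  rw [← hgv]
  rcases le_or_gt a x with hax | hxa
  · obtain ⟨x0, hx0, hx0'⟩ : ∃ x0, x0 < a ∧ g x0 ≤ f x0 := by
      by_contra hcon
      push Not at hcon
      have hint : ∫ z in Set.Iic a, (g z - f z) = 0 := by
        rw [integral_sub (hgi a) hi.integrableOn, hgFa]; simp [hFadef]
      have hnn : 0 ≤ᵐ[volume.restrict (Set.Iic a)] fun z => g z - f z := by
        filter_upwards [ae_restrict_mem measurableSet_Iic] with z hz
        rcases eq_or_lt_of_le (Set.mem_Iic.1 hz) with e | e
        · simp [e, hga]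
        · simpa using (hcon z e).le
      have hz := (setIntegral_eq_zero_iff_of_nonneg_ae hnn
        ((hgi a).sub hi.integrableOn)).1 hint
      have : ∀ᵐ z ∂(volume.restrict (Set.Iio a)), False := by
        have h3 := ae_mono (Measure.restrict_mono_set volume Set.Iio_subset_Iic_self) hz
        filter_upwards [h3, ae_restrict_mem measurableSet_Iio] with z hz1 hz2
        have := hcon z hz2
        simp only [Pi.zero_apply] at hz1
        linarith
      rw [ae_iff] at this
      simp at this
    have hle : ∀ z, a < z → f z ≤ g z := fun z hz =>
      (h2 z).1 (hlc.le_one hx0 hz ((h1 x0).2 hx0') (by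
        change f a / g a = 1
        rw [hga, div_self hfa.ne']))
    have s1 : ∫ z in Set.Iic x, f z = Fa + ∫ z in Set.Ioc a x, f z := by
      rw [← Set.Iic_union_Ioc_eq_Iic hax, setIntegral_union (Set.Iic_disjoint_Ioc le_rfl)
        measurableSet_Ioc hi.integrableOn hi.integrableOn]
    have s2 : ∫ z in Set.Iic x, g z = Fa + ∫ z in Set.Ioc a x, g z := by
      rw [← hgFa]
      rw [← Set.Iic_union_Ioc_eq_Iic hax, setIntegral_union (Set.Iic_disjoint_Ioc le_rfl)
        measurableSet_Ioc (hgi a) ((hgi x).mono_set Set.Ioc_subset_Iic_self)]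
    rw [s1, s2]
    refine add_le_add le_rfl ?_
    exact setIntegral_mono_on hi.integrableOn ((hgi x).mono_set Set.Ioc_subset_Iic_self)
      measurableSet_Ioc fun z hz => hle z hz.1
  · rcases le_or_gt (g x) (f x) with hx | hx
    · have hle : ∀ z, x < z → z ≤ a → g z ≤ f z := fun z hz hza =>
        (h1 z).1 (hlc.quasi one_pos hz.le hza ((h1 x).2 hx) (by
          change 1 ≤ f a / g a
          rw [hga, div_self hfa.ne']))
      have s1 : Fa = (∫ z in Set.Iic x, f z) + ∫ z in Set.Ioc x a, f z := by
        rw [hFadef, ← Set.Iic_union_Ioc_eq_Iic hxa.le,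
          setIntegral_union (Set.Iic_disjoint_Ioc le_rfl)
          measurableSet_Ioc hi.integrableOn hi.integrableOn]
      have s2 : Fa = (∫ z in Set.Iic x, g z) + ∫ z in Set.Ioc x a, g z := by
        rw [← hgFa]
        rw [← Set.Iic_union_Ioc_eq_Iic hxa.le, setIntegral_union (Set.Iic_disjoint_Ioc le_rfl)
          measurableSet_Ioc (hgi x) ((hgi a).mono_set Set.Ioc_subset_Iic_self)]
      have s3 : ∫ z in Set.Ioc x a, g z ≤ ∫ z in Set.Ioc x a, f z :=
        setIntegral_mono_on ((hgi a).mono_set Set.Ioc_subset_Iic_self) hi.integrableOn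
          measurableSet_Ioc fun z hz => hle z hz.1 hz.2
      linarith
    · refine setIntegral_mono_on hi.integrableOn (hgi x) measurableSet_Iic fun z hz => ?_
      by_contra hcon
      push Not at hcon
      have := (h1 x).1 (hlc.quasi one_pos hz hxa.le ((h1 z).2 hcon.le) (by
          change 1 ≤ f a / g a
          rw [hga, div_self hfa.ne']))
      linarith

lemma cdf_sublevel (μ : Measure ℝ) [IsProbabilityMeasure μ] (u : ℝ) :
    μ {x | μ.real (Set.Iic x) ≤ u} ≤ ENNReal.ofReal u := by
  have hS : MeasurableSet {x | μ.real (Set.Iic x) ≤ u} := by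
    apply Set.OrdConnected.measurableSet
    constructor
    intro x hx y hy z hz
    exact (measureReal_mono (Set.Iic_subset_Iic.2 hz.2)).trans hy
  rw [hS.measure_eq_iSup_isCompact]
  refine iSup_le fun K => iSup_le fun hKS => iSup_le fun hK => ?_
  rcases K.eq_empty_or_nonempty with rfl | hne
  · simp
  obtain ⟨m, hm, hmax⟩ := hK.exists_isGreatest hne
  calc μ K ≤ μ (Set.Iic m) := measure_mono fun x hx => hmax hx
    _ = ENNReal.ofReal (μ.real (Set.Iic m)) := by simp [Measure.real]
    _ ≤ ENNReal.ofReal u := ENNReal.ofReal_le_ofReal (hKS hm)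

lemma log_cdf (μ : Measure ℝ) [IsProbabilityMeasure μ] :
    Integrable (fun x => -Real.log (μ.real (Set.Iic x))) μ ∧
    ∫ x, -Real.log (μ.real (Set.Iic x)) ∂μ ≤ 1 := by
  have hmono : Monotone fun x => μ.real (Set.Iic x) :=
    fun x y hxy => measureReal_mono (Set.Iic_subset_Iic.2 hxy)
  have hmeas : Measurable fun x => -Real.log (μ.real (Set.Iic x)) :=
    (Real.measurable_log.comp hmono.measurable).neg
  have hnn : ∀ x, 0 ≤ -Real.log (μ.real (Set.Iic x)) := fun x => by
    have := Real.log_nonpos (measureReal_nonneg (μ := μ) (s := Set.Iic x)) measureReal_le_one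
    linarith
  have hl : ∫⁻ x, ENNReal.ofReal (-Real.log (μ.real (Set.Iic x))) ∂μ ≤ 1 := by
    rw [lintegral_eq_lintegral_meas_le μ (Filter.Eventually.of_forall hnn) hmeas.aemeasurable]
    have : ∀ t ∈ Set.Ioi (0:ℝ), μ {x | t ≤ -Real.log (μ.real (Set.Iic x))}
        ≤ ENNReal.ofReal (Real.exp (-t)) := fun t ht => by
      refine (measure_mono fun x hx => ?_).trans (cdf_sublevel μ _)
      simp only [Set.mem_setOf_eq] at *
      rcases eq_or_lt_of_le (measureReal_nonneg (μ := μ) (s := Set.Iic x)) with e | e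
      · rw [← e]; positivity
      · rw [← Real.log_le_iff_le_exp e]; linarith
    calc _ ≤ ∫⁻ t in Set.Ioi (0:ℝ), ENNReal.ofReal (Real.exp (-t)) :=
          setLIntegral_mono' measurableSet_Ioi this
      _ = ENNReal.ofReal (∫ t in Set.Ioi (0:ℝ), Real.exp (-t)) := by
          rw [ofReal_integral_eq_lintegral_ofReal]
          · exact integrableOn_exp_neg_Ioi 0
          · exact Filter.Eventually.of_forall fun t => (Real.exp_pos _).le
      _ = 1 := by rw [integral_exp_neg_Ioi_zero]; simp
  have hI : Integrable (fun x => -Real.log (μ.real (Set.Iic x))) μ := by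
    refine ⟨hmeas.aestronglyMeasurable, ?_⟩
    rw [hasFiniteIntegral_iff_ofReal (Filter.Eventually.of_forall hnn)]
    exact hl.trans_lt ENNReal.one_lt_top
  refine ⟨hI, ?_⟩
  rw [integral_eq_lintegral_of_nonneg_ae (Filter.Eventually.of_forall hnn)
    hmeas.aestronglyMeasurable]
  exact ENNReal.toReal_le_of_le_ofReal zero_le_one (by simpa using hl)

lemma cdf_bound (μ : Measure ℝ) [IsProbabilityMeasure μ] (f : ℝ → ℝ)
    (hf0 : ∀ x, 0 ≤ f x)
    (hμf : μ = volume.withDensity (fun x => ENNReal.ofReal (f x)))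
    (hlc : LCfun f) (a : ℝ) (ha0 : 0 < μ.real (Set.Iic a)) (hfa : 0 < f a) :
    ∃ c : ℝ, 0 < c ∧ ∀ᵐ x ∂μ, c * (a - x) ≤
      -Real.log (μ.real (Set.Iic x)) + Real.log (μ.real (Set.Iic a)) := by
  have hm := hlc.measurable hf0
  have hi : Integrable f := by
    refine ⟨hm.aestronglyMeasurable, ?_⟩
    rw [hasFiniteIntegral_iff_ofReal (Filter.Eventually.of_forall hf0)]
    have : μ Set.univ < ⊤ := measure_lt_top _ _
    rw [hμf, withDensity_apply _ MeasurableSet.univ] at this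
    simpa using this
  have hF : ∀ x, μ.real (Set.Iic x) = ∫ z in Set.Iic x, f z := fun x => by
    rw [integral_eq_lintegral_of_nonneg_ae (Filter.Eventually.of_forall hf0)
      hm.aestronglyMeasurable, Measure.real]
    conv_lhs => rw [hμf]
    rw [withDensity_apply _ measurableSet_Iic]
  have ha0' := ha0
  rw [hF] at ha0'
  refine ⟨f a / ∫ z in Set.Iic a, f z, div_pos hfa ha0', ?_⟩
  have hpos : ∀ᵐ x ∂μ, 0 < μ.real (Set.Iic x) := by
    rw [ae_iff]
    have := cdf_sublevel μ 0
    simpa using this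
  filter_upwards [hpos] with x hx
  have ht := tangent hf0 hlc hi a hfa ha0' x
  rw [← hF] at ht
  have := Real.log_le_log hx ht
  rw [Real.log_mul ha0'.ne' (Real.exp_pos _).ne', Real.log_exp] at this
  rw [hF a]
  linarith

lemma lower_integrable (μ : Measure ℝ) [IsProbabilityMeasure μ] (f : ℝ → ℝ)
    (hf0 : ∀ x, 0 ≤ f x)
    (hμf : μ = volume.withDensity (fun x => ENNReal.ofReal (f x)))
    (hlc : LCfun f) (a : ℝ) (ha0 : 0 < μ.real (Set.Iic a)) (hfa : 0 < f a) :
    Integrable (fun x => max (a - x) 0) μ := by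
  obtain ⟨c, hc, hb⟩ := cdf_bound μ f hf0 hμf hlc a ha0 hfa
  have hL := (log_cdf μ).1
  refine (hL.const_mul c⁻¹).mono' (by fun_prop) ?_
  filter_upwards [hb] with x hx
  have h1 := Real.log_nonpos (measureReal_nonneg (μ := μ) (s := Set.Iic x)) measureReal_le_one
  have h2 := Real.log_nonpos (measureReal_nonneg (μ := μ) (s := Set.Iic a)) measureReal_le_one
  rw [Real.norm_of_nonneg (le_max_right _ _)]
  apply max_le
  · rw [← div_eq_inv_mul, le_div_iff₀ hc]; linarith
  · exact mul_nonneg (inv_nonneg.2 hc.le) (by linarith)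

lemma map_neg_density (μ : Measure ℝ) (f : ℝ → ℝ) (hm : Measurable f)
    (hμf : μ = volume.withDensity (fun x => ENNReal.ofReal (f x))) :
    μ.map Neg.neg = volume.withDensity (fun x => ENNReal.ofReal (f (-x))) := by
  ext s hs
  rw [Measure.map_apply measurable_neg hs, hμf, withDensity_apply _ (measurable_neg hs),
    withDensity_apply _ hs]
  have := (Measure.measurePreserving_neg (volume : Measure ℝ)).setLIntegral_comp_preimage hs
    (f := fun x => ENNReal.ofReal (f (-x))) (by fun_prop)
  simpa using this

lemma Ioo_pos (μ : Measure ℝ) [IsProbabilityMeasure μ] (f : ℝ → ℝ) (hm : Measurable f)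
    (hμf : μ = volume.withDensity (fun x => ENNReal.ofReal (f x)))
    (x y : ℝ) (hxy : x < y) (hpos : ∀ z, x ≤ z → z ≤ y → 0 < f z) : 0 < μ (Set.Ioo x y) := by
  rw [hμf, withDensity_apply _ measurableSet_Ioo, setLIntegral_pos_iff (by fun_prop)]
  have : Set.Ioo x y ⊆ (Function.support fun x => ENNReal.ofReal (f x)) ∩ Set.Ioo x y := by
    intro z hz
    refine ⟨?_, hz⟩
    simp [hpos z hz.1.le hz.2.le]
  refine lt_of_lt_of_le ?_ (measure_mono this)
  simp [hxy]

lemma id_integrable (μ : Measure ℝ) [IsProbabilityMeasure μ] (f : ℝ → ℝ)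
    (hf0 : ∀ x, 0 ≤ f x)
    (hμf : μ = volume.withDensity (fun x => ENNReal.ofReal (f x)))
    (hlc : LCfun f) : Integrable (fun x => x) μ := by
  have hm := hlc.measurable hf0
  obtain ⟨x, y, hxy, hx, hy⟩ : ∃ x y, x < y ∧ 0 < f x ∧ 0 < f y := by
    by_contra hcon
    push Not at hcon
    have hsub : Set.Subsingleton {x | 0 < f x} := by
      intro x hx y hy
      by_contra hne
      rcases lt_or_gt_of_ne hne with hl | hl
      · exact absurd hy (not_lt.2 (hcon x y hl hx))
      · exact absurd hx (not_lt.2 (hcon y x hl hy))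
    have hz : volume {x | 0 < f x} = 0 := hsub.measure_zero _
    have hae : (fun x => ENNReal.ofReal (f x)) =ᵐ[volume] 0 := by
      rw [Filter.EventuallyEq, ae_iff]
      refine measure_mono_null (fun x hx => ?_) hz
      simpa using hx
    have h1 : μ Set.univ = 1 := measure_univ
    rw [hμf, withDensity_congr_ae hae] at h1
    simp at h1
  have hbt : ∀ z, x ≤ z → z ≤ y → 0 < f z := fun z h1 h2 =>
    (lt_min hx hy).trans_le (hlc.quasi (lt_min hx hy) h1 h2 (min_le_left _ _) (min_le_right _ _))
  set a := (x + y) / 2 with hadef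
  have hxa : x < a := by linarith
  have hay : a < y := by linarith
  have hfa := hbt a hxa.le hay.le
  have p1 : 0 < μ.real (Set.Iic a) := by
    refine ENNReal.toReal_pos ?_ (measure_ne_top _ _)
    exact ((Ioo_pos μ f hm hμf x a hxa fun z h1 h2 => hbt z h1 (h2.trans hay.le)).trans_le
      (measure_mono fun z hz => hz.2.le)).ne'
  have i1 := lower_integrable μ f hf0 hμf hlc a p1 hfa
  have hneg : Measurable (Neg.neg : ℝ → ℝ) := measurable_neg
  haveI : IsProbabilityMeasure (μ.map Neg.neg) :=
    Measure.isProbabilityMeasure_map hneg.aemeasurable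
  have hlc' : LCfun fun x => f (-x) := by
    intro x y l h0 h1
    have := hlc (-x) (-y) l h0 h1
    convert this using 2
    ring
  have p2 : 0 < (μ.map Neg.neg).real (Set.Iic (-a)) := by
    refine ENNReal.toReal_pos ?_ (measure_ne_top _ _)
    rw [Measure.map_apply hneg measurableSet_Iic]
    exact ((Ioo_pos μ f hm hμf a y hay fun z h1 h2 => hbt z (hxa.le.trans h1) h2).trans_le
      (measure_mono fun z hz => by simpa using hz.1.le)).ne'
  have i2 := lower_integrable (μ.map Neg.neg) (fun x => f (-x)) (fun x => hf0 _)
    (map_neg_density μ f hm hμf) hlc' (-a) p2 (by simpa using hfa)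
  have i3 := i2.comp_measurable hneg
  have i4 : Integrable (fun x => (max (-a - -x) 0 - max (a - x) 0) + a) μ :=
    (i3.sub i1).add (integrable_const a)
  refine i4.congr (Filter.Eventually.of_forall fun z => ?_)
  simp only
  rcases le_total z a with h | h
  · rw [max_eq_right (by linarith), max_eq_left (by linarith)]; ring
  · rw [max_eq_left (by linarith), max_eq_right (by linarith)]; ring

/-- If `X` is a log-concave real random variable with a density and `E X = 0`,
then `P(X < 0) ≥ 1/e`. Here having a log-concave density means that the
distribution `μ` of `X` equals `f · Lebesgue` with
`f x ^ l * f y ^ (1 - l) ≤ f (l * x + (1 - l) * y)` for all `x y` and `l ∈ [0, 1]`. -/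
theorem measure_neg_ge_inv_e_of_logConcave_meanZero
    (μ : Measure ℝ) [IsProbabilityMeasure μ] (f : ℝ → ℝ)
    (hf0 : ∀ x, 0 ≤ f x)
    (hμf : μ = volume.withDensity (fun x => ENNReal.ofReal (f x)))
    (hlc : ∀ x y l : ℝ, 0 ≤ l → l ≤ 1 → f x ^ l * f y ^ (1 - l) ≤ f (l * x + (1 - l) * y))
    (hmean : ∫ x, x ∂μ = 0) :
    Real.exp (-1) ≤ (μ {x : ℝ | x < 0}).toReal := by
  have hI := id_integrable μ f hf0 hμf hlc
  have hm := LCfun.measurable hf0 hlc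
  have hac : μ ≪ volume := by rw [hμf]; exact withDensity_absolutelyContinuous _ _
  have h0 : μ {0} = 0 := hac (by simp)
  have hne : ∀ᵐ x ∂μ, x ≠ 0 := by rw [ae_iff]; simpa using h0
  have hF : (μ {x : ℝ | x < 0}).toReal = μ.real (Set.Iic 0) := by
    rw [Measure.real]
    congr 1
    apply measure_congr
    filter_upwards [hne] with x hx
    apply propext
    change x < 0 ↔ x ≤ 0
    exact ⟨le_of_lt, fun h => lt_of_le_of_ne h hx⟩
  rw [hF]
  -- both sides have positive mass
  have hp1 : 0 < μ.real (Set.Iic 0) := by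
    by_contra hcon
    have hz : μ (Set.Iic 0) = 0 := by
      have := le_antisymm (not_lt.1 hcon) measureReal_nonneg
      rwa [measureReal_eq_zero_iff] at this
    have hpos : ∀ᵐ x ∂μ, 0 < x := by
      rw [ae_iff]; simp only [not_lt]; exact hz
    have h1 := (integral_eq_zero_iff_of_nonneg_ae (hpos.mono fun x hx => hx.le) hI).1 hmean
    have : ∀ᵐ x ∂μ, False := by
      filter_upwards [h1, hne] with x h1 h2
      exact h2 h1
    rw [ae_iff] at this
    simp at this
  have hp2 : 0 < μ (Set.Ioi 0) := by
    by_contra hcon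
    have hz : μ (Set.Ioi 0) = 0 := le_antisymm (not_lt.1 hcon) (zero_le)
    have hpos : ∀ᵐ x ∂μ, 0 ≤ -x := by
      rw [ae_iff]; simpa [Set.Ioi] using hz
    have hmean' : ∫ x, -x ∂μ = 0 := by rw [integral_neg, hmean, neg_zero]
    have h1 := (integral_eq_zero_iff_of_nonneg_ae hpos hI.neg).1 hmean'
    have : ∀ᵐ x ∂μ, False := by
      filter_upwards [h1, hne] with x h1 h2
      exact h2 (by simpa using h1)
    rw [ae_iff] at this
    simp at this
  have hex : ∀ s : Set ℝ, MeasurableSet s → 0 < μ s → ∃ x ∈ s, 0 < f x := by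
    intro s hs hpos
    by_contra hcon
    push Not at hcon
    rw [hμf, withDensity_apply _ hs] at hpos
    have : ∫⁻ x in s, ENNReal.ofReal (f x) = ∫⁻ x in s, 0 :=
      setLIntegral_congr_fun hs fun x hx => ENNReal.ofReal_of_nonpos (hcon x hx)
    rw [this] at hpos
    simp at hpos
  obtain ⟨x, hx, hfx⟩ := hex (Set.Iic 0) measurableSet_Iic
    (by
      rw [Measure.real] at hp1
      exact (ENNReal.toReal_pos_iff.1 hp1).1)
  obtain ⟨y, hy, hfy⟩ := hex (Set.Ioi 0) measurableSet_Ioi hp2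
  have hf00 : 0 < f 0 := (lt_min hfx hfy).trans_le
    (LCfun.quasi hlc (lt_min hfx hfy) hx (le_of_lt hy) (min_le_left _ _) (min_le_right _ _))
  obtain ⟨c, hc, hb⟩ := cdf_bound μ f hf0 hμf hlc 0 hp1 hf00
  obtain ⟨hL, hL1⟩ := log_cdf μ
  have hint : ∫ x, c * (0 - x) ∂μ ≤
      ∫ x, (-Real.log (μ.real (Set.Iic x)) + Real.log (μ.real (Set.Iic 0))) ∂μ :=
    integral_mono_ae (((integrable_const 0).sub hI).const_mul c)
      (hL.add (integrable_const _)) hb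
  rw [integral_const_mul, integral_add hL (integrable_const _)] at hint
  have hmean' : ∫ x, (0 - x) ∂μ = 0 := by
    simp only [zero_sub]
    rw [integral_neg, hmean, neg_zero]
  rw [hmean', mul_zero] at hint
  simp only [integral_neg, integral_const, probReal_univ, one_smul] at hint hL1
  rw [← Real.le_log_iff_exp_le hp1]
  linarith
end

section
/- The function f(x) = (e^{−1}·Γ(x+1)·x^{−x})^{1/x} is decreasing for x ≥ e³/(2π). Equivalently, for e³/(2π) ≤ x < y one has e^{−1/y}·Γ(y+1)^{1/y}/y ≤ e^{−1/x}·Γ(x+1)^{1/x}/x. -/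
/-- The Binet remainder in the Stirling formula. -/
noncomputable def binetMu (x : ℝ) : ℝ :=
  Real.log (Real.Gamma (x + 1)) - x * Real.log x + x - Real.log (2 * Real.pi * x) / 2

/-- The difference of consecutive Binet remainders. -/
noncomputable def binetD (x : ℝ) : ℝ := (x + 1 / 2) * Real.log (1 + x⁻¹) - 1

lemma binetD_hasSum {a : ℝ} (h : 0 < a) :
    HasSum (fun k : ℕ => (1 / (2 * (k : ℝ) + 1)) * (1 / (2 * a + 1)) ^ (2 * k))
      (binetD a + 1) := by
  have h1 := (Real.hasSum_log_one_add_inv h).mul_left (a + 1 / 2)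
  have e : binetD a + 1 = (a + 1 / 2) * Real.log (1 + a⁻¹) := by unfold binetD; ring
  rw [e]
  refine (congrArg (fun f => HasSum f ((a + 1 / 2) * Real.log (1 + a⁻¹))) ?_).mp h1
  funext k
  have h2 : (2 * a + 1) ≠ 0 := by positivity
  have h3 : (2 * (k : ℝ) + 1) ≠ 0 := by positivity
  rw [pow_succ]
  generalize (1 / (2 * a + 1)) ^ (2 * k) = P
  field_simp

lemma binetD_nonneg {a : ℝ} (h : 0 < a) : 0 ≤ binetD a := by
  have h1 := (binetD_hasSum h)
  have h2 := h1.summable.le_tsum 0 (fun k _ => by positivity)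
  rw [h1.tsum_eq] at h2
  simp at h2
  exact h2

lemma binetD_anti {a b : ℝ} (h : 0 < a) (hab : a ≤ b) : binetD b ≤ binetD a := by
  have h1 := hasSum_le (fun k => ?_) (binetD_hasSum (h.trans_le hab)) (binetD_hasSum h)
  · linarith
  · have : 0 < b := h.trans_le hab
    gcongr

lemma log_Gamma_add_one {y : ℝ} (hy : 0 < y) :
    Real.log (Real.Gamma (y + 1)) = Real.log (Real.Gamma y) + Real.log y := by
  rw [Real.Gamma_add_one hy.ne', Real.log_mul hy.ne' (Real.Gamma_pos_of_pos hy).ne', add_comm]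

lemma binetMu_sub {x : ℝ} (hx : 0 < x) : binetMu x - binetMu (x + 1) = binetD x := by
  unfold binetMu binetD
  have e : 1 + x⁻¹ = (x + 1) / x := by field_simp
  have hx1 : 0 < x + 1 := by linarith
  have hp := Real.pi_pos
  rw [log_Gamma_add_one hx1, e, Real.log_div hx1.ne' hx.ne',
    Real.log_mul (by positivity) hx.ne', Real.log_mul (by positivity) hx1.ne']
  ring

open Filter Topology in
lemma binetMu_tendsto {x : ℝ} (hx : 0 < x) :
    Tendsto (fun n : ℕ => binetMu (x + n)) atTop (𝓝 0) := by
  have h1 := Real.BohrMollerup.tendsto_log_gamma hx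
  have hs : Tendsto (fun n : ℕ => Real.log (Stirling.stirlingSeq n)) atTop
      (𝓝 (Real.log (Real.sqrt Real.pi))) :=
    Stirling.tendsto_stirlingSeq_sqrt_pi.log (by positivity)
  have hl : Tendsto (fun n : ℕ => (n : ℝ) * Real.log (1 + x / n)) atTop (𝓝 x) :=
    (Real.tendsto_mul_log_one_add_div_atTop x).comp tendsto_natCast_atTop_atTop
  have hl0 : Tendsto (fun n : ℕ => Real.log (1 + x / n)) atTop (𝓝 0) := by
    have : Tendsto (fun n : ℕ => 1 + x / (n : ℝ)) atTop (𝓝 (1 + 0)) :=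
      tendsto_const_nhds.add (tendsto_const_div_atTop_nhds_zero_nat x)
    simpa using this.log (by norm_num)
  have key : Tendsto (fun n : ℕ => (Real.log (Real.Gamma x) - Real.BohrMollerup.logGammaSeq x n)
      + (Real.log (Stirling.stirlingSeq n) - Real.log (Real.sqrt Real.pi))
      + (x - (n : ℝ) * Real.log (1 + x / n)) - (x + 1 / 2) * Real.log (1 + x / n)) atTop
      (𝓝 ((Real.log (Real.Gamma x) - Real.log (Real.Gamma x))
      + (Real.log (Real.sqrt Real.pi) - Real.log (Real.sqrt Real.pi))
      + (x - x) - (x + 1 / 2) * 0)) :=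
    (((tendsto_const_nhds.sub h1).add (hs.sub tendsto_const_nhds)).add
      (tendsto_const_nhds.sub hl)).sub (hl0.const_mul _)
  simp only [sub_self, mul_zero, add_zero] at key
  refine key.congr' ?_
  filter_upwards [eventually_ge_atTop 1] with n hn
  have hn0 : (0 : ℝ) < n := by exact_mod_cast hn
  have hxn : 0 < x + n := by positivity
  have hp := Real.pi_pos
  have hG := Real.BohrMollerup.f_add_nat_eq (f := fun y => Real.log (Real.Gamma y))
    (fun {y} hy => log_Gamma_add_one hy) hx (n + 1)
  have e : 1 + x / n = (x + n) / n := by field_simp; ring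
  have e2 : x + ((n + 1 : ℕ) : ℝ) = x + n + 1 := by push_cast; ring
  simp only [e2] at hG
  unfold binetMu
  rw [hG, Stirling.log_stirlingSeq_formula, e, Real.log_div hxn.ne' hn0.ne',
    Real.log_sqrt hp.le, Real.log_div hn0.ne' (Real.exp_pos 1).ne', Real.log_exp,
    Real.log_mul two_ne_zero hn0.ne', Real.log_mul (by positivity) hxn.ne',
    Real.log_mul two_ne_zero hp.ne', Real.BohrMollerup.logGammaSeq]
  ring

lemma binetMu_step {x : ℝ} (hx : 0 < x) (n : ℕ) :
    binetMu (x + n) - binetMu (x + (n + 1 : ℕ)) = binetD (x + n) := by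
  rw [← binetMu_sub (by positivity)]
  push_cast
  rw [add_assoc]

lemma binetMu_nonneg {x : ℝ} (hx : 0 < x) : 0 ≤ binetMu x := by
  have ha : Antitone (fun n : ℕ => binetMu (x + n)) := antitone_nat_of_succ_le fun n => by
    have := binetMu_step hx n
    have := binetD_nonneg (a := x + n) (by positivity)
    linarith
  simpa using ha.le_of_tendsto (binetMu_tendsto hx) 0

lemma binetMu_anti {x y : ℝ} (hx : 0 < x) (hxy : x ≤ y) : binetMu y ≤ binetMu x := by
  have hy := hx.trans_le hxy
  have ha : Antitone (fun n : ℕ => binetMu (x + n) - binetMu (y + n)) :=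
    antitone_nat_of_succ_le fun n => by
      have := binetMu_step hx n
      have := binetMu_step hy n
      have := binetD_anti (a := x + n) (b := y + n) (by positivity) (by linarith)
      linarith
  have := ha.le_of_tendsto ((binetMu_tendsto hx).sub (binetMu_tendsto hy)) 0
  simp at this
  exact this

lemma f_eq_exp {x : ℝ} (hx : 0 < x) :
    Real.exp (-1 / x) * Real.Gamma (x + 1) ^ (1 / x) / x =
      Real.exp (-1 + (Real.log (2 * Real.pi * x) / 2 - 1 + binetMu x) / x) := by
  have hG : 0 < Real.Gamma (x + 1) := Real.Gamma_pos_of_pos (by linarith)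
  rw [Real.rpow_def_of_pos hG]
  nth_rewrite 4 [← Real.exp_log hx]
  rw [← Real.exp_add, ← Real.exp_sub]
  congr 1
  unfold binetMu
  field_simp
  ring


/-- The function `f(x) = (e^{-1} Γ(x+1) x^{-x})^{1/x}` is decreasing for
`x ≥ e³/(2π)`: for `e³/(2π) ≤ x < y` one has
`e^{-1/y} Γ(y+1)^{1/y}/y ≤ e^{-1/x} Γ(x+1)^{1/x}/x`. -/
theorem exp_gamma_rpow_div_anti (x y : ℝ)
    (hx : Real.exp 1 ^ (3 : ℕ) / (2 * Real.pi) ≤ x) (hxy : x < y) :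
    Real.exp (-1 / y) * Real.Gamma (y + 1) ^ (1 / y) / y ≤
      Real.exp (-1 / x) * Real.Gamma (x + 1) ^ (1 / x) / x := by
  have hp := Real.pi_pos
  have hx0 : 0 < x := lt_of_lt_of_le (by positivity) hx
  have hy0 : 0 < y := hx0.trans hxy
  rw [f_eq_exp hx0, f_eq_exp hy0]
  apply Real.exp_le_exp.mpr
  have hmu := binetMu_anti hx0 hxy.le
  have hmu0 := binetMu_nonneg hx0
  have h3 : 3 ≤ Real.log (2 * Real.pi * x) := by
    rw [Real.le_log_iff_exp_le (by positivity)]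
    rw [div_le_iff₀ (by positivity), ← Real.exp_nat_mul] at hx
    norm_num at hx
    linarith
  have hlog : Real.log (2 * Real.pi * y) ≤ Real.log (2 * Real.pi * x) + (y / x - 1) := by
    have e : 2 * Real.pi * y = (2 * Real.pi * x) * (y / x) := by field_simp
    rw [e, Real.log_mul (by positivity) (by positivity)]
    linarith [Real.log_le_sub_one_of_pos (show 0 < y / x by positivity)]
  have hr : 0 ≤ y / x - 1 := by
    rw [sub_nonneg, one_le_div hx0]; exact hxy.le
  generalize Real.log (2 * Real.pi * x) = A at *
  generalize Real.log (2 * Real.pi * y) = B at *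
  have hmain : B / 2 - 1 + binetMu y ≤ (A / 2 - 1 + binetMu x) * (y / x) := by
    nlinarith [mul_nonneg hr hmu0, mul_nonneg hr (sub_nonneg.mpr h3)]
  have : (B / 2 - 1 + binetMu y) / y ≤ (A / 2 - 1 + binetMu x) / x := by
    rw [div_le_iff₀ hy0]
    calc _ ≤ _ := hmain
      _ = _ := by ring
  linarith
end

section
/- Suppose p ≥ 1, α ∈ [1/(e−1), 1], and t satisfies either t = α^p/Γ(p+1), or t = α^p·p^p together with α^p·p^p ≥ 1. Then W(t, α) := (t^{t/(t+α)}/(t+α))·(α+1) ≤ √(2πp/e). -/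
lemma aux_amgm (α t : ℝ) (hα : 0 < α) (ht : 0 < t) :
    t ^ (t / (t + α)) / (t + α) * (α + 1) ≤ (1 + α) * (t ^ 2 + α) / (t + α) ^ 2 := by
  have h := Real.geom_mean_le_arith_mean2_weighted (w₁ := t / (t + α)) (w₂ := α / (t + α))
    (p₁ := t) (p₂ := 1) (by positivity) (by positivity) ht.le zero_le_one (by field_simp)
  rw [Real.one_rpow, mul_one] at h
  calc t ^ (t / (t + α)) / (t + α) * (α + 1)
      ≤ (t / (t + α) * t + α / (t + α) * 1) / (t + α) * (α + 1) := by gcongr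
    _ = _ := by field_simp; ring

lemma aux_const (p : ℝ) (hp : 0 ≤ p) : 2.311 * p ≤ 2 * Real.pi * p / Real.exp 1 := by
  have h1 := Real.pi_gt_d4
  have h2 := Real.exp_one_lt_d9
  rw [le_div_iff₀ (Real.exp_pos 1)]
  have : 2.311 * Real.exp 1 ≤ 2 * Real.pi := by linarith
  nlinarith

lemma aux_alpha (α : ℝ) (h : 1 / (Real.exp 1 - 1) ≤ α) : 0.5819 ≤ α := by
  have h2 := Real.exp_one_lt_d9
  have h3 := Real.exp_one_gt_d9
  refine le_trans ?_ h
  rw [le_div_iff₀ (by linarith)]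
  linarith

lemma aux_gamma (n : ℕ) (θ : ℝ) (h0 : 0 ≤ θ) (h1 : θ ≤ 1) :
    Real.Gamma (n + θ + 1) ≤ n.factorial * ((n : ℝ) + 1) ^ θ := by
  have hn : (0 : ℝ) ≤ n := Nat.cast_nonneg n
  rcases h0.eq_or_lt with rfl | h0
  · simp [Real.Gamma_nat_eq_factorial]
  rcases h1.eq_or_lt with rfl | h1
  · have := Real.Gamma_nat_eq_factorial (n + 1)
    push_cast at this
    rw [this, Nat.factorial_succ]; push_cast; rw [Real.rpow_one]; linarith
  have h := Real.Gamma_mul_add_mul_le_rpow_Gamma_mul_rpow_Gamma (s := n + 1) (t := n + 1 + 1)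
    (a := 1 - θ) (b := θ) (by positivity) (by positivity) (by linarith) h0 (by ring)
  have e : (1 - θ) * ((n : ℝ) + 1) + θ * (n + 1 + 1) = n + θ + 1 := by ring
  rw [e, Real.Gamma_add_one (s := (n : ℝ) + 1) (by positivity), Real.Gamma_nat_eq_factorial] at h
  have hf : (0 : ℝ) < n.factorial := by positivity
  refine h.trans (le_of_eq ?_)
  rw [Real.mul_rpow (by positivity) hf.le, mul_left_comm, ← Real.rpow_add hf]
  simp [mul_comm]

lemma aux_s (n : ℕ) (p α q r : ℝ) (hα : 0.5819 ≤ α) (hα1 : α ≤ 1) (h0 : (n : ℝ) + 1 ≤ p)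
    (h1 : p ≤ n + 1 + q) (hq : q ≤ 1) (hr0 : 0 ≤ r)
    (hr : r ≤ (0.5819 / ((n : ℝ) + 2)) ^ q) :
    α * (0.5819 ^ n / (n + 1).factorial * r) ≤ α ^ p / Real.Gamma (p + 1) := by
  have hn : (0 : ℝ) ≤ n := Nat.cast_nonneg n
  have ha : 0 < α := by linarith
  obtain ⟨θ, rfl⟩ : ∃ θ, p = ((n + 1 : ℕ) : ℝ) + θ := ⟨p - ((n + 1 : ℕ) : ℝ), by ring⟩
  have hθ : 0 ≤ θ := by push_cast at h0; linarith
  have hθq : θ ≤ q := by push_cast at h1; linarith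
  have hg := aux_gamma (n + 1) θ hθ (hθq.trans hq)
  have hgp : 0 < Real.Gamma (((n + 1 : ℕ) : ℝ) + θ + 1) := Real.Gamma_pos_of_pos (by positivity)
  have e2 : ((n + 1 : ℕ) : ℝ) + 1 = (n : ℝ) + 2 := by push_cast; ring
  rw [e2] at hg
  have hx : α / ((n : ℝ) + 2) ≤ 1 := by
    rw [div_le_one (by positivity)]; linarith
  have hr2 : r ≤ (α / ((n : ℝ) + 2)) ^ θ := by
    calc r ≤ (0.5819 / ((n : ℝ) + 2)) ^ q := hr
      _ ≤ (α / ((n : ℝ) + 2)) ^ q := by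
        apply Real.rpow_le_rpow (by positivity) (by gcongr) (by linarith)
      _ ≤ _ := Real.rpow_le_rpow_of_exponent_ge (by positivity) hx hθq
  calc α * (0.5819 ^ n / (n + 1).factorial * r)
      ≤ α * (α ^ n / (n + 1).factorial * (α / ((n : ℝ) + 2)) ^ θ) := by
        gcongr
    _ = α ^ (((n + 1 : ℕ) : ℝ) + θ) / ((n + 1).factorial * ((n : ℝ) + 2) ^ θ) := by
        rw [Real.rpow_add ha, Real.rpow_natCast, Real.div_rpow ha.le (by positivity)]
        field_simp
        ring
    _ ≤ _ := by gcongr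

lemma aux_main (α t p a s0 : ℝ) (hα : 0.5819 ≤ α) (hα1 : α ≤ 1) (ht0 : 0 < t) (ht : t ≤ α)
    (hs0 : 0 ≤ s0) (hs : α * s0 ≤ t) (ha : 0 ≤ a) (hp : a ≤ p)
    (hb : (2.7186 + s0 ^ 2 * 1.5819) ^ 2 ≤ 2.311 * a * (1 + s0) ^ 4) :
    t ^ (t / (t + α)) / (t + α) * (α + 1) ≤ Real.sqrt (2 * Real.pi * p / Real.exp 1) := by
  have hαp : 0 < α := by linarith
  refine (aux_amgm α t hαp ht0).trans ?_
  obtain ⟨s, rfl⟩ : ∃ s, t = α * s := ⟨t / α, by field_simp⟩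
  have hsp : 0 < s := pos_of_mul_pos_right ht0 hαp.le
  have hs1 : s ≤ 1 := by nlinarith
  have hss : s0 ≤ s := le_of_mul_le_mul_left hs hαp
  have e1 : (1 + α) * ((α * s) ^ 2 + α) / (α * s + α) ^ 2
      = (1 / α + 1 + s ^ 2 + s ^ 2 * α) / (1 + s) ^ 2 := by
    field_simp; ring
  have hs2 : s ^ 2 ≤ 1 := by nlinarith
  have e2 : 1 / α + 1 + s ^ 2 + s ^ 2 * α ≤ 2.7186 + s ^ 2 * 1.5819 := by
    have : 1 / α ≤ 1.7186 - s ^ 2 * (α - 0.5819) := by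
      rw [div_le_iff₀ hαp]
      have h1 : s ^ 2 * (α - 0.5819) ≤ α - 0.5819 := by nlinarith
      nlinarith
    linarith
  have e3 : (2.7186 + s ^ 2 * 1.5819) / (1 + s) ^ 2
      ≤ (2.7186 + s0 ^ 2 * 1.5819) / (1 + s0) ^ 2 := by
    rw [div_le_div_iff₀ (by positivity) (by positivity)]
    have h : 0 ≤ (s - s0) * (2 * 2.7186 + (s + s0) * (2.7186 - 1.5819) - 2 * 1.5819 * (s * s0)) := by
      apply mul_nonneg (by linarith)
      have : s * s0 ≤ 1 := by nlinarith
      nlinarith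
    nlinarith [h]
  rw [e1]
  refine (div_le_div_of_nonneg_right e2 (by positivity)).trans (e3.trans ?_)
  apply Real.le_sqrt_of_sq_le
  refine le_trans ?_ (aux_const p (ha.trans hp))
  rw [div_pow, div_le_iff₀ (by positivity)]
  calc _ ≤ 2.311 * a * (1 + s0) ^ 4 := hb
    _ ≤ 2.311 * p * (1 + s0) ^ 4 := by gcongr
    _ = _ := by ring

lemma aux_root (x r q : ℝ) (m k : ℕ) (hk : k ≠ 0) (hx : 0 ≤ x) (hr : 0 ≤ r)
    (hq : q = m / k) (h : r ^ k ≤ x ^ m) : r ≤ x ^ q := by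
  have hk' : (k : ℝ) ≠ 0 := by exact_mod_cast hk
  refine le_of_pow_le_pow_left₀ hk (by positivity) (h.trans (le_of_eq ?_))
  rw [← Real.rpow_mul_natCast hx, hq, div_mul_cancel₀ _ hk', Real.rpow_natCast]

lemma aux_piece (n m k : ℕ) (p α t q r s0 a : ℝ) (hα : 0.5819 ≤ α) (hα1 : α ≤ 1)
    (ht : t = α ^ p / Real.Gamma (p + 1)) (ht0 : 0 < t) (htα : t ≤ α)
    (h0 : (n : ℝ) + 1 ≤ p) (h1 : p ≤ n + 1 + q) (hq1 : q ≤ 1)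
    (hk : k ≠ 0) (hq : q = m / k) (hr0 : 0 ≤ r) (hr : r ^ k ≤ (0.5819 / ((n : ℝ) + 2)) ^ m)
    (hs0 : 0 ≤ s0) (hs : s0 ≤ 0.5819 ^ n / (n + 1).factorial * r) (ha : 0 ≤ a) (hp : a ≤ p)
    (hb : (2.7186 + s0 ^ 2 * 1.5819) ^ 2 ≤ 2.311 * a * (1 + s0) ^ 4) :
    t ^ (t / (t + α)) / (t + α) * (α + 1) ≤ Real.sqrt (2 * Real.pi * p / Real.exp 1) := by
  refine aux_main α t p a s0 hα hα1 ht0 htα hs0 ?_ ha hp hb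
  have := aux_s n p α q r hα hα1 h0 h1 hq1 hr0 (aux_root _ r q m k hk (by positivity) hr0 hq hr)
  rw [ht]
  refine le_trans ?_ this
  have : 0 ≤ α := by linarith
  gcongr

/-- Suppose `p ≥ 1`, `α ∈ [1/(e-1), 1]`, and `t = α^p/Γ(p+1)`, or `t = α^p p^p`
together with `α^p p^p ≥ 1`. Then
`W(t, α) = (t^{t/(t+α)}/(t+α)) (α+1) ≤ √(2πp/e)`. -/
theorem W_le_sqrt (p α t : ℝ) (hp : 1 ≤ p)
    (hα : α ∈ Set.Icc (1 / (Real.exp 1 - 1)) 1)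
    (ht : t = α ^ p / Real.Gamma (p + 1) ∨
      (t = α ^ p * p ^ p ∧ 1 ≤ α ^ p * p ^ p)) :
    t ^ (t / (t + α)) / (t + α) * (α + 1) ≤ Real.sqrt (2 * Real.pi * p / Real.exp 1) := by
  obtain ⟨hα0, hα1⟩ := hα
  have hα := aux_alpha α hα0
  have hαp : 0 < α := by linarith
  rcases ht with ht | ⟨ht, ht1⟩
  · have hG : 1 ≤ Real.Gamma (p + 1) := by
      have h := Real.Gamma_strictMonoOn_Ici.monotoneOn (a := 2) (b := p + 1) (by simp)
        (by rw [Set.mem_Ici]; linarith) (by linarith)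
      rwa [Real.Gamma_two] at h
    have ht0 : 0 < t := by rw [ht]; positivity
    have htα : t ≤ α := by
      rw [ht, div_le_iff₀ (by linarith)]
      have : α ^ p ≤ α ^ (1 : ℝ) := Real.rpow_le_rpow_of_exponent_ge hαp hα1 hp
      rw [Real.rpow_one] at this
      nlinarith
    rcases le_total p 1.5 with h1 | h1
    · refine aux_piece 0 1 2 p α t 0.5 0.539 0.539 1 hα hα1 ht ht0 htα ?_ ?_ ?_ ?_ ?_ ?_ ?_ ?_ ?_ ?_ hp ?_ <;>
        norm_num [Nat.factorial] <;> linarith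
    rcases le_total p 2 with h2 | h2
    · refine aux_piece 0 1 1 p α t 1 0.29 0.29 1.5 hα hα1 ht ht0 htα ?_ ?_ ?_ ?_ ?_ ?_ ?_ ?_ ?_ ?_ h1 ?_ <;>
        norm_num [Nat.factorial] <;> linarith
    rcases le_total p 2.4 with h3 | h3
    · refine aux_piece 1 2 5 p α t 0.4 0.518 0.15 2 hα hα1 ht ht0 htα ?_ ?_ ?_ ?_ ?_ ?_ ?_ ?_ ?_ ?_ h2 ?_ <;>
        norm_num [Nat.factorial] <;> linarith
    rcases le_total p 2.7 with h4 | h4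
    · refine aux_piece 1 7 10 p α t 0.7 0.317 0.092 2.4 hα hα1 ht ht0 htα ?_ ?_ ?_ ?_ ?_ ?_ ?_ ?_ ?_ ?_ h3 ?_ <;>
        norm_num [Nat.factorial] <;> linarith
    rcases le_total p 3 with h5 | h5
    · refine aux_piece 1 1 1 p α t 1 0.1939 0.056 2.7 hα hα1 ht ht0 htα ?_ ?_ ?_ ?_ ?_ ?_ ?_ ?_ ?_ ?_ h4 ?_ <;>
        norm_num [Nat.factorial] <;> linarith
    rcases le_total p 3.5 with h6 | h6
    · refine aux_piece 2 1 2 p α t 0.5 0.381 0.021 3 hα hα1 ht ht0 htα ?_ ?_ ?_ ?_ ?_ ?_ ?_ ?_ ?_ ?_ h5 ?_ <;>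
        norm_num [Nat.factorial] <;> linarith
    · refine aux_main α t p 3.5 0 hα hα1 ht0 htα le_rfl ?_ ?_ h6 ?_ <;> norm_num
      exact ht0.le
  · rw [← ht] at ht1
    have ht0 : 0 < t := by linarith
    rcases le_total p 1.75 with h | h
    · have htp : t ≤ 3.07 := by
        have a1 : α ^ p ≤ 1 := Real.rpow_le_one hαp.le hα1 (by linarith)
        have a2 : p ^ p ≤ 1.75 ^ (2 : ℝ) :=
          (Real.rpow_le_rpow (by linarith) h (by linarith)).trans
            (Real.rpow_le_rpow_of_exponent_le (by norm_num) (by linarith))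
        have a3 : (1.75 : ℝ) ^ (2 : ℝ) ≤ 3.07 := by
          rw [Real.rpow_two]; norm_num
        have a4 : 0 ≤ p ^ p := by positivity
        rw [ht]; nlinarith
      refine (aux_amgm α t hαp ht0).trans ?_
      refine le_trans (b := 1.5) ?_ ?_
      · rw [div_le_iff₀ (by positivity)]
        nlinarith [mul_nonneg hαp.le (mul_nonneg (sub_nonneg.2 ht1) (sub_nonneg.2 htp)), mul_nonneg (sub_nonneg.2 ht1) (sub_nonneg.2 htp), mul_nonneg (sub_nonneg.2 ht1) (sub_nonneg.2 hα1)]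
      · apply Real.le_sqrt_of_sq_le
        refine le_trans ?_ (aux_const p (by linarith))
        norm_num; linarith
    · refine le_trans (b := 2) ?_ ?_
      · have : t ^ (t / (t + α)) ≤ t + α := by
          calc t ^ (t / (t + α)) ≤ t ^ (1 : ℝ) :=
                Real.rpow_le_rpow_of_exponent_le ht1 (by rw [div_le_one (by linarith)]; linarith)
            _ ≤ _ := by rw [Real.rpow_one]; linarith
        have h2 : t ^ (t / (t + α)) / (t + α) ≤ 1 := by
          rw [div_le_one (by linarith)]; exact this
        nlinarith
      · apply Real.le_sqrt_of_sq_le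
        refine le_trans ?_ (aux_const p (by linarith))
        norm_num; linarith
end

section
/- For every p ≥ 2, the point α = 1/(e−1) maximizes the function α ↦ (1 + (α^{p−1}/Γ(p+1))²)/(1 + α^{p−1}/Γ(p+1)) over the interval [1/(e−1), 1]; that is, for all α ∈ [1/(e−1), 1], (1 + (α^{p−1}/Γ(p+1))²)/(1 + α^{p−1}/Γ(p+1)) ≤ (1 + ((e−1)^{1−p}/Γ(p+1))²)/(1 + (e−1)^{1−p}/Γ(p+1)). -/
/-- For every `p ≥ 2`, the point `α = 1/(e-1)` maximizes
`α ↦ (1 + (α^{p-1}/Γ(p+1))²)/(1 + α^{p-1}/Γ(p+1))` over `[1/(e-1), 1]`. -/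
theorem argmax_left_endpoint (p α : ℝ) (hp : 2 ≤ p)
    (hα : α ∈ Set.Icc (1 / (Real.exp 1 - 1)) 1) :
    (1 + (α ^ (p - 1) / Real.Gamma (p + 1)) ^ (2 : ℕ)) /
        (1 + α ^ (p - 1) / Real.Gamma (p + 1)) ≤
      (1 + ((Real.exp 1 - 1) ^ (1 - p) / Real.Gamma (p + 1)) ^ (2 : ℕ)) /
        (1 + (Real.exp 1 - 1) ^ (1 - p) / Real.Gamma (p + 1)) := by
  obtain ⟨h1, h2⟩ := hα
  have he : (2.7 : ℝ) < Real.exp 1 := by have := Real.exp_one_gt_d9; linarith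
  have he0 : 0 < Real.exp 1 - 1 := by linarith
  have hα0 : 0 < α := lt_of_lt_of_le (by positivity) h1
  have hG : 2 ≤ Real.Gamma (p + 1) := by
    have h3 : Real.Gamma 3 = 2 := by
      rw [show (3 : ℝ) = ((2 : ℕ) : ℝ) + 1 by norm_num, Real.Gamma_nat_eq_factorial]
      norm_num [Nat.factorial]
    rw [← h3]
    exact Real.Gamma_strictMonoOn_Ici.monotoneOn (by simp; norm_num) (by simp; linarith) (by linarith)
  have hG0 : 0 < Real.Gamma (p + 1) := by linarith
  have hy1 : (Real.exp 1 - 1) ^ (1 - p) ≤ 1 / 1.7 := by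
    calc (Real.exp 1 - 1) ^ (1 - p) ≤ (Real.exp 1 - 1) ^ (-1 : ℝ) :=
          Real.rpow_le_rpow_of_exponent_le (by linarith) (by linarith)
      _ = 1 / (Real.exp 1 - 1) := by rw [Real.rpow_neg_one, one_div]
      _ ≤ 1 / 1.7 := one_div_le_one_div_of_le (by norm_num) (by linarith)
  have hyx : (Real.exp 1 - 1) ^ (1 - p) ≤ α ^ (p - 1) := by
    have : (Real.exp 1 - 1) ^ (1 - p) = (1 / (Real.exp 1 - 1)) ^ (p - 1) := by
      rw [one_div, Real.inv_rpow he0.le, ← Real.rpow_neg he0.le, neg_sub]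
    rw [this]
    exact Real.rpow_le_rpow (by positivity) h1 (by linarith)
  have hx1 : α ^ (p - 1) ≤ 1 := Real.rpow_le_one hα0.le h2 (by linarith)
  have hy0 : 0 < (Real.exp 1 - 1) ^ (1 - p) := Real.rpow_pos_of_pos he0 _
  have hxG : α ^ (p - 1) / Real.Gamma (p + 1) ≤ 1 / 2 :=
    div_le_div₀ (by norm_num) hx1 (by norm_num) hG
  have hyG : (Real.exp 1 - 1) ^ (1 - p) / Real.Gamma (p + 1) ≤ 1 / 1.7 / 2 :=
    div_le_div₀ (by norm_num) hy1 (by norm_num) hG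
  have hyxG : (Real.exp 1 - 1) ^ (1 - p) / Real.Gamma (p + 1) ≤
      α ^ (p - 1) / Real.Gamma (p + 1) := by gcongr
  have hyG0 : 0 < (Real.exp 1 - 1) ^ (1 - p) / Real.Gamma (p + 1) := by positivity
  generalize (Real.exp 1 - 1) ^ (1 - p) / Real.Gamma (p + 1) = y at *
  generalize α ^ (p - 1) / Real.Gamma (p + 1) = x at *
  have hs : x + y + x * y ≤ 1 := by
    norm_num at hyG
    nlinarith
  rw [div_le_div_iff₀ (by linarith) (by linarith)]
  nlinarith [mul_nonneg (sub_nonneg.2 hyxG) (sub_nonneg.2 hs)]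
end
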